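/- arXiv:1011.4725 — 2 statements merged into one kernel-verified Lean document; each statement's English description precedes it below -/
import Mathlib

section
/- For the doubly symmetric binary source with crossover probability ρ ∈ [0,1/2] and Hamming distortions, let d* = 1/2 − (1/2)√(1−2ρ). Then for all d ∈ [0,d*], R_CR(d,d) = R(d,d) = h(ρ) − h(d). -/
open scoped BigOperators Classical

noncomputable section

namespace TWR

/-- Base-2 Shannon entropy of a finitely supported distribution (with the
convention `0 * log 0 = 0`, automatic since `Real.logb 2 0 = 0`). -/
def H2 {α : Type} [Fintype α] (p : α → ℝ) : ℝ :=
  -∑ a, p a * Real.logb 2 (p a)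

/-- `p` is a probability mass function. -/
def IsPmf {α : Type} [Fintype α] (p : α → ℝ) : Prop :=
  (∀ a, 0 ≤ p a) ∧ ∑ a, p a = 1

/-- `W` is a conditional pmf. -/
def IsCondPmf {α β : Type} [Fintype β] (W : α → β → ℝ) : Prop :=
  ∀ a, IsPmf (W a)

/-- Mutual information `I(A;B)` (base 2) of a joint pmf on `α × β`. -/
def MI {α β : Type} [Fintype α] [Fintype β] (p : α × β → ℝ) : ℝ :=
  H2 (fun a => ∑ b, p (a, b)) + H2 (fun b => ∑ a, p (a, b)) - H2 p

/-- Conditional entropy `H(A|B)` of a joint pmf on `α × β`. -/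
def condH {α β : Type} [Fintype α] [Fintype β] (p : α × β → ℝ) : ℝ :=
  H2 p - H2 (fun b => ∑ a, p (a, b))

/-- Conditional mutual information `I(A;C|B)` of a joint pmf on `α × β × γ`,
conditioning on the middle coordinate (`I(A;C|B) = H(A,B)+H(B,C)-H(A,B,C)-H(B)`). -/
def condMI {α β γ : Type} [Fintype α] [Fintype β] [Fintype γ] (p : α × β × γ → ℝ) : ℝ :=
  H2 (fun ab : α × β => ∑ c, p (ab.1, ab.2, c)) +
    H2 (fun bc : β × γ => ∑ a, p (a, bc.1, bc.2)) -
    H2 p - H2 (fun b : β => ∑ a, ∑ c, p (a, b, c))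

/-- Markov chain `A − B − C` for a joint pmf on `α × β × γ`. -/
def Markov {α β γ : Type} [Fintype α] [Fintype β] [Fintype γ] (p : α × β × γ → ℝ) : Prop :=
  ∀ a b c, p (a, b, c) * (∑ a', ∑ c', p (a', b, c')) =
    (∑ c', p (a, b, c')) * (∑ a', p (a', b, c))

variable {𝒳 𝒴 Xh Yh 𝒲 𝒰 𝒱 : Type}
variable [Fintype 𝒳] [Fintype 𝒴] [Fintype Xh] [Fintype Yh]
variable [Fintype 𝒲] [Fintype 𝒰] [Fintype 𝒱]

/-- The i.i.d. block source. -/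
def iid (q : 𝒳 × 𝒴 → ℝ) (n : ℕ) : (Fin n → 𝒳) × (Fin n → 𝒴) → ℝ :=
  fun xy => ∏ i, q (xy.1 i, xy.2 i)

/-- Average distortion at receiver 1 of the RD code `(f, g1, ·)`. -/
def Delta1 (q : 𝒳 × 𝒴 → ℝ) (δ1 : 𝒳 → Xh → ℝ) {n m : ℕ}
    (f : (Fin n → 𝒳) × (Fin n → 𝒴) → Fin m)
    (g1 : Fin m × (Fin n → 𝒴) → Fin n → Xh) : ℝ :=
  ∑ xy : (Fin n → 𝒳) × (Fin n → 𝒴),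
    iid q n xy * ((n : ℝ)⁻¹ * ∑ i, δ1 (xy.1 i) (g1 (f xy, xy.2) i))

/-- Average distortion at receiver 2 of the RD code `(f, ·, g2)`. -/
def Delta2 (q : 𝒳 × 𝒴 → ℝ) (δ2 : 𝒴 → Yh → ℝ) {n m : ℕ}
    (f : (Fin n → 𝒳) × (Fin n → 𝒴) → Fin m)
    (g2 : Fin m × (Fin n → 𝒳) → Fin n → Yh) : ℝ :=
  ∑ xy : (Fin n → 𝒳) × (Fin n → 𝒴),
    iid q n xy * ((n : ℝ)⁻¹ * ∑ i, δ2 (xy.2 i) (g2 (f xy, xy.1) i))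

/-- `r` is a `(d1,d2)`-achievable rate (source coding). -/
def RDAchievable (q : 𝒳 × 𝒴 → ℝ) (δ1 : 𝒳 → Xh → ℝ) (δ2 : 𝒴 → Yh → ℝ)
    (d1 d2 r : ℝ) : Prop :=
  ∀ ε > (0 : ℝ), ∃ (n m : ℕ) (f : (Fin n → 𝒳) × (Fin n → 𝒴) → Fin m)
    (g1 : Fin m × (Fin n → 𝒴) → Fin n → Xh)
    (g2 : Fin m × (Fin n → 𝒳) → Fin n → Yh),
    0 < n ∧ Real.logb 2 m / n ≤ r + ε ∧
    Delta1 q δ1 f g1 ≤ d1 + ε ∧ Delta2 q δ2 f g2 ≤ d2 + ε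

/-- The rate-distortion function `R(d1,d2)`. -/
def RD (q : 𝒳 × 𝒴 → ℝ) (δ1 : 𝒳 → Xh → ℝ) (δ2 : 𝒴 → Yh → ℝ) (d1 d2 : ℝ) : ℝ :=
  sInf {r : ℝ | 0 ≤ r ∧ RDAchievable q δ1 δ2 d1 d2 r}

/-- `r` is `(d1,d2)`-achievable with common reconstructions. -/
def CRAchievable (q : 𝒳 × 𝒴 → ℝ) (δ1 : 𝒳 → Xh → ℝ) (δ2 : 𝒴 → Yh → ℝ)
    (d1 d2 r : ℝ) : Prop :=
  ∀ ε > (0 : ℝ), ∃ (n m : ℕ) (f : (Fin n → 𝒳) × (Fin n → 𝒴) → Fin m)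
    (g1 : Fin m × (Fin n → 𝒴) → Fin n → Xh)
    (g2 : Fin m × (Fin n → 𝒳) → Fin n → Yh)
    (φ1 : Fin m × (Fin n → 𝒴) → Fin n → Yh)
    (φ2 : Fin m × (Fin n → 𝒳) → Fin n → Xh),
    0 < n ∧ Real.logb 2 m / n ≤ r + ε ∧
    Delta1 q δ1 f g1 ≤ d1 + ε ∧ Delta2 q δ2 f g2 ≤ d2 + ε ∧
    (∑ xy : (Fin n → 𝒳) × (Fin n → 𝒴),
      if φ2 (f xy, xy.1) = g1 (f xy, xy.2) then 0 else iid q n xy) ≤ ε ∧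
    (∑ xy : (Fin n → 𝒳) × (Fin n → 𝒴),
      if φ1 (f xy, xy.2) = g2 (f xy, xy.1) then 0 else iid q n xy) ≤ ε

/-- The common-reconstruction rate-distortion function `R_CR(d1,d2)`. -/
def CRRD (q : 𝒳 × 𝒴 → ℝ) (δ1 : 𝒳 → Xh → ℝ) (δ2 : 𝒴 → Yh → ℝ) (d1 d2 : ℝ) : ℝ :=
  sInf {r : ℝ | 0 ≤ r ∧ CRAchievable q δ1 δ2 d1 d2 r}

/-- The conditional rate-distortion function `R_{X|Y}(d1)`. -/
def condRD (q : 𝒳 × 𝒴 → ℝ) (δ1 : 𝒳 → Xh → ℝ) (d1 : ℝ) : ℝ :=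
  sInf {r : ℝ | ∃ W : 𝒳 × 𝒴 → Xh → ℝ, IsCondPmf W ∧
    (∑ x, ∑ y, ∑ xh, q (x, y) * W (x, y) xh * δ1 x xh) ≤ d1 ∧
    r = condMI (fun t : 𝒳 × 𝒴 × Xh => q (t.1, t.2.1) * W (t.1, t.2.1) t.2.2)}

/-- Swap the two components of a joint source. -/
def swap (q : 𝒳 × 𝒴 → ℝ) : 𝒴 × 𝒳 → ℝ := fun t => q (t.2, t.1)

/-- The marginal rate-distortion function `R_X(d)`. -/
def margRD (qX : 𝒳 → ℝ) (δ1 : 𝒳 → Xh → ℝ) (d1 : ℝ) : ℝ :=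
  sInf {r : ℝ | ∃ W : 𝒳 → Xh → ℝ, IsCondPmf W ∧
    (∑ x, ∑ xh, qX x * W x xh * δ1 x xh) ≤ d1 ∧
    r = MI (fun t : 𝒳 × Xh => qX t.1 * W t.1 t.2)}

def margX (q : 𝒳 × 𝒴 → ℝ) : 𝒳 → ℝ := fun x => ∑ y, q (x, y)
def margY (q : 𝒳 × 𝒴 → ℝ) : 𝒴 → ℝ := fun y => ∑ x, q (x, y)

/-- The joint rate-distortion function `R_{XY}(d1,d2)`. -/
def jointRD (q : 𝒳 × 𝒴 → ℝ) (δ1 : 𝒳 → Xh → ℝ) (δ2 : 𝒴 → Yh → ℝ) (d1 d2 : ℝ) : ℝ :=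
  sInf {r : ℝ | ∃ W : 𝒳 × 𝒴 → Xh × Yh → ℝ, IsCondPmf W ∧
    (∑ xy : 𝒳 × 𝒴, ∑ z : Xh × Yh, q xy * W xy z * δ1 xy.1 z.1) ≤ d1 ∧
    (∑ xy : 𝒳 × 𝒴, ∑ z : Xh × Yh, q xy * W xy z * δ2 xy.2 z.2) ≤ d2 ∧
    r = MI (fun t : (𝒳 × 𝒴) × (Xh × Yh) => q t.1 * W t.1 t.2)}

/-- The Wyner–Ziv rate-distortion function `R^{WZ}_{X|Y}(d1)`
(with auxiliary alphabet of cardinality `|𝒳| + 1`). -/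
def wzRD (q : 𝒳 × 𝒴 → ℝ) (δ1 : 𝒳 → Xh → ℝ) (d1 : ℝ) : ℝ :=
  sInf {r : ℝ | ∃ p : Fin (Fintype.card 𝒳 + 1) × 𝒳 × 𝒴 → ℝ, IsPmf p ∧
    (∀ x y, (∑ a, p (a, x, y)) = q (x, y)) ∧ Markov p ∧
    (∃ π1 : Fin (Fintype.card 𝒳 + 1) × 𝒴 → Xh,
      (∑ a, ∑ x, ∑ y, p (a, x, y) * δ1 x (π1 (a, y))) ≤ d1) ∧
    r = condMI (fun t : 𝒳 × 𝒴 × Fin (Fintype.card 𝒳 + 1) => p (t.2.2, t.1, t.2.1))}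

/-- The set over which the single-letter CR formula
`max{I(X;X̂,Ŷ|Y), I(Y;X̂,Ŷ|X)}` is minimised. -/
def crFormulaSet (q : 𝒳 × 𝒴 → ℝ) (δ1 : 𝒳 → Xh → ℝ) (δ2 : 𝒴 → Yh → ℝ)
    (d1 d2 : ℝ) : Set ℝ :=
  {r : ℝ | ∃ W : 𝒳 × 𝒴 → Xh × Yh → ℝ, IsCondPmf W ∧
    (∑ x, ∑ y, ∑ z : Xh × Yh, q (x, y) * W (x, y) z * δ1 x z.1) ≤ d1 ∧
    (∑ x, ∑ y, ∑ z : Xh × Yh, q (x, y) * W (x, y) z * δ2 y z.2) ≤ d2 ∧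
    r = max
      (condMI (fun t : 𝒳 × 𝒴 × (Xh × Yh) => q (t.1, t.2.1) * W (t.1, t.2.1) t.2.2))
      (condMI (fun t : 𝒴 × 𝒳 × (Xh × Yh) => q (t.2.1, t.1) * W (t.2.1, t.1) t.2.2))}

/-- Joint law of source blocks and channel outputs for a JSC encoder. -/
def jscP (q : 𝒳 × 𝒴 → ℝ) (qUV : 𝒲 → 𝒰 × 𝒱 → ℝ) {n m : ℕ}
    (f : (Fin n → 𝒳) × (Fin n → 𝒴) → Fin m → 𝒲)
    (x : Fin n → 𝒳) (y : Fin n → 𝒴) (u : Fin m → 𝒰) (v : Fin m → 𝒱) : ℝ :=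
  (∏ i, q (x i, y i)) * ∏ j, qUV (f (x, y) j) (u j, v j)

/-- `(d1,d2)` is achievable by joint source-channel coding with source rate `κs`
and channel rate `κc` (bandwidth expansion `κc/κs`). -/
def JSCAchievable (q : 𝒳 × 𝒴 → ℝ) (qUV : 𝒲 → 𝒰 × 𝒱 → ℝ)
    (δ1 : 𝒳 → Xh → ℝ) (δ2 : 𝒴 → Yh → ℝ) (κs κc d1 d2 : ℝ) : Prop :=
  ∀ ε > (0 : ℝ), ∃ (t n m : ℕ) (f : (Fin n → 𝒳) × (Fin n → 𝒴) → Fin m → 𝒲)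
    (g1 : (Fin m → 𝒰) × (Fin n → 𝒴) → Fin n → Xh)
    (g2 : (Fin m → 𝒱) × (Fin n → 𝒳) → Fin n → Yh),
    0 < t ∧ (n : ℝ) = κs * t ∧ (m : ℝ) = κc * t ∧
    (∑ x : Fin n → 𝒳, ∑ y : Fin n → 𝒴, ∑ u : Fin m → 𝒰, ∑ v : Fin m → 𝒱,
      jscP q qUV f x y u v * ((n : ℝ)⁻¹ * ∑ i, δ1 (x i) (g1 (u, y) i))) ≤ d1 + ε ∧
    (∑ x : Fin n → 𝒳, ∑ y : Fin n → 𝒴, ∑ u : Fin m → 𝒰, ∑ v : Fin m → 𝒱,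
      jscP q qUV f x y u v * ((n : ℝ)⁻¹ * ∑ i, δ2 (y i) (g2 (v, x) i))) ≤ d2 + ε

/-- `(d1,d2)` is achievable by joint source-channel coding with common
reconstructions, source rate `κs` and channel rate `κc`. -/
def CRJSCAchievable (q : 𝒳 × 𝒴 → ℝ) (qUV : 𝒲 → 𝒰 × 𝒱 → ℝ)
    (δ1 : 𝒳 → Xh → ℝ) (δ2 : 𝒴 → Yh → ℝ) (κs κc d1 d2 : ℝ) : Prop :=
  ∀ ε > (0 : ℝ), ∃ (t n m : ℕ) (f : (Fin n → 𝒳) × (Fin n → 𝒴) → Fin m → 𝒲)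
    (g1 : (Fin m → 𝒰) × (Fin n → 𝒴) → Fin n → Xh)
    (g2 : (Fin m → 𝒱) × (Fin n → 𝒳) → Fin n → Yh)
    (φ1 : (Fin m → 𝒰) × (Fin n → 𝒴) → Fin n → Yh)
    (φ2 : (Fin m → 𝒱) × (Fin n → 𝒳) → Fin n → Xh),
    0 < t ∧ (n : ℝ) = κs * t ∧ (m : ℝ) = κc * t ∧
    (∑ x : Fin n → 𝒳, ∑ y : Fin n → 𝒴, ∑ u : Fin m → 𝒰, ∑ v : Fin m → 𝒱,
      jscP q qUV f x y u v * ((n : ℝ)⁻¹ * ∑ i, δ1 (x i) (g1 (u, y) i))) ≤ d1 + ε ∧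
    (∑ x : Fin n → 𝒳, ∑ y : Fin n → 𝒴, ∑ u : Fin m → 𝒰, ∑ v : Fin m → 𝒱,
      jscP q qUV f x y u v * ((n : ℝ)⁻¹ * ∑ i, δ2 (y i) (g2 (v, x) i))) ≤ d2 + ε ∧
    (∑ x : Fin n → 𝒳, ∑ y : Fin n → 𝒴, ∑ u : Fin m → 𝒰, ∑ v : Fin m → 𝒱,
      if φ2 (v, x) = g1 (u, y) then 0 else jscP q qUV f x y u v) ≤ ε ∧
    (∑ x : Fin n → 𝒳, ∑ y : Fin n → 𝒴, ∑ u : Fin m → 𝒰, ∑ v : Fin m → 𝒱,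
      if φ1 (u, y) = g2 (v, x) then 0 else jscP q qUV f x y u v) ≤ ε

/-- `I(W;U)` under the joint law `pW · qUV` (U-marginal of the broadcast channel). -/
def chMIU (qUV : 𝒲 → 𝒰 × 𝒱 → ℝ) (pW : 𝒲 → ℝ) : ℝ :=
  MI (fun t : 𝒲 × 𝒰 => pW t.1 * ∑ v, qUV t.1 (t.2, v))

/-- `I(W;V)` under the joint law `pW · qUV` (V-marginal of the broadcast channel). -/
def chMIV (qUV : 𝒲 → 𝒰 × 𝒱 → ℝ) (pW : 𝒲 → ℝ) : ℝ :=
  MI (fun t : 𝒲 × 𝒱 => pW t.1 * ∑ u, qUV t.1 (u, t.2))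

/-- The doubly symmetric binary source with crossover probability `ρ`. -/
def dsbs (ρ : ℝ) : Bool × Bool → ℝ :=
  fun t => if t.1 = t.2 then (1 - ρ) / 2 else ρ / 2

/-- The Hamming distortion measure. -/
def dHam {α : Type} : α → α → ℝ := fun a b => if a = b then 0 else 1

/-- The binary entropy function (base 2). -/
def binEnt (x : ℝ) : ℝ := -(x * Real.logb 2 x) - (1 - x) * Real.logb 2 (1 - x)

/-- A difference distortion measure built from a per-letter function of the
(modular) difference. -/
def diffD {l : ℕ} (δ : Fin l → ℝ) : Fin l → Fin l → ℝ := fun a b => δ (a - b)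

/-- Capacity of the modulo-additive channel with noise `pN` and input
distortion constraint `d`. -/
def Cadd {l : ℕ} (δ : Fin l → ℝ) (d : ℝ) (pN : Fin l → ℝ) : ℝ :=
  sSup {r : ℝ | ∃ pW : Fin l → ℝ, IsPmf pW ∧ (∑ w, pW w * δ w) ≤ d ∧
    r = MI (fun t : Fin l × Fin l => pW t.1 * pN (t.2 - t.1))}

/-- The minimax (worst-noise) capacity under distortion constraint `d`. -/
def Cworst {l : ℕ} (δ : Fin l → ℝ) (d : ℝ) : ℝ :=
  sInf {r : ℝ | ∃ pN : Fin l → ℝ, IsPmf pN ∧ (∑ x, pN x * δ x) ≤ d ∧ r = Cadd δ d pN}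

/-- Wyner's common information `K(X;Y)` (auxiliary alphabet of size 4). -/
def wynerK (q : 𝒳 × 𝒴 → ℝ) : ℝ :=
  sInf {r : ℝ | ∃ W : 𝒳 × 𝒴 → Fin 4 → ℝ, IsCondPmf W ∧
    Markov (fun t : 𝒳 × Fin 4 × 𝒴 => q (t.1, t.2.2) * W (t.1, t.2.2) t.2.1) ∧
    r = MI (fun t : (𝒳 × 𝒴) × Fin 4 => q t.1 * W t.1 t.2)}

/-- The one-description (Kimura–Uyematsu) upper bound `R_U*(d1,d2)`. -/
def oneDescUB (q : 𝒳 × 𝒴 → ℝ) (δ1 : 𝒳 → Xh → ℝ) (δ2 : 𝒴 → Yh → ℝ) (d1 d2 : ℝ) : ℝ :=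
  sInf {r : ℝ | ∃ W : 𝒳 × 𝒴 → Fin (Fintype.card 𝒳 * Fintype.card 𝒴 + 2) → ℝ,
    IsCondPmf W ∧
    (∃ π1 : Fin (Fintype.card 𝒳 * Fintype.card 𝒴 + 2) × 𝒴 → Xh,
      (∑ x, ∑ y, ∑ c, q (x, y) * W (x, y) c * δ1 x (π1 (c, y))) ≤ d1) ∧
    (∃ π2 : Fin (Fintype.card 𝒳 * Fintype.card 𝒴 + 2) × 𝒳 → Yh,
      (∑ x, ∑ y, ∑ c, q (x, y) * W (x, y) c * δ2 y (π2 (c, x))) ≤ d2) ∧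
    r = max
      (condMI (fun t : 𝒳 × 𝒴 × Fin (Fintype.card 𝒳 * Fintype.card 𝒴 + 2) =>
        q (t.1, t.2.1) * W (t.1, t.2.1) t.2.2))
      (condMI (fun t : 𝒴 × 𝒳 × Fin (Fintype.card 𝒳 * Fintype.card 𝒴 + 2) =>
        q (t.2.1, t.1) * W (t.2.1, t.1) t.2.2))}

end TWR
namespace TWRAux
open TWR

/-- Binary symmetric channel transition probability. -/
def bsc (θ : ℝ) (a b : Bool) : ℝ := if a = b then 1 - θ else θ

/-- Block binary symmetric channel. -/
def BB (θ : ℝ) {n : ℕ} (x y : Fin n → Bool) : ℝ := ∏ i, bsc θ (x i) (y i)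

/-- Hamming distance, real valued. -/
def dst {n : ℕ} (x y : Fin n → Bool) : ℝ := ∑ i, dHam (x i) (y i)

lemma bsc_comm (θ : ℝ) (a b : Bool) : bsc θ a b = bsc θ b a := by
  simp [bsc, eq_comm]

lemma BB_comm (θ : ℝ) {n : ℕ} (x y : Fin n → Bool) : BB θ x y = BB θ y x := by
  simp only [BB, bsc_comm θ (x _)]

lemma dst_comm {n : ℕ} (x y : Fin n → Bool) : dst x y = dst y x := by
  unfold dst
  apply Finset.sum_congr rfl
  intro i _
  unfold dHam
  cases x i <;> cases y i <;> simp

lemma bsc_nonneg {θ : ℝ} (h0 : 0 ≤ θ) (h1 : θ ≤ 1) (a b : Bool) : 0 ≤ bsc θ a b := by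
  unfold bsc; split_ifs <;> linarith

lemma BB_nonneg {θ : ℝ} (h0 : 0 ≤ θ) (h1 : θ ≤ 1) {n : ℕ} (x y : Fin n → Bool) :
    0 ≤ BB θ x y := Finset.prod_nonneg fun _ _ => bsc_nonneg h0 h1 _ _

lemma sum_pi_prod {n : ℕ} {α : Type} [Fintype α] (p : Fin n → α → ℝ) :
    ∑ z : Fin n → α, ∏ i, p i (z i) = ∏ i, ∑ a, p i a := by
  rw [Finset.prod_univ_sum]; simp

lemma sum_BB_left (θ : ℝ) {n : ℕ} (y : Fin n → Bool) : ∑ x, BB θ x y = 1 := by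
  unfold BB
  rw [sum_pi_prod (fun i a => bsc θ a (y i))]
  apply Finset.prod_eq_one
  intro i _
  cases y i <;> simp [bsc]

lemma sum_BB_right (θ : ℝ) {n : ℕ} (x : Fin n → Bool) : ∑ y, BB θ x y = 1 := by
  simp only [BB_comm θ x]; exact sum_BB_left θ x

lemma dst_nonneg {n : ℕ} (x y : Fin n → Bool) : 0 ≤ dst x y := by
  apply Finset.sum_nonneg; intro i _; unfold dHam; split_ifs <;> norm_num

lemma dst_le {n : ℕ} (x y : Fin n → Bool) : dst x y ≤ n := by
  unfold dst
  calc ∑ i, dHam (x i) (y i) ≤ ∑ _i : Fin n, (1 : ℝ) := by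
        apply Finset.sum_le_sum; intro i _; unfold dHam; split_ifs <;> norm_num
    _ = n := by simp

/-- log-odds -/
def LL (θ : ℝ) : ℝ := Real.log (1 - θ) - Real.log θ

lemma LL_nonneg {θ : ℝ} (h0 : 0 < θ) (h1 : θ ≤ 1 / 2) : 0 ≤ LL θ := by
  unfold LL
  have := Real.log_le_log h0 (by linarith : θ ≤ 1 - θ)
  linarith

lemma BB_eq_exp {θ : ℝ} (h0 : 0 < θ) (h1 : θ < 1) {n : ℕ} (x y : Fin n → Bool) :
    BB θ x y = Real.exp (-(n * Real.binEntropy θ) - (dst x y - n * θ) * LL θ) := by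
  have h : -(n * Real.binEntropy θ) - (dst x y - n * θ) * LL θ
      = ∑ i, (dHam (x i) (y i) * Real.log θ + (1 - dHam (x i) (y i)) * Real.log (1 - θ)) := by
    rw [Finset.sum_add_distrib, ← Finset.sum_mul, ← Finset.sum_mul, Finset.sum_sub_distrib]
    rw [show ∑ i, dHam (x i) (y i) = dst x y from rfl]
    simp only [Finset.sum_const, Finset.card_univ, Fintype.card_fin, nsmul_eq_mul, mul_one]
    rw [Real.binEntropy]
    simp only [Real.log_inv, LL]
    ring
  rw [h, Real.exp_sum, BB]
  apply Finset.prod_congr rfl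
  intro i _
  unfold bsc dHam
  split_ifs
  · simp [Real.exp_log (by linarith : 0 < 1 - θ)]
  · simp [Real.exp_log h0]

lemma BB_conv {d ρ0 ρ : ℝ} (h : (1 - 2 * ρ0) * (1 - 2 * d) ^ 2 = 1 - 2 * ρ) {n : ℕ}
    (x y : Fin n → Bool) :
    ∑ u : Fin n → Bool, ∑ v : Fin n → Bool, BB d x u * BB ρ0 u v * BB d y v = BB ρ x y := by
  unfold BB
  simp only [← Finset.prod_mul_distrib]
  have : ∀ u : Fin n → Bool, ∑ v : Fin n → Bool,
      ∏ i, bsc d (x i) (u i) * bsc ρ0 (u i) (v i) * bsc d (y i) (v i)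
      = ∏ i, ∑ b, bsc d (x i) (u i) * bsc ρ0 (u i) b * bsc d (y i) b := fun u =>
    sum_pi_prod (fun i b => bsc d (x i) (u i) * bsc ρ0 (u i) b * bsc d (y i) b)
  simp only [this]
  rw [sum_pi_prod (fun i a => ∑ b, bsc d (x i) a * bsc ρ0 a b * bsc d (y i) b)]
  apply Finset.prod_congr rfl
  intro i _
  cases x i <;> cases y i <;> simp [bsc] <;> linarith

/-- moments of a sum of independent centred variables -/
lemma moments {α : Type} [Fintype α] : ∀ {n : ℕ} (p f : Fin n → α → ℝ)
    (_ : ∀ i, ∑ a, p i a = 1) (_ : ∀ i, ∑ a, p i a * f i a = 0),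
    (∑ z : Fin n → α, (∏ i, p i (z i)) * (∑ i, f i (z i)) = 0) ∧
    (∑ z : Fin n → α, (∏ i, p i (z i)) * (∑ i, f i (z i)) ^ 2 = ∑ i, ∑ a, p i a * f i a ^ 2) := by
  intro n
  induction n with
  | zero => intro p f _ _; simp
  | succ n ih =>
    intro p f hp hf
    obtain ⟨h1, h2⟩ := ih (fun i => p i.succ) (fun i => f i.succ) (fun i => hp _) (fun i => hf _)
    have h0 : ∑ z : Fin n → α, ∏ i, p i.succ (z i) = 1 := by
      rw [sum_pi_prod (fun i => p i.succ)]
      exact Finset.prod_eq_one fun i _ => hp _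
    have key : ∀ F : (Fin (n + 1) → α) → ℝ,
        ∑ z, F z = ∑ a : α, ∑ z : Fin n → α, F (Fin.cons a z) := by
      intro F
      rw [← (Fin.consEquiv (fun _ : Fin (n + 1) => α)).sum_comp, Fintype.sum_prod_type]
      rfl
    constructor
    · rw [key]
      simp only [Fin.prod_univ_succ, Fin.sum_univ_succ, Fin.cons_zero, Fin.cons_succ]
      calc _ = ∑ a, (p 0 a * f 0 a * ∑ z : Fin n → α, ∏ i, p i.succ (z i)
            + p 0 a * ∑ z : Fin n → α, (∏ i, p i.succ (z i)) * ∑ i, f i.succ (z i)) := by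
            apply Finset.sum_congr rfl; intro a _
            rw [Finset.mul_sum, Finset.mul_sum, ← Finset.sum_add_distrib]
            apply Finset.sum_congr rfl; intro z _; ring
        _ = 0 := by simp [h0, h1, hf]
    · rw [key]
      simp only [Fin.prod_univ_succ, Fin.sum_univ_succ, Fin.cons_zero, Fin.cons_succ]
      calc _ = ∑ a, (p 0 a * f 0 a ^ 2 * ∑ z : Fin n → α, ∏ i, p i.succ (z i)
            + 2 * p 0 a * f 0 a * ∑ z : Fin n → α, (∏ i, p i.succ (z i)) * ∑ i, f i.succ (z i)
            + p 0 a * ∑ z : Fin n → α, (∏ i, p i.succ (z i)) * (∑ i, f i.succ (z i)) ^ 2) := by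
            apply Finset.sum_congr rfl; intro a _
            rw [Finset.mul_sum, Finset.mul_sum, Finset.mul_sum, ← Finset.sum_add_distrib,
              ← Finset.sum_add_distrib]
            apply Finset.sum_congr rfl; intro z _; ring
        _ = _ := by
            rw [h0, h1, h2]
            simp [Finset.sum_add_distrib, ← Finset.sum_mul, hp]

lemma dst_moments (θ : ℝ) {n : ℕ} (y : Fin n → Bool) :
    (∑ x, BB θ x y * (dst x y - n * θ) = 0) ∧
    (∑ x, BB θ x y * (dst x y - n * θ) ^ 2 = n * (θ * (1 - θ))) := by
  have h := moments (fun i a => bsc θ a (y i)) (fun i a => dHam a (y i) - θ)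
    (fun i => by cases y i <;> simp [bsc])
    (fun i => by cases y i <;> simp [bsc, dHam] <;> ring)
  have e : ∀ x : Fin n → Bool, ∑ i, (dHam (x i) (y i) - θ) = dst x y - n * θ := by
    intro x; simp [dst]
  simp only [e] at h
  refine ⟨h.1, h.2.trans ?_⟩
  have : ∀ i, ∑ a, bsc θ a (y i) * (dHam a (y i) - θ) ^ 2 = θ * (1 - θ) := by
    intro i; cases y i <;> simp [bsc, dHam] <;> ring
  simp only [this]
  simp

/-- typical distance -/
def cl (θ η : ℝ) {n : ℕ} (x u : Fin n → Bool) : Prop := |dst x u - n * θ| ≤ n * η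

lemma cheb {θ η : ℝ} (h0 : 0 ≤ θ) (h1 : θ ≤ 1) (hη : 0 < η) {n : ℕ} (hn : 0 < n)
    (y : Fin n → Bool) :
    ∑ x, (if cl θ η x y then 0 else BB θ x y) ≤ 1 / (4 * n * η ^ 2) := by
  have hn' : (0 : ℝ) < n := by exact_mod_cast hn
  have h := (dst_moments θ y).2
  have : ∑ x, (if cl θ η x y then 0 else BB θ x y)
      ≤ ∑ x, BB θ x y * (dst x y - n * θ) ^ 2 / (n * η) ^ 2 := by
    apply Finset.sum_le_sum
    intro x _
    have hB := BB_nonneg h0 h1 x y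
    split_ifs with hc
    · positivity
    · rw [le_div_iff₀ (by positivity)]
      apply mul_le_mul_of_nonneg_left _ hB
      rw [← sq_abs (dst x y - n * θ)]
      unfold cl at hc
      push Not at hc
      gcongr
  refine this.trans ?_
  rw [← Finset.sum_div, h, div_le_div_iff₀ (by positivity) (by positivity)]
  have : θ * (1 - θ) ≤ 1 / 4 := by nlinarith [sq_nonneg (θ - 1 / 2)]
  have h2 : 0 ≤ (n : ℝ) ^ 2 * η ^ 2 := by positivity
  nlinarith

lemma iid_eq (ρ : ℝ) {n : ℕ} (x y : Fin n → Bool) :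
    iid (dsbs ρ) n (x, y) = (1 / 2) ^ n * BB ρ x y := by
  unfold iid BB
  rw [← Fin.prod_const, ← Finset.prod_mul_distrib]
  apply Finset.prod_congr rfl
  intro i _
  simp only [dsbs, bsc]
  split_ifs <;> ring

lemma card_half (n : ℕ) : ∑ _y : Fin n → Bool, ((1 : ℝ) / 2) ^ n = 1 := by
  simp

lemma sum_iid (ρ : ℝ) (n : ℕ) : ∑ xy, iid (dsbs ρ) n xy = 1 := by
  rw [Fintype.sum_prod_type_right]
  simp only [iid_eq, ← Finset.mul_sum, sum_BB_left, mul_one]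
  exact card_half n

lemma iid_nonneg {ρ : ℝ} (h0 : 0 ≤ ρ) (h1 : ρ ≤ 1) {n : ℕ} (xy) : 0 ≤ iid (dsbs ρ) n xy := by
  obtain ⟨x, y⟩ := xy
  rw [iid_eq]
  have := BB_nonneg h0 h1 x y
  positivity

/-- converse -/
lemma converse {ρ D : ℝ} (hρ0 : 0 < ρ) (hρ1 : ρ ≤ 1 / 2) (hD0 : 0 < D) (hD1 : D ≤ 1 / 2)
    {n m : ℕ} (hn : 0 < n) (f : (Fin n → Bool) × (Fin n → Bool) → Fin m)
    (g1 : Fin m × (Fin n → Bool) → Fin n → Bool)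
    (hΔ : Delta1 (dsbs ρ) (dHam (α := Bool)) f g1 ≤ D) :
    n * (Real.binEntropy ρ - Real.binEntropy D) ≤ Real.log m := by
  have hm : 0 < m := (f (fun _ => true, fun _ => true)).pos
  have hm' : (0 : ℝ) < m := by exact_mod_cast hm
  have hn' : (0 : ℝ) < n := by exact_mod_cast hn
  set P := iid (dsbs ρ) n with hP
  have hPpos : ∀ xy, 0 < P xy := by
    rintro ⟨x, y⟩
    rw [hP, iid_eq, BB_eq_exp hρ0 (by linarith)]; positivity
  have hsum := sum_iid ρ n
  -- the auxiliary measure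
  let Q : (Fin n → Bool) × (Fin n → Bool) → ℝ :=
    fun xy => (1 / 2) ^ n / m * BB D xy.1 (g1 (f xy, xy.2))
  have hQpos : ∀ xy, 0 < Q xy := by
    rintro ⟨x, y⟩
    simp only [Q]
    rw [BB_eq_exp hD0 (by linarith)]; positivity
  have hQ : ∑ xy, Q xy ≤ 1 := by
    calc ∑ xy, Q xy ≤ ∑ xy : (Fin n → Bool) × (Fin n → Bool),
          ∑ j : Fin m, (1 / 2) ^ n / m * BB D xy.1 (g1 (j, xy.2)) := by
          apply Finset.sum_le_sum
          intro xy _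
          exact Finset.single_le_sum (f := fun j => (1 / 2) ^ n / m * BB D xy.1 (g1 (j, xy.2)))
            (fun j _ => mul_nonneg (by positivity) (BB_nonneg hD0.le (by linarith) _ _))
            (Finset.mem_univ (f xy))
      _ = 1 := by
          rw [Fintype.sum_prod_type_right]
          calc _ = ∑ y : Fin n → Bool, ∑ j : Fin m, ((1 : ℝ) / 2) ^ n / m *
                ∑ x : Fin n → Bool, BB D x (g1 (j, y)) := by
                apply Finset.sum_congr rfl; intro y _
                rw [Finset.sum_comm]
                simp only [Finset.mul_sum]
            _ = ∑ y : Fin n → Bool, ((1 : ℝ) / 2) ^ n := by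
                simp only [sum_BB_left]
                apply Finset.sum_congr rfl; intro y _
                simp
                field_simp
            _ = 1 := card_half n
  have gibbs : ∑ xy, P xy * (Real.log (Q xy) - Real.log (P xy)) ≤ 0 := by
    calc _ ≤ ∑ xy, (Q xy - P xy) := by
          apply Finset.sum_le_sum
          intro xy _
          have h := Real.log_le_sub_one_of_pos (div_pos (hQpos xy) (hPpos xy))
          rw [Real.log_div (hQpos xy).ne' (hPpos xy).ne'] at h
          have := mul_le_mul_of_nonneg_left h (hPpos xy).le
          refine this.trans (le_of_eq ?_)
          have := (hPpos xy).ne'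
          field_simp
      _ ≤ 0 := by rw [Finset.sum_sub_distrib, hsum]; linarith
  have hlog : ∀ xy : (Fin n → Bool) × (Fin n → Bool), Real.log (Q xy) - Real.log (P xy) =
      (n * (Real.binEntropy ρ - Real.binEntropy D) - Real.log m + n * D * LL D)
        - dst xy.1 (g1 (f xy, xy.2)) * LL D + (dst xy.1 xy.2 - n * ρ) * LL ρ := by
    rintro ⟨x, y⟩
    simp only [Q, hP, iid_eq]
    rw [BB_eq_exp hD0 (by linarith), BB_eq_exp hρ0 (by linarith),
      Real.log_mul (by positivity) (by positivity), Real.log_mul (by positivity) (by positivity),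
      Real.log_div (by positivity) (by positivity), Real.log_exp, Real.log_exp]
    ring
  have e1 : ∑ xy : (Fin n → Bool) × (Fin n → Bool), P xy * (dst xy.1 xy.2 - n * ρ) = 0 := by
    rw [Fintype.sum_prod_type_right]
    apply Finset.sum_eq_zero
    intro y _
    simp only [hP, iid_eq, mul_assoc, ← Finset.mul_sum, (dst_moments ρ y).1, mul_zero]
  have e2 : ∑ xy : (Fin n → Bool) × (Fin n → Bool), P xy * dst xy.1 (g1 (f xy, xy.2)) ≤ n * D := by
    have : n * Delta1 (dsbs ρ) (dHam (α := Bool)) f g1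
        = ∑ xy : (Fin n → Bool) × (Fin n → Bool), P xy * dst xy.1 (g1 (f xy, xy.2)) := by
      unfold Delta1
      rw [Finset.mul_sum]
      apply Finset.sum_congr rfl
      intro xy _
      simp only [dst, hP]
      field_simp
    rw [← this]
    exact mul_le_mul_of_nonneg_left hΔ hn'.le
  have e3 : ∑ xy, P xy * (Real.log (Q xy) - Real.log (P xy)) =
      (n * (Real.binEntropy ρ - Real.binEntropy D) - Real.log m + n * D * LL D) * ∑ xy, P xy
      - (∑ xy : (Fin n → Bool) × (Fin n → Bool), P xy * dst xy.1 (g1 (f xy, xy.2))) * LL D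
      + (∑ xy : (Fin n → Bool) × (Fin n → Bool), P xy * (dst xy.1 xy.2 - n * ρ)) * LL ρ := by
    rw [Finset.mul_sum, Finset.sum_mul, Finset.sum_mul, ← Finset.sum_sub_distrib,
      ← Finset.sum_add_distrib]
    apply Finset.sum_congr rfl
    intro xy _
    rw [hlog]; ring
  rw [e3, e1, hsum] at gibbs
  have := mul_le_mul_of_nonneg_right e2 (LL_nonneg hD0 hD1)
  linarith

end TWRAux
namespace TWRAux
open TWR

lemma bin_lemma {S : Type} [Fintype S] (Q : S → ℝ) (hQ0 : ∀ s, 0 ≤ Q s) (hQ1 : ∑ s, Q s = 1)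
    (C D : S → Prop) (hCD : ∀ s, C s → D s) (K : ℕ) :
    (K : ℝ) * (∑ s, if C s then Q s else 0) * (1 - K * ∑ s, if D s then Q s else 0) ≤
    ∑ b : Fin K → S, (∏ k, Q (b k)) *
      (if ∃ k, C (b k) ∧ ∀ k', k' ≠ k → ¬ D (b k') then 1 else 0) := by
  set p := ∑ s, if C s then Q s else 0 with hp
  set q := ∑ s, if D s then Q s else 0 with hq
  have hp0 : 0 ≤ p := Finset.sum_nonneg fun s _ => by split_ifs <;> simp [hQ0]
  have hq0 : 0 ≤ q := Finset.sum_nonneg fun s _ => by split_ifs <;> simp [hQ0]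
  have hqc : ∑ s, (if D s then 0 else Q s) = 1 - q := by
    rw [hq, ← hQ1, ← Finset.sum_sub_distrib]
    apply Finset.sum_congr rfl
    intro s _; split_ifs <;> simp
  have hq1 : q ≤ 1 := by
    have : 0 ≤ ∑ s, (if D s then 0 else Q s) :=
      Finset.sum_nonneg fun s _ => by split_ifs <;> simp [hQ0]
    linarith
  have step : ∀ k : Fin K, p * (1 - K * q) ≤ ∑ b : Fin K → S, (∏ k, Q (b k)) *
      (if C (b k) ∧ ∀ k', k' ≠ k → ¬ D (b k') then 1 else 0) := by
    intro k
    have e : ∀ b : Fin K → S, (∏ k, Q (b k)) *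
        (if C (b k) ∧ ∀ k', k' ≠ k → ¬ D (b k') then 1 else 0)
        = ∏ k', (if k' = k then (if C (b k') then Q (b k') else 0)
            else (if D (b k') then 0 else Q (b k'))) := by
      intro b
      split_ifs with h
      · rw [mul_one]
        apply Finset.prod_congr rfl
        intro k' _
        by_cases hk : k' = k
        · subst hk; simp [h.1]
        · simp [hk, h.2 k' hk]
      · rw [mul_zero]
        symm
        by_cases hC : C (b k)
        · have h' : ∃ k', k' ≠ k ∧ D (b k') := by
            by_contra hcon
            push Not at hcon
            exact h ⟨hC, hcon⟩
          obtain ⟨k', hk', hD⟩ := h'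
          apply Finset.prod_eq_zero (Finset.mem_univ k')
          simp [hk', hD]
        · apply Finset.prod_eq_zero (Finset.mem_univ k)
          simp [hC]
    simp only [e]
    rw [sum_pi_prod (fun k' s => if k' = k then (if C s then Q s else 0)
            else (if D s then 0 else Q s))]
    rw [← Finset.mul_prod_erase _ _ (Finset.mem_univ k)]
    have e2 : ∏ k' ∈ Finset.univ.erase k, ∑ s, (if k' = k then (if C s then Q s else 0)
            else (if D s then 0 else Q s)) = (1 - q) ^ (K - 1) := by
      rw [Finset.prod_congr rfl (g := fun _ => 1 - q)]
      · simp
      · intro k' hk'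
        simp only [Finset.ne_of_mem_erase hk', if_false]
        exact hqc
    rw [e2]
    simp only [if_true]
    rw [← hp]
    apply mul_le_mul_of_nonneg_left _ hp0
    have hb := one_add_mul_le_pow (by linarith : (-2 : ℝ) ≤ -q) (K - 1)
    have hKle : ((K - 1 : ℕ) : ℝ) ≤ K := by exact_mod_cast Nat.sub_le K 1
    have : ((K - 1 : ℕ) : ℝ) * q ≤ K * q := mul_le_mul_of_nonneg_right hKle hq0
    rw [← sub_eq_add_neg] at hb
    linarith
  calc (K : ℝ) * p * (1 - K * q) = ∑ _k : Fin K, p * (1 - K * q) := by simp; ring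
    _ ≤ ∑ k : Fin K, ∑ b : Fin K → S, (∏ k, Q (b k)) *
      (if C (b k) ∧ ∀ k', k' ≠ k → ¬ D (b k') then 1 else 0) :=
        Finset.sum_le_sum fun k _ => step k
    _ = ∑ b : Fin K → S, (∏ k, Q (b k)) * ∑ k : Fin K,
      (if C (b k) ∧ ∀ k', k' ≠ k → ¬ D (b k') then (1 : ℝ) else 0) := by
        rw [Finset.sum_comm]
        simp only [Finset.mul_sum]
    _ ≤ _ := by
        apply Finset.sum_le_sum
        intro b _
        apply mul_le_mul_of_nonneg_left _ (Finset.prod_nonneg fun _ _ => hQ0 _)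
        split_ifs with h
        · obtain ⟨k, hk⟩ := h
          rw [Finset.sum_eq_single k]
          · rw [if_pos hk]
          · intro k2 _ hne
            rw [if_neg]
            intro h2
            exact hk.2 k2 hne (hCD _ h2.1)
          · simp
        · push Not at h
          apply le_of_eq
          apply Finset.sum_eq_zero
          intro k _
          rw [if_neg]
          rintro ⟨h1, h2⟩
          obtain ⟨k', hk', hD⟩ := h k h1
          exact h2 k' hk' hD

lemma exists_le_avg {B : Type} [Fintype B] (μ X : B → ℝ) (h0 : ∀ b, 0 ≤ μ b)
    (h1 : ∑ b, μ b = 1) {c : ℝ} (h : ∑ b, μ b * X b ≤ c) : ∃ b, X b ≤ c := by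
  by_contra hcon
  push Not at hcon
  have hle : ∑ b, μ b * (X b - c) ≤ 0 := by
    simp only [mul_sub, Finset.sum_sub_distrib, ← Finset.sum_mul, h1]
    linarith
  have hnn : ∀ b ∈ Finset.univ, 0 ≤ μ b * (X b - c) := fun b _ =>
    mul_nonneg (h0 b) (by linarith [hcon b])
  have hz := (Finset.sum_eq_zero_iff_of_nonneg hnn).1 (le_antisymm hle (Finset.sum_nonneg hnn))
  have : ∑ b, μ b = 0 := by
    apply Finset.sum_eq_zero
    intro b hb
    rcases mul_eq_zero.1 (hz b hb) with h' | h'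
    · exact h'
    · linarith [hcon b]
  linarith

lemma cover {A B : Type} [Fintype A] [Fintype B] (P : A → ℝ) (hP0 : ∀ a, 0 ≤ P a)
    (hP1 : ∑ a, P a = 1) (μ : B → ℝ) (h0 : ∀ b, 0 ≤ μ b) (h1 : ∑ b, μ b = 1)
    (good : B → A → Prop) (T : A → Prop) (p : ℝ)
    (hp : ∀ a, T a → p ≤ ∑ b, μ b * (if good b a then 1 else 0)) (m : ℕ) :
    ∃ bs : Fin m → B, ∑ a, (if T a ∧ ∀ j, ¬ good (bs j) a then P a else 0) ≤
      Real.exp (-(p * m)) := by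
  apply exists_le_avg (fun bs : Fin m → B => ∏ j, μ (bs j)) _
    (fun bs => Finset.prod_nonneg fun _ _ => h0 _)
  · rw [sum_pi_prod (fun _ => μ)]; simp [h1]
  simp only [Finset.mul_sum]
  rw [Finset.sum_comm]
  calc _ ≤ ∑ a, P a * Real.exp (-(p * m)) := by
        apply Finset.sum_le_sum
        intro a _
        by_cases hT : T a
        · have e : ∀ bs : Fin m → B, (∏ j, μ (bs j)) *
              (if T a ∧ ∀ j, ¬ good (bs j) a then P a else 0)
              = P a * ∏ j, (μ (bs j) * (if good (bs j) a then 0 else 1)) := by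
            intro bs
            rw [Finset.prod_mul_distrib]
            by_cases hg : ∀ j, ¬ good (bs j) a
            · simp [hT, hg]; ring
            · rw [if_neg (by tauto)]
              push Not at hg
              obtain ⟨j, hj⟩ := hg
              rw [Finset.prod_eq_zero (f := fun j => if good (bs j) a then (0 : ℝ) else 1)
                (Finset.mem_univ j) (by simp [hj])]
              simp
          simp only [e]
          rw [← Finset.mul_sum]
          apply mul_le_mul_of_nonneg_left _ (hP0 a)
          rw [sum_pi_prod (fun _ b => μ b * (if good b a then 0 else 1))]
          simp only [Finset.prod_const, Finset.card_univ, Fintype.card_fin]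
          have hs : ∑ b, μ b * (if good b a then (0 : ℝ) else 1)
              = 1 - ∑ b, μ b * (if good b a then 1 else 0) := by
            rw [eq_sub_iff_add_eq, ← Finset.sum_add_distrib]
            refine Eq.trans ?_ h1
            apply Finset.sum_congr rfl
            intro b _; split_ifs <;> ring
          have hnn : 0 ≤ ∑ b, μ b * (if good b a then (0 : ℝ) else 1) :=
            Finset.sum_nonneg fun b _ => mul_nonneg (h0 b) (by split_ifs <;> simp)
          have hle : ∑ b, μ b * (if good b a then (0 : ℝ) else 1) ≤ Real.exp (-p) := by
            have := Real.one_sub_le_exp_neg p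
            linarith [hp a hT]
          calc _ ≤ Real.exp (-p) ^ m := pow_le_pow_left₀ hnn hle m
            _ = _ := by rw [← Real.exp_nat_mul]; congr 1; ring
        · simp only [hT, false_and, if_false, mul_zero, Finset.sum_const_zero]
          exact mul_nonneg (hP0 a) (Real.exp_pos _).le
    _ = _ := by rw [← Finset.sum_mul, hP1, one_mul]

lemma cl_lower {θ η : ℝ} (h0 : 0 < θ) (h1 : θ ≤ 1 / 2) {n : ℕ} {x u : Fin n → Bool}
    (h : cl θ η x u) : Real.exp (-(n * (Real.binEntropy θ + LL θ * η))) ≤ BB θ x u := by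
  rw [BB_eq_exp h0 (by linarith)]
  apply Real.exp_le_exp.2
  have := mul_le_mul_of_nonneg_right (abs_le.1 h).2 (LL_nonneg h0 h1)
  nlinarith

lemma cl_upper {θ η : ℝ} (h0 : 0 < θ) (h1 : θ ≤ 1 / 2) {n : ℕ} {x u : Fin n → Bool}
    (h : cl θ η x u) : BB θ x u ≤ Real.exp (-(n * (Real.binEntropy θ - LL θ * η))) := by
  rw [BB_eq_exp h0 (by linarith)]
  apply Real.exp_le_exp.2
  have := mul_le_mul_of_nonneg_right (abs_le.1 h).1 (LL_nonneg h0 h1)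
  nlinarith

lemma ball {θ η : ℝ} (h0 : 0 < θ) (h1 : θ ≤ 1 / 2) {n : ℕ} (x : Fin n → Bool) :
    ∑ u, (if cl θ η x u then (1 : ℝ) else 0) ≤
      Real.exp (n * (Real.binEntropy θ + LL θ * η)) := by
  calc _ ≤ ∑ u, BB θ x u * Real.exp (n * (Real.binEntropy θ + LL θ * η)) := by
        apply Finset.sum_le_sum
        intro u _
        have hB := BB_nonneg h0.le (by linarith) x u
        split_ifs with h
        · have := mul_le_mul_of_nonneg_right (cl_lower h0 h1 h)
            (Real.exp_pos (n * (Real.binEntropy θ + LL θ * η))).le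
          rwa [← Real.exp_add, neg_add_cancel, Real.exp_zero] at this
        · positivity
    _ = _ := by rw [← Finset.sum_mul, sum_BB_right, one_mul]

lemma qD_bound {d ρ0 η : ℝ} (h0 : 0 < d) (h1 : d ≤ 1 / 2) (hρ0 : 0 ≤ ρ0) (hρ1 : ρ0 ≤ 1) {n : ℕ}
    (x y : Fin n → Bool) :
    ∑ s : (Fin n → Bool) × (Fin n → Bool),
      (if cl d η x s.1 ∨ cl d η y s.2 then iid (dsbs ρ0) n s else 0) ≤
      2 * ((1 / 2) ^ n * Real.exp (n * (Real.binEntropy d + LL d * η))) := by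
  have a1 : ∑ s : (Fin n → Bool) × (Fin n → Bool),
      (if cl d η x s.1 then iid (dsbs ρ0) n s else 0) ≤
      (1 / 2) ^ n * Real.exp (n * (Real.binEntropy d + LL d * η)) := by
    rw [Fintype.sum_prod_type]
    refine le_trans (le_of_eq ?_) (mul_le_mul_of_nonneg_left (ball (η := η) h0 h1 x) (by positivity))
    rw [Finset.mul_sum]
    apply Finset.sum_congr rfl
    intro u _
    by_cases h : cl d η x u
    · simp only [h, if_true, iid_eq, ← Finset.mul_sum, sum_BB_right]
    · simp [h]
  have a2 : ∑ s : (Fin n → Bool) × (Fin n → Bool),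
      (if cl d η y s.2 then iid (dsbs ρ0) n s else 0) ≤
      (1 / 2) ^ n * Real.exp (n * (Real.binEntropy d + LL d * η)) := by
    rw [Fintype.sum_prod_type_right]
    refine le_trans (le_of_eq ?_) (mul_le_mul_of_nonneg_left (ball (η := η) h0 h1 y) (by positivity))
    rw [Finset.mul_sum]
    apply Finset.sum_congr rfl
    intro u _
    by_cases h : cl d η y u
    · simp only [h, if_true, iid_eq, ← Finset.mul_sum, sum_BB_left]
    · simp [h]
  refine le_trans ?_ (by linarith [add_le_add a1 a2] :
    (∑ s : (Fin n → Bool) × (Fin n → Bool),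
      (if cl d η x s.1 then iid (dsbs ρ0) n s else 0)) + ∑ s : (Fin n → Bool) × (Fin n → Bool),
      (if cl d η y s.2 then iid (dsbs ρ0) n s else 0) ≤ _)
  rw [← Finset.sum_add_distrib]
  apply Finset.sum_le_sum
  intro s _
  have := iid_nonneg hρ0 hρ1 (n := n) s
  by_cases ha : cl d η x s.1 <;> by_cases hb : cl d η y s.2 <;> simp [ha, hb] <;> linarith

/-- total mass of non-typical quadruples -/
lemma notclose {d ρ0 η : ℝ} (h0 : 0 < d) (h1 : d ≤ 1 / 2) (hρ0 : 0 ≤ ρ0) (hρ1 : ρ0 ≤ 1)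
    (hη : 0 < η) {n : ℕ} (hn : 0 < n) :
    ∑ a : (Fin n → Bool) × (Fin n → Bool), ∑ s : (Fin n → Bool) × (Fin n → Bool),
      (if cl d η a.1 s.1 ∧ cl d η a.2 s.2 then 0 else
        iid (dsbs ρ0) n s * (BB d a.1 s.1 * BB d a.2 s.2)) ≤ 2 * (1 / (4 * n * η ^ 2)) := by
  have hc := fun s : Fin n → Bool => cheb h0.le (by linarith : d ≤ 1) hη hn s
  set c := 1 / (4 * (n : ℝ) * η ^ 2)
  rw [Finset.sum_comm]
  calc _ ≤ ∑ s : (Fin n → Bool) × (Fin n → Bool), iid (dsbs ρ0) n s * (2 * c) := by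
        apply Finset.sum_le_sum
        intro s _
        have hs := iid_nonneg hρ0 hρ1 (n := n) s
        have hB := fun x y : Fin n → Bool => BB_nonneg h0.le (by linarith : d ≤ 1) x y
        calc _ ≤ ∑ a : (Fin n → Bool) × (Fin n → Bool), iid (dsbs ρ0) n s *
              ((if cl d η a.1 s.1 then 0 else BB d a.1 s.1) * BB d a.2 s.2 +
              BB d a.1 s.1 * (if cl d η a.2 s.2 then 0 else BB d a.2 s.2)) := by
              apply Finset.sum_le_sum
              intro a _
              have := mul_nonneg hs (mul_nonneg (hB a.1 s.1) (hB a.2 s.2))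
              by_cases ha : cl d η a.1 s.1 <;> by_cases hb : cl d η a.2 s.2 <;>
                simp [ha, hb] <;> linarith
          _ = iid (dsbs ρ0) n s *
              ((∑ x, (if cl d η x s.1 then 0 else BB d x s.1)) * (∑ y, BB d y s.2) +
              (∑ x, BB d x s.1) * (∑ y, if cl d η y s.2 then 0 else BB d y s.2)) := by
              rw [← Finset.mul_sum, Finset.sum_add_distrib]
              rw [Fintype.sum_mul_sum, Fintype.sum_mul_sum, Fintype.sum_prod_type,
                Fintype.sum_prod_type]
          _ ≤ _ := by
              apply mul_le_mul_of_nonneg_left _ hs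
              rw [sum_BB_left, sum_BB_left]
              have b1 := hc s.1
              have b2 := hc s.2
              linarith
    _ = _ := by rw [← Finset.sum_mul, sum_iid, one_mul]

end TWRAux
namespace TWRAux
open TWR

/-- covering probability of a source pair by one codeword pair -/
def p0 (d ρ0 η : ℝ) {n : ℕ} (a : (Fin n → Bool) × (Fin n → Bool)) : ℝ :=
  ∑ s : (Fin n → Bool) × (Fin n → Bool),
    if cl d η a.1 s.1 ∧ cl d η a.2 s.2 then iid (dsbs ρ0) n s else 0

/-- lower bound on the covering probability of typical pairs -/
def tau (d ρ η : ℝ) (n : ℕ) : ℝ :=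
  ((1 / 2) ^ n * Real.exp (-(n * (Real.binEntropy ρ + LL ρ * η)))) /
    (2 * Real.exp (-(n * (Real.binEntropy d - LL d * η))) ^ 2)

lemma atyp {d ρ0 ρ η : ℝ} (h0 : 0 < d) (h1 : d ≤ 1 / 2) (hρ00 : 0 ≤ ρ0) (hρ01 : ρ0 ≤ 1)
    (hρ0 : 0 < ρ) (hρ1 : ρ ≤ 1 / 2)
    (hconv : (1 - 2 * ρ0) * (1 - 2 * d) ^ 2 = 1 - 2 * ρ)
    (hη : 0 < η) {n : ℕ} (hn : 0 < n) :
    ∑ a : (Fin n → Bool) × (Fin n → Bool),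
      (if tau d ρ η n ≤ p0 d ρ0 η a then 0 else iid (dsbs ρ) n a) ≤ 5 / (4 * n * η ^ 2) := by
  have hn' : (0 : ℝ) < n := by exact_mod_cast hn
  set N : (Fin n → Bool) × (Fin n → Bool) → ℝ := fun a =>
    ∑ s : (Fin n → Bool) × (Fin n → Bool),
      (if cl d η a.1 s.1 ∧ cl d η a.2 s.2 then 0 else
        iid (dsbs ρ0) n s * (BB d a.1 s.1 * BB d a.2 s.2)) with hN
  have hNn : ∀ a, 0 ≤ N a := fun a => Finset.sum_nonneg fun s _ => by
    split_ifs
    · exact le_rfl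
    · exact mul_nonneg (iid_nonneg hρ00 hρ01 _) (mul_nonneg (BB_nonneg h0.le (by linarith) _ _)
        (BB_nonneg h0.le (by linarith) _ _))
  have hP : ∀ a, 0 ≤ iid (dsbs ρ) n a := fun a => iid_nonneg hρ0.le (by linarith) a
  have key : ∀ a : (Fin n → Bool) × (Fin n → Bool),
      (if tau d ρ η n ≤ p0 d ρ0 η a then 0 else iid (dsbs ρ) n a) ≤
      (if cl ρ η a.1 a.2 then 0 else iid (dsbs ρ) n a) + 2 * N a := by
    intro a
    by_cases ht : tau d ρ η n ≤ p0 d ρ0 η a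
    · rw [if_pos ht]
      have := hNn a
      have := hP a
      split_ifs <;> linarith
    by_cases hc : cl ρ η a.1 a.2
    swap
    · rw [if_neg ht, if_neg hc]; linarith [hNn a]
    rw [if_neg ht, if_pos hc]
    push Not at ht
    set w := Real.exp (-(n * (Real.binEntropy d - LL d * η))) with hw
    have hwpos : 0 < w := Real.exp_pos _
    have e : iid (dsbs ρ) n a = ∑ s : (Fin n → Bool) × (Fin n → Bool),
        iid (dsbs ρ0) n s * (BB d a.1 s.1 * BB d a.2 s.2) := by
      obtain ⟨x, y⟩ := a
      rw [iid_eq, ← BB_conv hconv, Fintype.sum_prod_type, Finset.mul_sum]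
      apply Finset.sum_congr rfl; intro u _
      rw [Finset.mul_sum]
      apply Finset.sum_congr rfl; intro v _
      rw [iid_eq]; ring
    have e2 : iid (dsbs ρ) n a ≤ w ^ 2 * p0 d ρ0 η a + N a := by
      rw [e, hN, p0, Finset.mul_sum, ← Finset.sum_add_distrib]
      apply Finset.sum_le_sum
      intro s _
      by_cases hs : cl d η a.1 s.1 ∧ cl d η a.2 s.2
      · rw [if_pos hs, if_pos hs, add_zero, mul_comm]
        apply mul_le_mul_of_nonneg_right _ (iid_nonneg hρ00 hρ01 _)
        rw [sq]
        exact mul_le_mul (cl_upper h0 h1 hs.1) (cl_upper h0 h1 hs.2)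
          (BB_nonneg h0.le (by linarith) _ _) hwpos.le
      · rw [if_neg hs, if_neg hs, mul_zero, zero_add]
    have e3 : w ^ 2 * tau d ρ η n ≤ iid (dsbs ρ) n a / 2 := by
      obtain ⟨x, y⟩ := a
      rw [iid_eq, tau, ← hw]
      have := mul_le_mul_of_nonneg_left (cl_lower hρ0 hρ1 hc)
        (by positivity : (0 : ℝ) ≤ (1 / 2) ^ n)
      refine le_trans (le_of_eq ?_) (div_le_div_of_nonneg_right this (by norm_num : (0:ℝ) ≤ 2))
      field_simp
    have e4 : w ^ 2 * p0 d ρ0 η a ≤ w ^ 2 * tau d ρ η n :=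
      mul_le_mul_of_nonneg_left ht.le (by positivity)
    linarith
  have hw1 : ∑ a : (Fin n → Bool) × (Fin n → Bool),
      (if cl ρ η a.1 a.2 then 0 else iid (dsbs ρ) n a) ≤ 1 / (4 * n * η ^ 2) := by
    rw [Fintype.sum_prod_type_right]
    calc _ ≤ ∑ _y : Fin n → Bool, ((1 : ℝ) / 2) ^ n * (1 / (4 * n * η ^ 2)) := by
          apply Finset.sum_le_sum
          intro y _
          refine le_trans (le_of_eq ?_) (mul_le_mul_of_nonneg_left
            (cheb hρ0.le (by linarith) hη hn y) (by positivity))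
          rw [Finset.mul_sum]
          apply Finset.sum_congr rfl
          intro x _
          rw [iid_eq]
          split_ifs <;> simp
      _ = _ := by rw [← Finset.sum_mul, card_half, one_mul]
  have hw2 := notclose h0 h1 hρ00 hρ01 hη hn
  calc _ ≤ _ := Finset.sum_le_sum fun a _ => key a
    _ = ∑ a : (Fin n → Bool) × (Fin n → Bool),
      (if cl ρ η a.1 a.2 then 0 else iid (dsbs ρ) n a) + 2 * ∑ a, N a := by
        rw [Finset.sum_add_distrib, Finset.mul_sum]
    _ ≤ 1 / (4 * n * η ^ 2) + 2 * (2 * (1 / (4 * n * η ^ 2))) := by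
        have := hw2
        simp only [hN]
        linarith
    _ = _ := by ring

/-- Existence of good binned codebooks. -/
lemma codebook {d ρ0 ρ η : ℝ} (h0 : 0 < d) (h1 : d ≤ 1 / 2) (hρ00 : 0 ≤ ρ0) (hρ01 : ρ0 ≤ 1)
    (hρ0 : 0 < ρ) (hρ1 : ρ ≤ 1 / 2)
    (hconv : (1 - 2 * ρ0) * (1 - 2 * d) ^ 2 = 1 - 2 * ρ)
    (hη : 0 < η) {n : ℕ} (hn : 0 < n) (K m : ℕ)
    (hK : 4 * K * ((1 / 2) ^ n * Real.exp (n * (Real.binEntropy d + LL d * η))) ≤ 1) :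
    ∃ bs : Fin m → Fin K → (Fin n → Bool) × (Fin n → Bool),
      ∑ a : (Fin n → Bool) × (Fin n → Bool),
        (if ∃ j, ∃ k, (cl d η a.1 (bs j k).1 ∧ cl d η a.2 (bs j k).2) ∧
          ∀ k', k' ≠ k → ¬ (cl d η a.1 (bs j k').1 ∨ cl d η a.2 (bs j k').2)
          then 0 else iid (dsbs ρ) n a) ≤
      Real.exp (-(K * tau d ρ η n / 2 * m)) + 5 / (4 * n * η ^ 2) := by
  have hQ0 : ∀ s, 0 ≤ iid (dsbs ρ0) n s := fun s => iid_nonneg hρ00 hρ01 s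
  have hP : ∀ a, 0 ≤ iid (dsbs ρ) n a := fun a => iid_nonneg hρ0.le (by linarith) a
  obtain ⟨bs, hbs⟩ := cover (iid (dsbs ρ) n) hP (sum_iid ρ n)
    (fun b : Fin K → (Fin n → Bool) × (Fin n → Bool) => ∏ k, iid (dsbs ρ0) n (b k))
    (fun b => Finset.prod_nonneg fun _ _ => hQ0 _)
    (by rw [sum_pi_prod (fun _ => iid (dsbs ρ0) n)]; simp [sum_iid])
    (fun b a => ∃ k, (cl d η a.1 (b k).1 ∧ cl d η a.2 (b k).2) ∧
          ∀ k', k' ≠ k → ¬ (cl d η a.1 (b k').1 ∨ cl d η a.2 (b k').2))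
    (fun a => tau d ρ η n ≤ p0 d ρ0 η a) (K * tau d ρ η n / 2)
    (by
      intro a ha
      have hb := bin_lemma (iid (dsbs ρ0) n) hQ0 (sum_iid ρ0 n)
        (fun s => cl d η a.1 s.1 ∧ cl d η a.2 s.2) (fun s => cl d η a.1 s.1 ∨ cl d η a.2 s.2)
        (fun s hs => Or.inl hs.1) K
      refine le_trans (b := (K : ℝ) * p0 d ρ0 η a *
        (1 - K * ∑ s : (Fin n → Bool) × (Fin n → Bool),
        (if cl d η a.1 s.1 ∨ cl d η a.2 s.2 then iid (dsbs ρ0) n s else 0))) ?_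
        (by unfold p0; convert hb; rfl)
      have hq := qD_bound (η := η) h0 h1 hρ00 hρ01 a.1 a.2
      have hKn : (0 : ℝ) ≤ K := by positivity
      have htau : 0 ≤ tau d ρ η n := by unfold tau; positivity
      have h2 := mul_le_mul_of_nonneg_left hq hKn
      have h3 : (1 : ℝ) / 2 ≤ 1 - K * ∑ s : (Fin n → Bool) × (Fin n → Bool),
        (if cl d η a.1 s.1 ∨ cl d η a.2 s.2 then iid (dsbs ρ0) n s else 0) := by linarith
      have h4 : (K : ℝ) * tau d ρ η n ≤ K * p0 d ρ0 η a := mul_le_mul_of_nonneg_left ha hKn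
      have h5 := mul_le_mul h4 h3 (by norm_num) (le_trans (mul_nonneg hKn htau) h4)
      refine le_trans (le_of_eq ?_) h5
      ring) m
  refine ⟨bs, ?_⟩
  refine le_trans ?_ (add_le_add hbs (atyp h0 h1 hρ00 hρ01 hρ0 hρ1 hconv hη hn))
  rw [← Finset.sum_add_distrib]
  apply Finset.sum_le_sum
  intro a _
  have := hP a
  by_cases hT : tau d ρ η n ≤ p0 d ρ0 η a
  · by_cases hg : ∃ j, ∃ k, (cl d η a.1 (bs j k).1 ∧ cl d η a.2 (bs j k).2) ∧
          ∀ k', k' ≠ k → ¬ (cl d η a.1 (bs j k').1 ∨ cl d η a.2 (bs j k').2)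
    · rw [if_pos hg]
      split_ifs <;> linarith
    · rw [if_neg hg, if_pos ⟨hT, not_exists.1 hg⟩]
      split_ifs <;> linarith
  · rw [if_neg hT]
    split_ifs <;> linarith

/-- Codes from codebooks. -/
lemma code_of_book {d ρ η β : ℝ} (hd0 : 0 ≤ d) (hη0 : 0 ≤ η)
    (hρ0 : 0 < ρ) (hρ1 : ρ ≤ 1 / 2) {n : ℕ} (hn : 0 < n) {K m : ℕ} (hm : 0 < m)
    (bs : Fin m → Fin K → (Fin n → Bool) × (Fin n → Bool))
    (hbs : ∑ a : (Fin n → Bool) × (Fin n → Bool),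
        (if ∃ j, ∃ k, (cl d η a.1 (bs j k).1 ∧ cl d η a.2 (bs j k).2) ∧
          ∀ k', k' ≠ k → ¬ (cl d η a.1 (bs j k').1 ∨ cl d η a.2 (bs j k').2)
          then 0 else iid (dsbs ρ) n a) ≤ β) :
    ∃ (f : (Fin n → Bool) × (Fin n → Bool) → Fin m)
    (g1 : Fin m × (Fin n → Bool) → Fin n → Bool)
    (g2 : Fin m × (Fin n → Bool) → Fin n → Bool)
    (φ1 : Fin m × (Fin n → Bool) → Fin n → Bool)
    (φ2 : Fin m × (Fin n → Bool) → Fin n → Bool),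
    Delta1 (dsbs ρ) (dHam (α := Bool)) f g1 ≤ d + η + β ∧
    Delta2 (dsbs ρ) (dHam (α := Bool)) f g2 ≤ d + η + β ∧
    (∑ xy : (Fin n → Bool) × (Fin n → Bool),
      if φ2 (f xy, xy.1) = g1 (f xy, xy.2) then 0 else iid (dsbs ρ) n xy) ≤ β ∧
    (∑ xy : (Fin n → Bool) × (Fin n → Bool),
      if φ1 (f xy, xy.2) = g2 (f xy, xy.1) then 0 else iid (dsbs ρ) n xy) ≤ β := by
  have hn' : (0 : ℝ) < n := by exact_mod_cast hn
  have hP : ∀ a, 0 ≤ iid (dsbs ρ) n a := fun a => iid_nonneg hρ0.le (by linarith) a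
  set G : (Fin n → Bool) × (Fin n → Bool) → Prop := fun a =>
    ∃ j, ∃ k, (cl d η a.1 (bs j k).1 ∧ cl d η a.2 (bs j k).2) ∧
          ∀ k', k' ≠ k → ¬ (cl d η a.1 (bs j k').1 ∨ cl d η a.2 (bs j k').2) with hG
  let f : (Fin n → Bool) × (Fin n → Bool) → Fin m := fun a =>
    if h : G a then h.choose else ⟨0, hm⟩
  let e1 : Fin m × (Fin n → Bool) → (Fin n → Bool) × (Fin n → Bool) := fun t =>
    if h : ∃ k, cl d η t.2 (bs t.1 k).2 then bs t.1 h.choose else (t.2, t.2)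
  let e2 : Fin m × (Fin n → Bool) → (Fin n → Bool) × (Fin n → Bool) := fun t =>
    if h : ∃ k, cl d η t.2 (bs t.1 k).1 then bs t.1 h.choose else (t.2, t.2)
  have key : ∀ a, G a → ∃ s : (Fin n → Bool) × (Fin n → Bool),
      e1 (f a, a.2) = s ∧ e2 (f a, a.1) = s ∧ cl d η a.1 s.1 ∧ cl d η a.2 s.2 := by
    intro a ha
    have hfa : f a = ha.choose := by simp only [f]; rw [dif_pos ha]
    obtain ⟨k, hk, huniq⟩ := ha.choose_spec
    rw [← hfa] at hk huniq
    refine ⟨bs (f a) k, ?_, ?_, hk.1, hk.2⟩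
    · have h : ∃ k, cl d η a.2 (bs (f a) k).2 := ⟨k, hk.2⟩
      have : h.choose = k := by
        by_contra hne
        exact huniq _ hne (Or.inr h.choose_spec)
      simp only [e1]
      rw [dif_pos h, this]
    · have h : ∃ k, cl d η a.1 (bs (f a) k).1 := ⟨k, hk.1⟩
      have : h.choose = k := by
        by_contra hne
        exact huniq _ hne (Or.inl h.choose_spec)
      simp only [e2]
      rw [dif_pos h, this]
  have hdist : ∀ (F X : (Fin n → Bool) × (Fin n → Bool) → (Fin n → Bool)),
      (∀ a, G a → cl d η (X a) (F a)) →
      ∑ a, iid (dsbs ρ) n a * ((n : ℝ)⁻¹ * ∑ i, dHam (X a i) (F a i)) ≤ d + η + β := by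
    intro F X hF
    calc _ ≤ ∑ a, (iid (dsbs ρ) n a * (d + η) + (if G a then 0 else iid (dsbs ρ) n a)) := by
          apply Finset.sum_le_sum
          intro a _
          rw [show ∑ i, dHam (X a i) (F a i) = dst (X a) (F a) from rfl]
          by_cases ha : G a
          · rw [if_pos ha, add_zero]
            apply mul_le_mul_of_nonneg_left _ (hP a)
            rw [inv_mul_le_iff₀ hn']
            have := (abs_le.1 (hF a ha)).2
            linarith
          · rw [if_neg ha]
            have h2 : (n : ℝ)⁻¹ * dst (X a) (F a) ≤ 1 := by
              rw [inv_mul_le_iff₀ hn', mul_one]; exact dst_le _ _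
            have h3 := mul_le_mul_of_nonneg_left h2 (hP a)
            have h4 := mul_nonneg (hP a) (add_nonneg hd0 hη0)
            linarith
      _ = d + η + ∑ a, (if G a then 0 else iid (dsbs ρ) n a) := by
          rw [Finset.sum_add_distrib, ← Finset.sum_mul, sum_iid, one_mul]
      _ ≤ _ := by linarith
  have herr : ∀ (F H : (Fin n → Bool) × (Fin n → Bool) → (Fin n → Bool)),
      (∀ a, G a → F a = H a) →
      ∑ a, (if F a = H a then 0 else iid (dsbs ρ) n a) ≤ β := by
    intro F H hFH
    refine le_trans ?_ hbs
    apply Finset.sum_le_sum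
    intro a _
    have := hP a
    by_cases ha : G a
    · rw [if_pos ha, if_pos (hFH a ha)]
    · rw [if_neg ha]
      split_ifs <;> linarith
  refine ⟨f, fun t => (e1 t).1, fun t => (e2 t).2, fun t => (e1 t).2, fun t => (e2 t).1,
    ?_, ?_, ?_, ?_⟩
  · exact hdist (fun a => (e1 (f a, a.2)).1) (fun a => a.1) (fun a ha => by
      obtain ⟨s, h1, h2, h3, h4⟩ := key a ha
      simp only [h1]; exact h3)
  · exact hdist (fun a => (e2 (f a, a.1)).2) (fun a => a.2) (fun a ha => by
      obtain ⟨s, h1, h2, h3, h4⟩ := key a ha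
      simp only [h2]; exact h4)
  · exact herr (fun a => (e2 (f a, a.1)).1) (fun a => (e1 (f a, a.2)).1) (fun a ha => by
      obtain ⟨s, h1, h2, h3, h4⟩ := key a ha
      simp only [h1, h2])
  · exact herr (fun a => (e1 (f a, a.2)).2) (fun a => (e2 (f a, a.1)).2) (fun a ha => by
      obtain ⟨s, h1, h2, h3, h4⟩ := key a ha
      simp only [h1, h2])

end TWRAux
namespace TWRAux
open TWR

lemma binEnt_eq (x : ℝ) : binEnt x = Real.binEntropy x / Real.log 2 := by
  unfold binEnt Real.binEntropy Real.logb
  simp only [Real.log_inv]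
  ring

lemma tau_eq (d ρ η : ℝ) (n : ℕ) : tau d ρ η n = (1 / 2) * Real.exp (-(n * (Real.log 2 +
    Real.binEntropy ρ - 2 * Real.binEntropy d + (LL ρ + 2 * LL d) * η))) := by
  unfold tau
  have h2 : ((1 : ℝ) / 2) ^ n = Real.exp (-(n * Real.log 2)) := by
    rw [← mul_neg, Real.exp_nat_mul, Real.exp_neg, Real.exp_log (by norm_num)]; norm_num
  rw [h2, ← Real.exp_nat_mul, ← Real.exp_add, mul_comm (2 : ℝ), ← div_div, ← Real.exp_sub]
  rw [mul_comm (1 / 2 : ℝ), mul_one_div]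
  congr 2
  push_cast
  ring

set_option maxHeartbeats 1000000 in
lemma achiev {d ρ ε : ℝ} (h0 : 0 < d) (h1 : d < 1 / 2) (hρ0 : 0 < ρ) (hρ1 : ρ ≤ 1 / 2)
    (hdρ : 1 - 2 * ρ ≤ (1 - 2 * d) ^ 2) (hε : 0 < ε) :
    ∃ (n m : ℕ) (f : (Fin n → Bool) × (Fin n → Bool) → Fin m)
    (g1 : Fin m × (Fin n → Bool) → Fin n → Bool)
    (g2 : Fin m × (Fin n → Bool) → Fin n → Bool)
    (φ1 : Fin m × (Fin n → Bool) → Fin n → Bool)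
    (φ2 : Fin m × (Fin n → Bool) → Fin n → Bool),
    0 < n ∧ Real.log m / n ≤ Real.binEntropy ρ - Real.binEntropy d + ε ∧
    Delta1 (dsbs ρ) (dHam (α := Bool)) f g1 ≤ d + ε ∧
    Delta2 (dsbs ρ) (dHam (α := Bool)) f g2 ≤ d + ε ∧
    (∑ xy : (Fin n → Bool) × (Fin n → Bool),
      if φ2 (f xy, xy.1) = g1 (f xy, xy.2) then 0 else iid (dsbs ρ) n xy) ≤ ε ∧
    (∑ xy : (Fin n → Bool) × (Fin n → Bool),
      if φ1 (f xy, xy.2) = g2 (f xy, xy.1) then 0 else iid (dsbs ρ) n xy) ≤ ε := by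
  have hsq : 0 < (1 - 2 * d) ^ 2 := by nlinarith
  set ρ0 := (1 - (1 - 2 * ρ) / (1 - 2 * d) ^ 2) / 2 with hρ0def
  have hq0 : 0 ≤ (1 - 2 * ρ) / (1 - 2 * d) ^ 2 := div_nonneg (by linarith) hsq.le
  have hq1 : (1 - 2 * ρ) / (1 - 2 * d) ^ 2 ≤ 1 := (div_le_one hsq).2 hdρ
  have hρ00 : 0 ≤ ρ0 := by rw [hρ0def]; linarith
  have hρ01 : ρ0 ≤ 1 := by rw [hρ0def]; linarith
  have hconv : (1 - 2 * ρ0) * (1 - 2 * d) ^ 2 = 1 - 2 * ρ := by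
    rw [show 1 - 2 * ρ0 = (1 - 2 * ρ) / (1 - 2 * d) ^ 2 by rw [hρ0def]; ring]
    exact div_mul_cancel₀ _ hsq.ne'
  set H := Real.binEntropy ρ with hH
  set h := Real.binEntropy d with hh
  have hhlt : h < Real.log 2 := Real.binEntropy_lt_log_two.2 (by norm_num; linarith)
  have hdle : d ≤ ρ := by nlinarith
  have hHh : h ≤ H := Real.binEntropy_strictMonoOn.monotoneOn
    ⟨h0.le, by norm_num; linarith⟩ ⟨hρ0.le, by norm_num; linarith⟩ hdle
  have hL := LL_nonneg h0 h1.le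
  have hLρ := LL_nonneg hρ0 hρ1
  -- choice of slack
  set δ := min (ε / 8) ((Real.log 2 - h) / 4) with hδ
  have hδ0 : 0 < δ := lt_min (by linarith) (by linarith)
  have hδ1 : δ ≤ ε / 8 := min_le_left _ _
  have hδ2 : δ ≤ (Real.log 2 - h) / 4 := min_le_right _ _
  set η := min (ε / 4) (δ / (LL ρ + 3 * LL d + 1)) with hηdef
  have hden : 0 < LL ρ + 3 * LL d + 1 := by linarith
  have hη : 0 < η := lt_min (by linarith) (by positivity)
  have hη1 : η ≤ ε / 4 := min_le_left _ _
  have hη2 : (LL ρ + 3 * LL d) * η ≤ δ := by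
    have : η * (LL ρ + 3 * LL d + 1) ≤ δ := (le_div_iff₀ hden).1 (min_le_right _ _)
    nlinarith
  have hη3 : LL d * η ≤ δ := by nlinarith [mul_nonneg hLρ hη.le, mul_nonneg hL hη.le]
  -- eventual conditions
  have t0 : Filter.Tendsto (fun n : ℕ => (n : ℝ)) Filter.atTop Filter.atTop :=
    tendsto_natCast_atTop_atTop
  have t1 : Filter.Tendsto (fun n : ℕ => Real.exp (n * δ)) Filter.atTop Filter.atTop :=
    Real.tendsto_exp_atTop.comp (t0.atTop_mul_const hδ0)
  have t2 : Filter.Tendsto (fun n : ℕ => Real.exp (-(Real.exp (n * δ) / 8)))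
      Filter.atTop (nhds 0) :=
    Real.tendsto_exp_neg_atTop_nhds_zero.comp (t1.atTop_div_const (by norm_num))
  have t3 : Filter.Tendsto (fun n : ℕ => 5 / (4 * (n : ℝ) * η ^ 2)) Filter.atTop (nhds 0) := by
    apply Filter.Tendsto.const_div_atTop
    apply Filter.Tendsto.atTop_mul_const (by positivity)
    exact t0.const_mul_atTop (by norm_num)
  obtain ⟨n, ⟨⟨⟨c1, c2⟩, c3⟩, c4⟩⟩ := (((t1.eventually_ge_atTop 4).and
    (t2.eventually_le_const (by linarith : (0 : ℝ) < ε / 4))).and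
    (t3.eventually_le_const (by linarith : (0 : ℝ) < ε / 4))).and
    (Filter.eventually_gt_atTop 0) |>.exists
  have hn' : (0 : ℝ) < n := by exact_mod_cast c4
  set EK := Real.exp (n * (Real.log 2 - h - 2 * δ)) with hEK
  set Em := Real.exp (n * (H - h + 4 * δ)) with hEm
  have hEK1 : 1 ≤ EK := Real.one_le_exp (mul_nonneg hn'.le (by linarith))
  have hEm1 : 1 ≤ Em := Real.one_le_exp (mul_nonneg hn'.le (by linarith))
  set K := ⌊EK⌋₊ with hK
  set m := ⌈Em⌉₊ with hm
  have hKle : (K : ℝ) ≤ EK := Nat.floor_le (by linarith)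
  have hK1 : 1 ≤ K := Nat.le_floor (by simpa using hEK1)
  have hK1' : (1 : ℝ) ≤ K := by exact_mod_cast hK1
  have hKge : EK / 2 ≤ K := by
    have := Nat.lt_floor_add_one EK
    rw [← hK] at this
    linarith
  have hmge : Em ≤ m := Nat.le_ceil _
  have hmle : (m : ℝ) ≤ 2 * Em := by
    have := Nat.ceil_lt_add_one (by linarith : 0 ≤ Em)
    rw [← hm] at this
    linarith
  have hm' : (0 : ℝ) < m := by linarith
  have hmpos : 0 < m := by exact_mod_cast hm'
  have h2 : ((1 : ℝ) / 2) ^ n = Real.exp (-(n * Real.log 2)) := by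
    rw [← mul_neg, Real.exp_nat_mul, Real.exp_neg, Real.exp_log (by norm_num)]; norm_num
  have hKcond : 4 * K * ((1 / 2) ^ n * Real.exp (n * (h + LL d * η))) ≤ 1 := by
    rw [h2, ← Real.exp_add]
    calc _ ≤ 4 * EK * Real.exp (-(n * Real.log 2) + n * (h + LL d * η)) := by gcongr
      _ = 4 * Real.exp (n * (LL d * η - 2 * δ)) := by
        rw [hEK, mul_assoc, ← Real.exp_add]; congr 2; ring
      _ ≤ 4 * Real.exp (-(n * δ)) := by
        gcongr
        nlinarith
      _ ≤ 1 := by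
        rw [Real.exp_neg, ← div_eq_mul_inv, div_le_one (Real.exp_pos _)]; exact c1
  obtain ⟨bs, hbs⟩ := codebook h0 h1.le hρ00 hρ01 hρ0 hρ1 hconv hη c4 K m hKcond
  have hexp : Real.exp (n * δ) / 8 ≤ K * tau d ρ η n / 2 * m := by
    rw [tau_eq, ← hH, ← hh]
    calc Real.exp (n * δ) / 8 ≤ Real.exp (n * (2 * δ - (LL ρ + 2 * LL d) * η)) / 8 := by
          gcongr
          nlinarith [mul_nonneg hL hη.le]
      _ = EK / 2 * ((1 / 2) * Real.exp (-(n * (Real.log 2 + H - 2 * h +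
            (LL ρ + 2 * LL d) * η)))) / 2 * Em := by
          rw [show (n : ℝ) * (2 * δ - (LL ρ + 2 * LL d) * η) =
            n * (Real.log 2 - h - 2 * δ) + (-(n * (Real.log 2 + H - 2 * h +
            (LL ρ + 2 * LL d) * η))) + n * (H - h + 4 * δ) by ring, Real.exp_add, Real.exp_add]
          ring
      _ ≤ _ := by gcongr
  obtain ⟨f, g1, g2, φ1, φ2, r1, r2, r3, r4⟩ :=
    code_of_book h0.le hη.le hρ0 hρ1 c4 hmpos bs hbs
  have hβ : Real.exp (-(K * tau d ρ η n / 2 * m)) + 5 / (4 * n * η ^ 2) ≤ ε / 2 := by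
    have : Real.exp (-(K * tau d ρ η n / 2 * m)) ≤ Real.exp (-(Real.exp (n * δ) / 8)) :=
      Real.exp_le_exp.2 (by linarith)
    linarith
  refine ⟨n, m, f, g1, g2, φ1, φ2, c4, ?_, by linarith, by linarith, by linarith, by linarith⟩
  rw [div_le_iff₀ hn']
  have : (m : ℝ) ≤ Real.exp (n * (H - h + 5 * δ)) := by
    calc (m : ℝ) ≤ 2 * Em := hmle
      _ ≤ Real.exp (n * δ) * Em := by gcongr; linarith
      _ = _ := by rw [hEm, ← Real.exp_add]; congr 1; ring
  calc Real.log m ≤ n * (H - h + 5 * δ) := (Real.log_le_iff_le_exp hm').2 this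
    _ ≤ n * (H - h + ε) := mul_le_mul_of_nonneg_left (by linarith) hn'.le
    _ = _ := mul_comm _ _

lemma cr_achiev {d ρ : ℝ} (hρ0 : 0 < ρ) (hρ1 : ρ ≤ 1 / 2)
    (hd : d ∈ Set.Icc (0 : ℝ) (1 / 2 - Real.sqrt (1 - 2 * ρ) / 2)) :
    CRAchievable (dsbs ρ) (dHam (α := Bool)) (dHam (α := Bool)) d d (binEnt ρ - binEnt d) := by
  intro ε hε
  have hs0 : 0 ≤ Real.sqrt (1 - 2 * ρ) := Real.sqrt_nonneg _
  have hs1 : Real.sqrt (1 - 2 * ρ) < 1 := by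
    rw [Real.sqrt_lt' one_pos]; linarith
  set ds := 1 / 2 - Real.sqrt (1 - 2 * ρ) / 2 with hds
  have hds0 : 0 < ds := by rw [hds]; linarith
  have hl2 : 0 < Real.log 2 := Real.log_pos (by norm_num)
  have hcont : Continuous binEnt := by
    rw [show binEnt = fun x => Real.binEntropy x / Real.log 2 from funext binEnt_eq]
    exact Real.binEntropy_continuous.div_const _
  have hev : ∀ᶠ x in nhds d, x < d + ε / 2 ∧ binEnt d - ε / 2 < binEnt x :=
    (eventually_lt_nhds (by linarith)).and
      (hcont.continuousAt.eventually (lt_mem_nhds (by linarith)))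
  have hcl : d ∈ closure (Set.Ioo 0 ds) := by rw [closure_Ioo hds0.ne]; exact hd
  obtain ⟨d', ⟨h3, h4⟩, h1, h2⟩ := ((mem_closure_iff_frequently.1 hcl).and_eventually hev).exists
  have hsqrt : Real.sqrt (1 - 2 * ρ) ≤ 1 - 2 * d' := by rw [hds] at h4; linarith
  have hdρ : 1 - 2 * ρ ≤ (1 - 2 * d') ^ 2 := by
    rw [← Real.sq_sqrt (by linarith : 0 ≤ 1 - 2 * ρ)]
    gcongr
  obtain ⟨n, m, f, g1, g2, φ1, φ2, hn, r0, r1, r2, r3, r4⟩ :=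
    achiev h3 (by rw [hds] at h4; linarith) hρ0 hρ1 hdρ
      (ε := min (ε / 2) (ε / 2 * Real.log 2)) (lt_min (by linarith) (by positivity))
  have m1 := min_le_left (ε / 2) (ε / 2 * Real.log 2)
  have m2 := min_le_right (ε / 2) (ε / 2 * Real.log 2)
  refine ⟨n, m, f, g1, g2, φ1, φ2, hn, ?_, by linarith, by linarith,
    by have h := r3.trans (by linarith : _ ≤ ε); convert h; rfl,
    by have h := r4.trans (by linarith : _ ≤ ε); convert h; rfl⟩
  have : Real.logb 2 m / n = (Real.log m / n) / Real.log 2 := by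
    unfold Real.logb; ring
  rw [this]
  have : (Real.log m / n) / Real.log 2 ≤ binEnt ρ - binEnt d' + ε / 2 := by
    rw [div_le_iff₀ hl2, binEnt_eq, binEnt_eq]
    have : (Real.binEntropy ρ / Real.log 2 - Real.binEntropy d' / Real.log 2 + ε / 2) * Real.log 2
      = Real.binEntropy ρ - Real.binEntropy d' + ε / 2 * Real.log 2 := by field_simp
    rw [this]; linarith
  linarith

lemma rd_of_cr {q : Bool × Bool → ℝ} {d r : ℝ}
    (h : CRAchievable q (dHam (α := Bool)) (dHam (α := Bool)) d d r) :
    RDAchievable q (dHam (α := Bool)) (dHam (α := Bool)) d d r := by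
  intro ε hε
  obtain ⟨n, m, f, g1, g2, φ1, φ2, hn, r0, r1, r2, r3, r4⟩ := h ε hε
  exact ⟨n, m, f, g1, g2, hn, r0, r1, r2⟩

lemma rd_lower {d ρ r : ℝ} (hρ0 : 0 < ρ) (hρ1 : ρ ≤ 1 / 2) (hd0 : 0 ≤ d) (hd1 : d < 1 / 2)
    (h : RDAchievable (dsbs ρ) (dHam (α := Bool)) (dHam (α := Bool)) d d r) :
    binEnt ρ - binEnt d ≤ r := by
  have hl2 : 0 < Real.log 2 := Real.log_pos (by norm_num)
  have hcont : Continuous binEnt := by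
    rw [show binEnt = fun x => Real.binEntropy x / Real.log 2 from funext binEnt_eq]
    exact Real.binEntropy_continuous.div_const _
  have key : ∀ ε, 0 < ε → ε ≤ 1 / 2 - d → binEnt ρ - binEnt (d + ε) ≤ r + ε := by
    intro ε hε hε2
    obtain ⟨n, m, f, g1, g2, hn, r0, r1, r2⟩ := h ε hε
    have hn' : (0 : ℝ) < n := by exact_mod_cast hn
    have c := converse hρ0 hρ1 (by linarith : 0 < d + ε) (by linarith) hn f g1 r1
    refine le_trans ?_ r0
    rw [binEnt_eq, binEnt_eq, le_div_iff₀ hn', Real.logb, le_div_iff₀ hl2]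
    refine le_trans (le_of_eq ?_) c
    field_simp
  have t : Filter.Tendsto (fun ε => r + ε - (binEnt ρ - binEnt (d + ε)))
      (nhdsWithin 0 (Set.Ioi 0)) (nhds (r + 0 - (binEnt ρ - binEnt (d + 0)))) := by
    apply Filter.Tendsto.mono_left _ nhdsWithin_le_nhds
    apply Continuous.tendsto
    fun_prop
  have := ge_of_tendsto t (b := 0) (by
    filter_upwards [Ioc_mem_nhdsGT (by linarith : (0 : ℝ) < 1 / 2 - d)] with ε hε
    have := key ε hε.1 hε.2
    linarith)
  simp only [add_zero] at this
  linarith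

lemma cr_zero : CRAchievable (dsbs 0) (dHam (α := Bool)) (dHam (α := Bool)) 0 0 0 := by
  intro ε hε
  have hz : ∀ xy : (Fin 1 → Bool) × (Fin 1 → Bool), xy.1 ≠ xy.2 → iid (dsbs 0) 1 xy = 0 := by
    rintro ⟨x, y⟩ hne
    have : x 0 ≠ y 0 := by
      intro h; apply hne; funext i; rw [Subsingleton.elim i 0]; exact h
    simp [iid, dsbs, this]
  have hd : ∀ x : Fin 1 → Bool, ∑ i, dHam (x i) (x i) = 0 := by intro x; simp [dHam]
  refine ⟨1, 1, fun _ => 0, fun t => t.2, fun t => t.2, fun t => t.2, fun t => t.2,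
    one_pos, by simp; exact hε.le, ?_, ?_, ?_, ?_⟩
  · unfold Delta1
    rw [Finset.sum_eq_zero]
    · linarith
    · intro xy _
      by_cases h : xy.1 = xy.2
      · simp only [h, hd, mul_zero]
      · rw [hz xy h, zero_mul]
  · unfold Delta2
    rw [Finset.sum_eq_zero]
    · linarith
    · intro xy _
      by_cases h : xy.1 = xy.2
      · simp only [h, hd, mul_zero]
      · rw [hz xy h, zero_mul]
  · rw [Finset.sum_eq_zero]
    · exact hε.le
    · intro xy _
      by_cases h : xy.1 = xy.2
      · rw [if_pos h]
      · rw [hz xy h]; simp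
  · rw [Finset.sum_eq_zero]
    · exact hε.le
    · intro xy _
      by_cases h : xy.1 = xy.2
      · rw [if_pos h.symm]
      · rw [hz xy h]; simp

lemma inf_eq {S : Set ℝ} {v : ℝ} (hv : v ∈ S) (h : ∀ r ∈ S, v ≤ r) : sInf S = v :=
  IsLeast.csInf_eq ⟨hv, h⟩

end TWRAux
open TWR in
/-- Theorem 3, part (i): for the DSBS with Hamming
distortions and `d ∈ [0, d*]` with `d* = 1/2 − (1/2)√(1−2ρ)`,
`R_CR(d,d) = R(d,d) = h(ρ) − h(d)`. -/
theorem dsbs_cr_small_distortion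
    (ρ : ℝ) (hρ : ρ ∈ Set.Icc (0 : ℝ) (1 / 2)) (d : ℝ)
    (hd : d ∈ Set.Icc (0 : ℝ) (1 / 2 - Real.sqrt (1 - 2 * ρ) / 2)) :
    CRRD (dsbs ρ) (dHam (α := Bool)) (dHam (α := Bool)) d d =
      RD (dsbs ρ) (dHam (α := Bool)) (dHam (α := Bool)) d d ∧
    RD (dsbs ρ) (dHam (α := Bool)) (dHam (α := Bool)) d d = binEnt ρ - binEnt d := by
  have hs0 : 0 ≤ Real.sqrt (1 - 2 * ρ) := Real.sqrt_nonneg _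
  have main : (0 ≤ binEnt ρ - binEnt d) ∧
      CRAchievable (dsbs ρ) (dHam (α := Bool)) (dHam (α := Bool)) d d (binEnt ρ - binEnt d) ∧
      ∀ r, 0 ≤ r → RDAchievable (dsbs ρ) (dHam (α := Bool)) (dHam (α := Bool)) d d r →
        binEnt ρ - binEnt d ≤ r := by
    rcases hρ.1.eq_or_lt with h0 | h0
    · subst h0
      have hd0 : d = 0 := by
        have h2 := hd.2
        simp only [mul_zero, sub_zero, Real.sqrt_one] at h2
        exact le_antisymm (by linarith) hd.1
      subst hd0
      simp only [sub_self]
      exact ⟨le_rfl, TWRAux.cr_zero, fun r hr _ => hr⟩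
    · have hd1 : d ≤ 1 / 2 := by linarith [hd.2]
      have hdρ : d ≤ ρ := by
        have h1 : Real.sqrt (1 - 2 * ρ) ≤ 1 - 2 * d := by linarith [hd.2]
        have h2 : 1 - 2 * ρ ≤ (1 - 2 * d) ^ 2 := by
          rw [← Real.sq_sqrt (by linarith [hρ.2] : 0 ≤ 1 - 2 * ρ)]
          gcongr
        nlinarith [hd.1]
      refine ⟨?_, TWRAux.cr_achiev h0 hρ.2 hd, ?_⟩
      · rw [TWRAux.binEnt_eq, TWRAux.binEnt_eq, ← sub_div]
        apply div_nonneg _ (Real.log_pos (by norm_num)).le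
        have := Real.binEntropy_strictMonoOn.monotoneOn
          ⟨hd.1, by norm_num; linarith⟩ ⟨h0.le, by norm_num; linarith [hρ.2]⟩ hdρ
        linarith
      · intro r hr h
        rcases hd1.eq_or_lt with h1 | h1
        · have : ρ = d := le_antisymm (by linarith [hρ.2]) hdρ
          rw [this, sub_self]; exact hr
        · exact TWRAux.rd_lower h0 hρ.2 hd.1 h1 h
  obtain ⟨hv, hcr, hlow⟩ := main
  have e1 : RD (dsbs ρ) (dHam (α := Bool)) (dHam (α := Bool)) d d = binEnt ρ - binEnt d :=
    TWRAux.inf_eq ⟨hv, TWRAux.rd_of_cr hcr⟩ (fun r hr => hlow r hr.1 hr.2)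
  have e2 : CRRD (dsbs ρ) (dHam (α := Bool)) (dHam (α := Bool)) d d = binEnt ρ - binEnt d :=
    TWRAux.inf_eq ⟨hv, hcr⟩ (fun r hr => hlow r hr.1 (TWRAux.rd_of_cr hr.2))
  exact ⟨e2.trans e1.symm, e1⟩
end
end

section
/- For the doubly symmetric binary source with crossover probability ρ ∈ [0,1/2] and Hamming distortions, at the threshold d* = 1/2 − (1/2)√(1−2ρ) the common-reconstruction rate-distortion function satisfies R_CR(d*,d*) = K(X;Y) − R_X(d*) = K(X;Y) − R_Y(d*), where K(X;Y) is Wyner's common information and R_X, R_Y are the marginal rate-distortion functions. -/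
open scoped BigOperators Classical

noncomputable section

namespace TWR

/-- Gibbs inequality. -/
lemma gibbs {α : Type} [Fintype α] (p q : α → ℝ) (hp : ∀ a, 0 ≤ p a) (hq : ∀ a, 0 ≤ q a)
    (hsum : ∑ a, q a ≤ ∑ a, p a) (h0 : ∀ a, q a = 0 → p a = 0) :
    ∑ a, p a * Real.log (q a) ≤ ∑ a, p a * Real.log (p a) := by
  have key : ∀ a, p a * Real.log (q a) ≤ p a * Real.log (p a) + (q a - p a) := by
    intro a
    rcases (hp a).eq_or_lt with h | h
    · rw [← h]; simp [hq a]
    · have hqa : 0 < q a := lt_of_le_of_ne (hq a) (fun h' => h.ne' (h0 a h'.symm))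
      have := Real.log_le_sub_one_of_pos (div_pos hqa h)
      rw [Real.log_div hqa.ne' h.ne'] at this
      have h2 := mul_le_mul_of_nonneg_left this h.le
      have h3 : p a * (q a / p a - 1) = q a - p a := by field_simp
      nlinarith
  calc _ ≤ ∑ a, (p a * Real.log (p a) + (q a - p a)) := Finset.sum_le_sum fun a _ => key a
    _ = ∑ a, p a * Real.log (p a) + (∑ a, q a - ∑ a, p a) := by
      rw [Finset.sum_add_distrib, Finset.sum_sub_distrib]
    _ ≤ _ := by linarith

lemma H2_eq {α : Type} [Fintype α] (p : α → ℝ) :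
    H2 p = -(∑ a, p a * Real.log (p a)) / Real.log 2 := by
  unfold H2 Real.logb
  rw [neg_div, Finset.sum_div]
  congr 1
  exact Finset.sum_congr rfl fun a _ => by ring

lemma sum_prod_pi {ι α : Type} [Fintype ι] [DecidableEq ι] [Fintype α] (F : ι → α → ℝ) :
    ∑ s : ι → α, ∏ i, F i (s i) = ∏ i, ∑ a, F i a := by
  rw [Finset.prod_univ_sum, Fintype.piFinset_univ]

lemma iid_sum_one {α : Type} [Fintype α] (q : α → ℝ) (h1 : ∑ a, q a = 1) (n : ℕ) :
    ∑ s : Fin n → α, ∏ i, q (s i) = 1 := by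
  rw [sum_prod_pi (fun _ => q)]; simp [h1]

lemma iid_lin {α : Type} [Fintype α] (q φ : α → ℝ) (h1 : ∑ a, q a = 1) (n : ℕ) :
    ∑ s : Fin n → α, (∏ i, q (s i)) * ∑ i, φ (s i) = n * ∑ a, q a * φ a := by
  have key : ∀ i : Fin n, ∑ s : Fin n → α, (∏ j, q (s j)) * φ (s i) = ∑ a, q a * φ a := by
    intro i
    have : ∀ s : Fin n → α, (∏ j, q (s j)) * φ (s i) =
        ∏ j, (q (s j) * if j = i then φ (s j) else 1) := by
      intro s
      rw [Finset.prod_mul_distrib]; simp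
    simp_rw [this]
    rw [sum_prod_pi (fun j a => q a * if j = i then φ a else 1)]
    rw [Finset.prod_eq_single i]
    · simp
    · intro j _ hj; simp [hj, h1]
    · simp
  simp_rw [Finset.mul_sum]
  rw [Finset.sum_comm]
  simp_rw [key]
  simp [Finset.mul_sum]

/-- Sum over pairs of sequences as sum over sequences of pairs. -/
lemma sum_pair_seq {α β : Type} [Fintype α] [Fintype β] (n : ℕ)
    (F : (Fin n → α) × (Fin n → β) → ℝ) :
    ∑ xy, F xy = ∑ s : Fin n → α × β, F (fun i => (s i).1, fun i => (s i).2) := by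
  exact (Equiv.sum_comp (Equiv.arrowProdEquivProdArrow (Fin n) (fun _ => α) (fun _ => β)) F).symm

lemma dsbs_nonneg {ρ : ℝ} (h0 : 0 ≤ ρ) (h1 : ρ ≤ 1) (t : Bool × Bool) : 0 ≤ dsbs ρ t := by
  unfold dsbs; split_ifs <;> linarith

lemma dsbs_sum (ρ : ℝ) : ∑ t, dsbs ρ t = 1 := by
  simp [Fintype.sum_prod_type, dsbs]; ring

lemma iid_nonneg {ρ : ℝ} (h0 : 0 ≤ ρ) (h1 : ρ ≤ 1) (n : ℕ) (xy) : 0 ≤ iid (dsbs ρ) n xy :=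
  Finset.prod_nonneg fun _ _ => dsbs_nonneg h0 h1 _

lemma iid_dsbs_sum (ρ : ℝ) (n : ℕ) : ∑ xy, iid (dsbs ρ) n xy = 1 := by
  rw [sum_pair_seq]; exact iid_sum_one (dsbs ρ) (dsbs_sum ρ) n

lemma binEntropy_eq (a : ℝ) :
    Real.binEntropy a = -(a * Real.log a) - (1 - a) * Real.log (1 - a) := by
  unfold Real.binEntropy; rw [Real.log_inv, Real.log_inv]; ring

lemma mul_log_div_two (x : ℝ) : x / 2 * Real.log (x / 2) = x / 2 * (Real.log x - Real.log 2) := by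
  rcases eq_or_ne x 0 with h | h
  · simp [h]
  · rw [Real.log_div h two_ne_zero]

lemma dsbs_log (ρ : ℝ) : ∑ t, dsbs ρ t * Real.log (dsbs ρ t) =
    - Real.binEntropy ρ - Real.log 2 := by
  simp only [Fintype.sum_prod_type, dsbs, Fintype.sum_bool]
  simp only [if_true, Bool.true_eq_false, Bool.false_eq_true, if_false, mul_log_div_two]
  rw [binEntropy_eq]; ring

/-- BSC transition. -/
def bsc (a : ℝ) (x w : Bool) : ℝ := if x = w then 1 - a else a

lemma bsc_pos {a : ℝ} (h0 : 0 < a) (h1 : a < 1) (x w : Bool) : 0 < bsc a x w := by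
  unfold bsc; split_ifs <;> linarith

lemma bsc_sum (a : ℝ) (w : Bool) : ∑ x, bsc a x w = 1 := by
  cases w <;> simp [bsc]

lemma log_bsc (a : ℝ) (x w : Bool) :
    Real.log (bsc a x w) = Real.log (1 - a) - (Real.log (1 - a) - Real.log a) * dHam x w := by
  unfold bsc dHam; split_ifs <;> ring

/-- Converse for a single code. -/
lemma converse_code {ρ a : ℝ} (hρ0 : 0 < ρ) (hρ1 : ρ < 1) (ha0 : 0 < a) (ha1 : a < 1)
    {n m : ℕ} (hn : 0 < n)
    (f : (Fin n → Bool) × (Fin n → Bool) → Fin m) (g1 : Fin m × (Fin n → Bool) → Fin n → Bool) :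
    n * (Real.binEntropy ρ + Real.log (1 - a)
      - (Real.log (1 - a) - Real.log a) * Delta1 (dsbs ρ) dHam f g1) ≤ Real.log m := by
  have hm : 0 < m := (f (fun _ => true, fun _ => true)).pos
  have hmR : (0 : ℝ) < m := by exact_mod_cast hm
  have hnR : (n : ℝ) ≠ 0 := by positivity
  set P : (Fin n → Bool) × (Fin n → Bool) → ℝ := iid (dsbs ρ) n with hP
  have hP0 : ∀ xy, 0 ≤ P xy := iid_nonneg hρ0.le hρ1.le n
  have hP1 : ∑ xy, P xy = 1 := iid_dsbs_sum ρ n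
  set Q : (Fin n → Bool) × (Fin n → Bool) → ℝ := fun xy =>
    (2 : ℝ)⁻¹ ^ n * ((m : ℝ)⁻¹ * ∑ j : Fin m, ∏ i, bsc a (xy.1 i) (g1 (j, xy.2) i)) with hQ
  have hb : ∀ (xy : (Fin n → Bool) × (Fin n → Bool)) (j : Fin m),
      0 < ∏ i, bsc a (xy.1 i) (g1 (j, xy.2) i) :=
    fun xy j => Finset.prod_pos fun i _ => bsc_pos ha0 ha1 _ _
  have hQge : ∀ xy, (2 : ℝ)⁻¹ ^ n * ((m : ℝ)⁻¹ * ∏ i, bsc a (xy.1 i) (g1 (f xy, xy.2) i)) ≤ Q xy := by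
    intro xy
    simp only [hQ]
    gcongr
    exact Finset.single_le_sum (f := fun j => ∏ i, bsc a (xy.1 i) (g1 (j, xy.2) i))
      (fun j _ => (hb xy j).le) (Finset.mem_univ (f xy))
  have hQpos : ∀ xy, 0 < Q xy := fun xy =>
    lt_of_lt_of_le (mul_pos (by positivity) (mul_pos (by positivity) (hb xy _))) (hQge xy)
  have hQ1 : ∑ xy, Q xy = 1 := by
    rw [Fintype.sum_prod_type, Finset.sum_comm]
    have : ∀ y : Fin n → Bool, ∑ x : Fin n → Bool, Q (x, y) = (2 : ℝ)⁻¹ ^ n := by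
      intro y
      simp only [hQ]
      rw [← Finset.mul_sum, ← Finset.mul_sum, Finset.sum_comm]
      have : ∀ j : Fin m, ∑ x : Fin n → Bool, ∏ i, bsc a (x i) (g1 (j, y) i) = 1 := by
        intro j
        rw [sum_prod_pi (fun i x => bsc a x (g1 (j, y) i))]
        simp only [bsc_sum, Finset.prod_const_one]
      simp only [this]
      simp [hmR.ne']
    simp only [this]
    simp
  have hg := gibbs P Q hP0 (fun xy => (hQpos xy).le) (by rw [hP1, hQ1])
    (fun xy h => absurd h (hQpos xy).ne')
  have hPP : ∑ xy, P xy * Real.log (P xy) = n * (- Real.binEntropy ρ - Real.log 2) := by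
    rw [← dsbs_log, ← iid_lin (dsbs ρ) (fun t => Real.log (dsbs ρ t)) (dsbs_sum ρ) n, sum_pair_seq]
    refine Finset.sum_congr rfl fun s _ => ?_
    simp only [hP, iid]
    rw [Real.log_prod]
    intro i _
    unfold dsbs; split_ifs <;> linarith
  have hlogQ : ∀ xy, -(n * Real.log 2) - Real.log m + n * Real.log (1 - a)
      - (Real.log (1 - a) - Real.log a) * ∑ i, dHam (xy.1 i) (g1 (f xy, xy.2) i)
        ≤ Real.log (Q xy) := by
    intro xy
    have h := Real.log_le_log
      (mul_pos (by positivity) (mul_pos (by positivity) (hb xy (f xy)))) (hQge xy)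
    rw [Real.log_mul (by positivity) (mul_pos (by positivity) (hb xy (f xy))).ne',
      Real.log_mul (by positivity) (hb xy (f xy)).ne', Real.log_pow, Real.log_inv, Real.log_inv,
      Real.log_prod (fun i _ => (bsc_pos ha0 ha1 _ _).ne')] at h
    simp only [log_bsc, Finset.sum_sub_distrib, ← Finset.mul_sum] at h
    simp at h
    linarith
  have hPQ : -(n * Real.log 2) - Real.log m + n * Real.log (1 - a)
      - (Real.log (1 - a) - Real.log a) * (n * Delta1 (dsbs ρ) dHam f g1)
        ≤ ∑ xy, P xy * Real.log (Q xy) := by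
    refine le_trans (le_of_eq ?_)
      (Finset.sum_le_sum fun xy _ => mul_le_mul_of_nonneg_left (hlogQ xy) (hP0 xy))
    have : n * Delta1 (dsbs ρ) dHam f g1 =
        ∑ xy, P xy * ∑ i, dHam (xy.1 i) (g1 (f xy, xy.2) i) := by
      unfold Delta1
      rw [Finset.mul_sum]
      refine Finset.sum_congr rfl fun xy _ => ?_
      field_simp
      rw [hP, mul_comm]
    rw [this, Finset.mul_sum]
    simp only [mul_sub (P _), Finset.sum_sub_distrib]
    simp only [mul_add (P _), mul_sub (P _), Finset.sum_sub_distrib, Finset.sum_add_distrib,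
      ← Finset.sum_mul, hP1]
    simp only [one_mul]
    congr 1
    exact Finset.sum_congr rfl fun xy _ => by ring
  nlinarith

lemma converse {ρ a : ℝ} (hρ0 : 0 < ρ) (hρ1 : ρ < 1) (ha0 : 0 < a) (ha1 : a ≤ 1 / 2) {r : ℝ}
    (h : CRAchievable (dsbs ρ) (dHam (α := Bool)) (dHam (α := Bool)) a a r) :
    (Real.binEntropy ρ - Real.binEntropy a) / Real.log 2 ≤ r := by
  have hl2 : 0 < Real.log 2 := Real.log_pos (by norm_num)
  set c := Real.log (1 - a) - Real.log a with hc
  have hc0 : 0 ≤ c := sub_nonneg.2 (Real.log_le_log ha0 (by linarith))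
  refine le_of_forall_pos_le_add fun η hη => ?_
  have hpos : 0 < Real.log 2 + c := by linarith
  obtain ⟨n, m, f, g1, g2, φ1, φ2, hn, hr, hd, -⟩ :=
    h (η * Real.log 2 / (Real.log 2 + c)) (by positivity)
  set ε := η * Real.log 2 / (Real.log 2 + c) with hε
  have hcv := converse_code hρ0 hρ1 ha0 (by linarith) hn f g1
  rw [← hc] at hcv
  have hnR : (0 : ℝ) < n := by exact_mod_cast hn
  have h1 : Real.log m ≤ n * Real.log 2 * (r + ε) := by
    rw [Real.logb, div_div, div_le_iff₀ (by positivity)] at hr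
    linarith
  have h2 : n * (Real.binEntropy ρ + Real.log (1 - a) - c * (a + ε)) ≤ n * (Real.log 2 * (r + ε)) := by
    have := mul_le_mul_of_nonneg_left hd hc0
    nlinarith
  have h3 := le_of_mul_le_mul_left h2 hnR
  rw [div_le_iff₀ hl2]
  have h4 : ε * (Real.log 2 + c) = η * Real.log 2 := by rw [hε]; field_simp
  have h5 := binEntropy_eq a
  rw [hc] at *
  nlinarith

end TWR

namespace TWR

/-- Exponential law of large numbers for finite alphabets. -/
lemma lln {α : Type} [Fintype α] (q ψ : α → ℝ) (hq : ∀ a, 0 ≤ q a) (h1 : ∑ a, q a = 1)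
    (hψ : ∑ a, q a * ψ a < 0) :
    ∃ κ : ℝ, 0 ≤ κ ∧ κ < 1 ∧ ∀ n : ℕ,
      ∑ s : Fin n → α, (if 0 ≤ ∑ i, ψ (s i) then ∏ i, q (s i) else 0) ≤ κ ^ n := by
  set K : ℝ := 1 + ∑ a, |ψ a| with hK
  have hKpos : 1 ≤ K := by
    have : 0 ≤ ∑ a, |ψ a| := Finset.sum_nonneg fun a _ => abs_nonneg _
    linarith
  have hψK : ∀ a, |ψ a| ≤ K := fun a => by
    have := Finset.single_le_sum (f := fun a => |ψ a|) (fun a _ => abs_nonneg _) (Finset.mem_univ a)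
    linarith
  set μ := -∑ a, q a * ψ a with hμ
  have hμ0 : 0 < μ := by linarith
  have hμK : μ ≤ K := by
    have : ∑ a, q a * (-ψ a) ≤ ∑ a, q a * K :=
      Finset.sum_le_sum fun a _ => mul_le_mul_of_nonneg_left
        ((neg_le_abs _).trans (hψK a)) (hq a)
    rw [← Finset.sum_mul, h1] at this
    simp only [mul_neg, Finset.sum_neg_distrib] at this
    linarith
  set t := μ / (2 * K ^ 2) with ht
  have ht0 : 0 < t := by positivity
  have htK : t * K ≤ 1 := by
    rw [ht]; rw [div_mul_eq_mul_div, div_le_one (by positivity)]; nlinarith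
  refine ⟨∑ a, q a * Real.exp (t * ψ a), Finset.sum_nonneg fun a _ =>
    mul_nonneg (hq a) (Real.exp_pos _).le, ?_, fun n => ?_⟩
  · have hb : ∀ a, Real.exp (t * ψ a) ≤ 1 + t * ψ a + t ^ 2 * K ^ 2 := by
      intro a
      have habs : |t * ψ a| ≤ 1 := by
        rw [abs_mul, abs_of_pos ht0]
        exact (mul_le_mul_of_nonneg_left (hψK a) ht0.le).trans htK
      have h := Real.abs_exp_sub_one_sub_id_le habs
      have h2 := (abs_le.1 h).2
      have h3 : (t * ψ a) ^ 2 ≤ t ^ 2 * K ^ 2 := by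
        rw [mul_pow]
        have : ψ a ^ 2 ≤ K ^ 2 := sq_le_sq' (abs_le.1 (hψK a)).1 (abs_le.1 (hψK a)).2
        exact mul_le_mul_of_nonneg_left this (by positivity)
      linarith
    have hs : ∑ a, q a * Real.exp (t * ψ a) ≤ ∑ a, q a * (1 + t * ψ a + t ^ 2 * K ^ 2) :=
      Finset.sum_le_sum fun a _ => mul_le_mul_of_nonneg_left (hb a) (hq a)
    have he : ∑ a, q a * (1 + t * ψ a + t ^ 2 * K ^ 2) = 1 - t * μ + t ^ 2 * K ^ 2 := by
      simp only [mul_add, Finset.sum_add_distrib, ← Finset.sum_mul, h1, mul_one, one_mul]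
      rw [hμ]
      simp only [mul_left_comm (q _) t, ← Finset.mul_sum]
      ring
    have hf : t ^ 2 * K ^ 2 = t * μ / 2 := by
      rw [ht]; field_simp
    have : 0 < t * μ := by positivity
    linarith
  · rw [Fintype.sum_pow]
    refine Finset.sum_le_sum fun s _ => ?_
    have hp : 0 ≤ ∏ i, q (s i) := Finset.prod_nonneg fun i _ => hq _
    rw [Finset.prod_mul_distrib, ← Real.exp_sum, ← Finset.mul_sum]
    split_ifs with h
    · exact le_mul_of_one_le_right hp (Real.one_le_exp (by positivity))
    · exact mul_nonneg hp (Real.exp_pos _).le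

/-- Number of words in a Hamming ball. -/
lemma ball_card {a δ : ℝ} (ha0 : 0 < a) (ha1 : a ≤ 1 / 2) {n : ℕ} (y : Fin n → Bool) :
    ((Finset.univ.filter fun w : Fin n → Bool =>
      ∑ i, dHam (y i) (w i) ≤ (a + δ) * n).card : ℝ) ≤
    Real.exp (n * (Real.binEntropy a + (Real.log (1 - a) - Real.log a) * δ)) := by
  set c := Real.log (1 - a) - Real.log a with hc
  have hc0 : 0 ≤ c := sub_nonneg.2 (Real.log_le_log ha0 (by linarith))
  set S := Finset.univ.filter fun w : Fin n → Bool => ∑ i, dHam (y i) (w i) ≤ (a + δ) * n with hS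
  set E := Real.exp (n * (Real.binEntropy a + c * δ)) with hE
  have hE0 : 0 < E := Real.exp_pos _
  have h1 : ∀ w ∈ S, E⁻¹ ≤ ∏ i, bsc a (w i) (y i) := by
    intro w hw
    have hw' := (Finset.mem_filter.1 hw).2
    have hpos : 0 < ∏ i, bsc a (w i) (y i) :=
      Finset.prod_pos fun i _ => bsc_pos ha0 (by linarith) _ _
    rw [← Real.exp_log hpos, hE, ← Real.exp_neg]
    apply Real.exp_le_exp.2
    rw [Real.log_prod (fun i _ => (bsc_pos ha0 (by linarith) _ _).ne')]
    simp only [log_bsc, Finset.sum_sub_distrib, ← Finset.mul_sum]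
    have hsym : ∑ i, dHam (w i) (y i) = ∑ i, dHam (y i) (w i) :=
      Finset.sum_congr rfl fun i _ => by unfold dHam; simp [eq_comm]
    rw [hsym, binEntropy_eq]
    simp only [Finset.sum_const, Finset.card_univ, Fintype.card_fin, nsmul_eq_mul]
    have := mul_le_mul_of_nonneg_left hw' hc0
    rw [hc] at *
    nlinarith
  have h2 : ∑ w : Fin n → Bool, ∏ i, bsc a (w i) (y i) = 1 := by
    rw [sum_prod_pi (fun i x => bsc a x (y i))]
    simp only [bsc_sum, Finset.prod_const_one]
  have h3 : (S.card : ℝ) * E⁻¹ ≤ 1 := by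
    rw [← h2, ← nsmul_eq_mul, ← Finset.sum_const]
    refine (Finset.sum_le_sum h1).trans ?_
    exact Finset.sum_le_sum_of_subset_of_nonneg (Finset.subset_univ _) fun w _ _ =>
      Finset.prod_nonneg fun i _ => (bsc_pos ha0 (by linarith) _ _).le
  rwa [← div_eq_mul_inv, div_le_one hE0] at h3

/-- average over random functions, one coordinate hits -/
lemma avg_hit {Ω : Type} [Fintype Ω] [DecidableEq Ω] {N : ℕ} [NeZero N] (w : Ω) :
    ∑ c : Ω → Fin N, (if c w = 0 then ((N : ℝ)⁻¹) ^ (Fintype.card Ω) else 0) = (N : ℝ)⁻¹ := by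
  have hN : (N : ℝ) ≠ 0 := by exact_mod_cast NeZero.ne N
  have : ∀ c : Ω → Fin N, (if c w = 0 then ((N : ℝ)⁻¹) ^ (Fintype.card Ω) else 0) =
      ∏ v, ((N : ℝ)⁻¹ * if v = w then (if c v = 0 then 1 else 0) else 1) := by
    intro c
    rw [Finset.prod_mul_distrib]
    simp
  simp_rw [this]
  rw [sum_prod_pi (fun v j => (N : ℝ)⁻¹ * if v = w then (if j = 0 then 1 else 0) else 1)]
  rw [Finset.prod_eq_single w]
  · simp
  · intro v _ hv; simp [hv, hN]
  · simp

lemma avg_miss {Ω : Type} [Fintype Ω] [DecidableEq Ω] {N : ℕ} [NeZero N] (T : Finset Ω) :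
    ∑ c : Ω → Fin N, (if ∀ w ∈ T, c w ≠ 0 then ((N : ℝ)⁻¹) ^ (Fintype.card Ω) else 0) =
      (1 - (N : ℝ)⁻¹) ^ T.card := by
  have hN : (N : ℝ) ≠ 0 := by exact_mod_cast NeZero.ne N
  have : ∀ c : Ω → Fin N,
      (if ∀ w ∈ T, c w ≠ 0 then ((N : ℝ)⁻¹) ^ (Fintype.card Ω) else 0) =
      ∏ v, ((N : ℝ)⁻¹ * if v ∈ T then (if c v = 0 then 0 else 1) else 1) := by
    intro c
    rw [Finset.prod_mul_distrib]
    split_ifs with h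
    · have : ∀ v, (if v ∈ T then (if c v = 0 then (0 : ℝ) else 1) else 1) = 1 := by
        intro v; split_ifs with h1 h2
        · exact absurd h2 (h v h1)
        · rfl
        · rfl
      simp [this]
    · push Not at h
      obtain ⟨w, hw, hc⟩ := h
      rw [Finset.prod_eq_zero (f := fun v => if v ∈ T then (if c v = 0 then (0 : ℝ) else 1) else 1)
        (Finset.mem_univ w) (by simp [hw, hc])]
      simp
  simp_rw [this]
  rw [sum_prod_pi (fun v j => (N : ℝ)⁻¹ * if v ∈ T then (if j = 0 then 0 else 1) else 1)]
  have h2 : ∀ v, (∑ j : Fin N, (N : ℝ)⁻¹ * if v ∈ T then (if j = 0 then 0 else 1) else 1) =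
      if v ∈ T then (1 - (N : ℝ)⁻¹) else 1 := by
    intro v
    split_ifs with hv
    · rw [← Finset.mul_sum]
      have : ∀ j : Fin N, (if j = 0 then (0 : ℝ) else 1) = 1 - if j = 0 then 1 else 0 := by
        intro j; split_ifs <;> simp
      simp_rw [this, Finset.sum_sub_distrib]
      simp [mul_sub, hN]
    · simp [hN]
  simp_rw [h2]
  rw [Finset.prod_ite_mem]
  simp

lemma avg_coll {Ω : Type} [Fintype Ω] [DecidableEq Ω] {m : ℕ} (hm : 0 < m) {w e : Ω}
    (hne : w ≠ e) :
    ∑ M : Ω → Fin m, (if M w = M e then ((m : ℝ)⁻¹) ^ (Fintype.card Ω) else 0) = (m : ℝ)⁻¹ := by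
  have hN : (m : ℝ) ≠ 0 := by exact_mod_cast hm.ne'
  have : ∀ M : Ω → Fin m, (if M w = M e then ((m : ℝ)⁻¹) ^ (Fintype.card Ω) else 0) =
      ∑ j, ∏ v, ((m : ℝ)⁻¹ * ((if v = w then (if M v = j then 1 else 0) else 1) *
        (if v = e then (if M v = j then 1 else 0) else 1))) := by
    intro M
    simp_rw [Finset.prod_mul_distrib]
    simp [eq_comm]
  simp_rw [this]
  rw [Finset.sum_comm]
  have h2 : ∀ j : Fin m, ∑ M : Ω → Fin m, ∏ v, ((m : ℝ)⁻¹ *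
      ((if v = w then (if M v = j then 1 else 0) else 1) *
        (if v = e then (if M v = j then 1 else 0) else 1))) = (m : ℝ)⁻¹ * (m : ℝ)⁻¹ := by
    intro j
    rw [sum_prod_pi (fun v k => (m : ℝ)⁻¹ *
      ((if v = w then (if k = j then 1 else 0) else 1) *
        (if v = e then (if k = j then 1 else 0) else 1)))]
    rw [Finset.prod_eq_mul w e hne]
    · simp [hne, hne.symm]
    · intro v _ hv; simp [hv.1, hv.2, hN]
    · simp
    · simp
  simp_rw [h2]
  simp [hN]

end TWR

namespace TWR

/-- encoder choice -/
def encW {S Ω : Type} [Inhabited Ω] {N : ℕ} [NeZero N] (T : S → Finset Ω) (c : Ω → Fin N) (s : S) : Ω :=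
  if h : ∃ w ∈ T s, c w = 0 then h.choose else default

lemma encW_spec {S Ω : Type} [Inhabited Ω] {N : ℕ} [NeZero N] (T : S → Finset Ω) (c : Ω → Fin N)
    (s : S) (h : ∃ w ∈ T s, c w = 0) : encW T c s ∈ T s ∧ c (encW T c s) = 0 := by
  unfold encW; rw [dif_pos h]; exact h.choose_spec

lemma random_code {S Ω : Type} [Fintype S] [Fintype Ω] [DecidableEq Ω] [Inhabited Ω]
    (P : S → ℝ) (hP : ∀ s, 0 ≤ P s) (T B : S → Finset Ω) (N m : ℕ) [NeZero N] (hm : 0 < m) :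
    ∃ (C : Ω → Prop) (M : Ω → Fin m) (enc : S → Ω),
      ∑ s, (if (enc s ∈ T s ∧ C (enc s) ∧ ∀ w ∈ B s, C w → M w = M (enc s) → w = enc s)
        then 0 else P s) ≤
      ∑ s, P s * ((1 - (N : ℝ)⁻¹) ^ (T s).card + (B s).card * ((N : ℝ)⁻¹ * (m : ℝ)⁻¹)) := by
  have : NeZero m := ⟨hm.ne'⟩
  set α := ((N : ℝ)⁻¹) ^ (Fintype.card Ω) with hα
  set β := ((m : ℝ)⁻¹) ^ (Fintype.card Ω) with hβ
  have hN : (N : ℝ) ≠ 0 := by exact_mod_cast NeZero.ne N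
  have hm' : (m : ℝ) ≠ 0 := by exact_mod_cast hm.ne'
  have hα0 : 0 < α := by
    have : 0 < N := Nat.pos_of_ne_zero (NeZero.ne N)
    positivity
  have hβ0 : 0 < β := by positivity
  have hα1 : ∑ _c : Ω → Fin N, α = 1 := by
    simp [hα, hN]
  have hβ1 : ∑ _M : Ω → Fin m, β = 1 := by
    simp [hβ, hm']
  set bad : (Ω → Fin N) → (Ω → Fin m) → S → ℝ := fun c M s =>
    if (encW T c s ∈ T s ∧ c (encW T c s) = 0 ∧
      ∀ w ∈ B s, c w = 0 → M w = M (encW T c s) → w = encW T c s) then 0 else 1 with hbad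
  have hb : ∀ c M s, bad c M s ≤ (if ∀ w ∈ T s, c w ≠ 0 then 1 else 0) +
      ∑ w ∈ B s, (if c w = 0 then 1 else 0) *
        (if w ≠ encW T c s ∧ M w = M (encW T c s) then (1 : ℝ) else 0) := by
    intro c M s
    have hnn : ∀ w ∈ B s, (0 : ℝ) ≤ (if c w = 0 then 1 else 0) *
        (if w ≠ encW T c s ∧ M w = M (encW T c s) then (1 : ℝ) else 0) := by
      intro w _; split_ifs <;> simp
    simp only [hbad]
    split_ifs with h1 h2 h2
    · exact add_nonneg zero_le_one (Finset.sum_nonneg hnn)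
    · exact add_nonneg le_rfl (Finset.sum_nonneg hnn)
    · linarith [Finset.sum_nonneg hnn]
    · push Not at h2
      have hs := encW_spec T c s h2
      have : ∃ w ∈ B s, c w = 0 ∧ M w = M (encW T c s) ∧ w ≠ encW T c s := by
        by_contra hcon
        push Not at hcon
        exact h1 ⟨hs.1, hs.2, hcon⟩
      obtain ⟨w, hw, hw1, hw2, hw3⟩ := this
      have := Finset.single_le_sum hnn hw
      rw [if_pos hw1, if_pos ⟨hw3, hw2⟩] at this
      linarith
  -- averages
  have hM : ∀ (c : Ω → Fin N) s w, ∑ M : Ω → Fin m,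
      β * (if w ≠ encW T c s ∧ M w = M (encW T c s) then (1 : ℝ) else 0) ≤ (m : ℝ)⁻¹ := by
    intro c s w
    by_cases h : w = encW T c s
    · simp only [h, ne_eq, not_true_eq_false, false_and, if_false, mul_zero, Finset.sum_const_zero]
      positivity
    · refine le_of_eq ?_
      rw [← avg_coll hm h]
      refine Finset.sum_congr rfl fun M _ => ?_
      simp [h, hβ]
  have havg : ∀ s, ∑ c : Ω → Fin N, ∑ M : Ω → Fin m, α * β * bad c M s ≤
      (1 - (N : ℝ)⁻¹) ^ (T s).card + (B s).card * ((N : ℝ)⁻¹ * (m : ℝ)⁻¹) := by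
    intro s
    have h1 : ∀ c : Ω → Fin N, ∑ M : Ω → Fin m, α * β * bad c M s ≤
        (if ∀ w ∈ T s, c w ≠ 0 then α else 0) +
        ∑ w ∈ B s, (if c w = 0 then α else 0) * (m : ℝ)⁻¹ := by
      intro c
      calc ∑ M : Ω → Fin m, α * β * bad c M s
          ≤ ∑ M : Ω → Fin m, α * β * ((if ∀ w ∈ T s, c w ≠ 0 then 1 else 0) +
            ∑ w ∈ B s, (if c w = 0 then 1 else 0) *
            (if w ≠ encW T c s ∧ M w = M (encW T c s) then (1 : ℝ) else 0)) :=
            Finset.sum_le_sum fun M _ => mul_le_mul_of_nonneg_left (hb c M s) (by positivity)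
        _ = (if ∀ w ∈ T s, c w ≠ 0 then α else 0) * (∑ _M : Ω → Fin m, β) +
            ∑ w ∈ B s, (if c w = 0 then α else 0) * ∑ M : Ω → Fin m,
              β * (if w ≠ encW T c s ∧ M w = M (encW T c s) then (1 : ℝ) else 0) := by
            simp only [mul_add, Finset.sum_add_distrib]
            congr 1
            · rw [Finset.mul_sum]
              refine Finset.sum_congr rfl fun M _ => ?_
              split_ifs <;> simp
            · simp only [Finset.mul_sum]
              rw [Finset.sum_comm]
              refine Finset.sum_congr rfl fun w _ => Finset.sum_congr rfl fun M _ => ?_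
              by_cases hc : c w = 0
              · simp only [hc, if_true]; ring
              · simp only [hc, if_false]; ring
        _ ≤ _ := by
            rw [hβ1, mul_one]
            refine add_le_add le_rfl (Finset.sum_le_sum fun w _ => ?_)
            exact mul_le_mul_of_nonneg_left (hM c s w) (by split_ifs <;> simp [hα0.le])
    refine (Finset.sum_le_sum fun c _ => h1 c).trans (le_of_eq ?_)
    rw [Finset.sum_add_distrib, avg_miss, Finset.sum_comm]
    simp only [← Finset.sum_mul, hα, avg_hit]
    simp only [Finset.sum_const, nsmul_eq_mul]
    ring
  by_contra hcon
  push Not at hcon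
  have hlt : ∀ (c : Ω → Fin N) (M : Ω → Fin m),
      ∑ s, P s * ((1 - (N : ℝ)⁻¹) ^ (T s).card + (B s).card * ((N : ℝ)⁻¹ * (m : ℝ)⁻¹)) <
        ∑ s, P s * bad c M s := by
    intro c M
    refine lt_of_lt_of_eq (hcon (fun w => c w = 0) M (encW T c)) ?_
    refine Finset.sum_congr rfl fun s _ => ?_
    simp only [hbad]
    split_ifs <;> simp
  set R := ∑ s, P s * ((1 - (N : ℝ)⁻¹) ^ (T s).card + (B s).card * ((N : ℝ)⁻¹ * (m : ℝ)⁻¹)) with hR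
  have e1 : R = ∑ c : Ω → Fin N, ∑ M : Ω → Fin m, α * β * R := by
    calc R = (∑ _c : Ω → Fin N, α) * (∑ _M : Ω → Fin m, β) * R := by rw [hα1, hβ1]; ring
      _ = _ := by
        rw [Finset.sum_mul_sum, Finset.sum_mul]
        exact Finset.sum_congr rfl fun c _ => by rw [Finset.sum_mul]
  have e2 : ∑ c : Ω → Fin N, ∑ M : Ω → Fin m, α * β * R <
      ∑ c : Ω → Fin N, ∑ M : Ω → Fin m, α * β * ∑ s, P s * bad c M s :=
    Finset.sum_lt_sum_of_nonempty Finset.univ_nonempty fun c _ =>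
      Finset.sum_lt_sum_of_nonempty Finset.univ_nonempty fun M _ =>
        mul_lt_mul_of_pos_left (hlt c M) (by positivity)
  have e3 : ∑ c : Ω → Fin N, ∑ M : Ω → Fin m, α * β * ∑ s, P s * bad c M s =
      ∑ s, P s * ∑ c : Ω → Fin N, ∑ M : Ω → Fin m, α * β * bad c M s := by
    simp only [Finset.mul_sum]
    have : ∀ c : Ω → Fin N, ∑ M : Ω → Fin m, ∑ s, α * β * (P s * bad c M s) =
      ∑ s, ∑ M : Ω → Fin m, P s * (α * β * bad c M s) := by
      intro c
      rw [Finset.sum_comm]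
      exact Finset.sum_congr rfl fun s _ => Finset.sum_congr rfl fun M _ => by ring
    simp only [this]
    rw [Finset.sum_comm]
  have e4 : ∑ s, P s * ∑ c : Ω → Fin N, ∑ M : Ω → Fin m, α * β * bad c M s ≤ R :=
    Finset.sum_le_sum fun s _ => mul_le_mul_of_nonneg_left (havg s) (hP s)
  linarith

/-- From a good random code to a CR code. -/
lemma cr_code {n m N : ℕ} [NeZero N] (hn : 0 < n) (hm : 0 < m) {ρ d : ℝ} (h0 : 0 ≤ ρ) (h1 : ρ ≤ 1)
    (hd : 0 ≤ d)
    (T : (Fin n → Bool) × (Fin n → Bool) → Finset (Fin n → Bool))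
    (hT1 : ∀ xy, ∀ w ∈ T xy, ∑ i, dHam (xy.1 i) (w i) ≤ d * n)
    (hT2 : ∀ xy, ∀ w ∈ T xy, ∑ i, dHam (xy.2 i) (w i) ≤ d * n)
    (E : ℝ) (hball : ∀ y : Fin n → Bool, ((Finset.univ.filter fun w : Fin n → Bool =>
      ∑ i, dHam (y i) (w i) ≤ d * n).card : ℝ) ≤ E) (η : ℝ)
    (hη : ∑ xy, iid (dsbs ρ) n xy * (1 - (N : ℝ)⁻¹) ^ (T xy).card +
      2 * E * ((N : ℝ)⁻¹ * (m : ℝ)⁻¹) ≤ η) :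
    ∃ (f : (Fin n → Bool) × (Fin n → Bool) → Fin m)
    (g1 : Fin m × (Fin n → Bool) → Fin n → Bool)
    (g2 : Fin m × (Fin n → Bool) → Fin n → Bool)
    (φ1 : Fin m × (Fin n → Bool) → Fin n → Bool)
    (φ2 : Fin m × (Fin n → Bool) → Fin n → Bool),
    Delta1 (dsbs ρ) dHam f g1 ≤ d + η ∧ Delta2 (dsbs ρ) dHam f g2 ≤ d + η ∧
    (∑ xy : (Fin n → Bool) × (Fin n → Bool),
      if φ2 (f xy, xy.1) = g1 (f xy, xy.2) then 0 else iid (dsbs ρ) n xy) ≤ η ∧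
    (∑ xy : (Fin n → Bool) × (Fin n → Bool),
      if φ1 (f xy, xy.2) = g2 (f xy, xy.1) then 0 else iid (dsbs ρ) n xy) ≤ η := by
  set P := iid (dsbs ρ) n with hPdef
  have hP : ∀ xy, 0 ≤ P xy := iid_nonneg h0 h1 n
  have hP1 : ∑ xy, P xy = 1 := iid_dsbs_sum ρ n
  set Bl : (Fin n → Bool) → Finset (Fin n → Bool) := fun y =>
    Finset.univ.filter fun w : Fin n → Bool => ∑ i, dHam (y i) (w i) ≤ d * n with hBl
  obtain ⟨C, M, enc, hE⟩ := random_code P hP T (fun xy => Bl xy.1 ∪ Bl xy.2) N m hm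
  have hbadη : ∑ s, (if (enc s ∈ T s ∧ C (enc s) ∧
      ∀ w ∈ Bl s.1 ∪ Bl s.2, C w → M w = M (enc s) → w = enc s) then 0 else P s) ≤ η := by
    refine hE.trans (le_trans ?_ hη)
    simp only [mul_add, Finset.sum_add_distrib]
    refine add_le_add le_rfl ?_
    have : ∀ xy : (Fin n → Bool) × (Fin n → Bool), P xy * (((Bl xy.1 ∪ Bl xy.2).card : ℝ) *
        ((N : ℝ)⁻¹ * (m : ℝ)⁻¹)) ≤ P xy * (2 * E * ((N : ℝ)⁻¹ * (m : ℝ)⁻¹)) := by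
      intro xy
      refine mul_le_mul_of_nonneg_left (mul_le_mul_of_nonneg_right ?_ (by positivity)) (hP xy)
      have hc : ((Bl xy.1 ∪ Bl xy.2).card : ℝ) ≤ (Bl xy.1).card + (Bl xy.2).card := by
        exact_mod_cast Finset.card_union_le _ _
      linarith [hball xy.1, hball xy.2]
    refine (Finset.sum_le_sum fun xy _ => this xy).trans ?_
    rw [← Finset.sum_mul, hP1, one_mul]
  set dec : Fin m × (Fin n → Bool) → Fin n → Bool := fun jy =>
    if h : ∃ w, w ∈ Bl jy.2 ∧ C w ∧ M w = jy.1 then h.choose else default with hdec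
  set G : (Fin n → Bool) × (Fin n → Bool) → Prop := fun s => (enc s ∈ T s ∧ C (enc s) ∧
      ∀ w ∈ Bl s.1 ∪ Bl s.2, C w → M w = M (enc s) → w = enc s) with hG
  have hdec1 : ∀ s, G s → dec (M (enc s), s.1) = enc s := by
    intro s hs
    have hex : ∃ w, w ∈ Bl s.1 ∧ C w ∧ M w = M (enc s) :=
      ⟨enc s, Finset.mem_filter.2 ⟨Finset.mem_univ _, hT1 s _ hs.1⟩, hs.2.1, rfl⟩
    simp only [hdec]
    rw [dif_pos hex]
    have := hex.choose_spec
    exact hs.2.2 _ (Finset.mem_union_left _ this.1) this.2.1 this.2.2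
  have hdec2 : ∀ s, G s → dec (M (enc s), s.2) = enc s := by
    intro s hs
    have hex : ∃ w, w ∈ Bl s.2 ∧ C w ∧ M w = M (enc s) :=
      ⟨enc s, Finset.mem_filter.2 ⟨Finset.mem_univ _, hT2 s _ hs.1⟩, hs.2.1, rfl⟩
    simp only [hdec]
    rw [dif_pos hex]
    have := hex.choose_spec
    exact hs.2.2 _ (Finset.mem_union_right _ this.1) this.2.1 this.2.2
  have hnR : (0 : ℝ) < n := by exact_mod_cast hn
  have hdist : ∀ (x w : Fin n → Bool), (n : ℝ)⁻¹ * ∑ i, dHam (x i) (w i) ≤ 1 := by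
    intro x w
    rw [inv_mul_le_iff₀ hnR, mul_one]
    calc ∑ i, dHam (x i) (w i) ≤ ∑ _i : Fin n, (1 : ℝ) :=
          Finset.sum_le_sum fun i _ => by unfold dHam; split_ifs <;> simp
      _ = n := by simp
  have hgood : ∀ (p : (Fin n → Bool) × (Fin n → Bool) → ℝ), (∀ s, G s → p s ≤ d) →
      (∀ s, p s ≤ 1) → ∑ s, P s * p s ≤ d + η := by
    intro p hp1 hp2
    have : ∀ s, P s * p s ≤ P s * d + if G s then 0 else P s := by
      intro s
      split_ifs with h
      · linarith [mul_le_mul_of_nonneg_left (hp1 s h) (hP s)]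
      · have := mul_le_mul_of_nonneg_left (hp2 s) (hP s)
        have := mul_nonneg (hP s) hd
        linarith
    refine (Finset.sum_le_sum fun s _ => this s).trans ?_
    rw [Finset.sum_add_distrib, ← Finset.sum_mul, hP1, one_mul]
    exact add_le_add le_rfl hbadη
  have herr : ∀ (p : (Fin n → Bool) × (Fin n → Bool) → Prop) [DecidablePred p], (∀ s, G s → p s) →
      ∑ s, (if p s then 0 else P s) ≤ η := by
    intro p _ hp
    refine (Finset.sum_le_sum fun s _ => ?_).trans hbadη
    split_ifs with h1 h2 h2
    · exact le_rfl
    · exact hP s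
    · exact absurd (hp s h2) h1
    · exact le_rfl
  refine ⟨fun s => M (enc s), dec, dec, dec, dec, ?_, ?_, ?_, ?_⟩
  · refine hgood _ (fun s hs => ?_) (fun s => hdist _ _)
    rw [inv_mul_le_iff₀ hnR, hdec2 s hs, mul_comm]
    exact hT1 s _ hs.1
  · refine hgood _ (fun s hs => ?_) (fun s => hdist _ _)
    rw [inv_mul_le_iff₀ hnR, hdec1 s hs, mul_comm]
    exact hT2 s _ hs.1
  · exact herr (fun s => dec (M (enc s), s.1) = dec (M (enc s), s.2)) fun s hs => by
      rw [hdec1 s hs, hdec2 s hs]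
  · exact herr (fun s => dec (M (enc s), s.2) = dec (M (enc s), s.1)) fun s hs => by
      rw [hdec1 s hs, hdec2 s hs]

end TWR

namespace TWR

/-- The optimal test channel from `(x,y)` to `w`. -/
def tc (a : ℝ) (xy : Bool × Bool) (w : Bool) : ℝ :=
  if xy.1 = xy.2 then
    (if w = xy.1 then (1 - a) ^ 2 / (1 - 2 * a * (1 - a)) else a ^ 2 / (1 - 2 * a * (1 - a)))
  else 1 / 2

lemma den_pos (a : ℝ) : 0 < 1 - 2 * a * (1 - a) := by nlinarith [sq_nonneg (2 * a - 1)]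

lemma tc_sum (a : ℝ) (xy : Bool × Bool) : ∑ w, tc a xy w = 1 := by
  have h := (den_pos a).ne'
  obtain ⟨x, y⟩ := xy
  have key : (1 - a) ^ 2 / (1 - 2 * a * (1 - a)) + a ^ 2 / (1 - 2 * a * (1 - a)) = 1 := by
    rw [← add_div, div_eq_one_iff_eq h]; ring
  cases x <;> cases y <;> simp [tc] <;> linarith

lemma tc_nonneg {a : ℝ} (xy : Bool × Bool) (w : Bool) : 0 ≤ tc a xy w := by
  have h := den_pos a
  unfold tc; split_ifs <;> positivity

lemma tc_pos {a : ℝ} (ha : 0 < a) (ha1 : a < 1) (xy : Bool × Bool) (w : Bool) : 0 < tc a xy w := by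
  have h := den_pos a
  have : 0 < 1 - a := by linarith
  unfold tc; split_ifs <;> positivity

lemma tc_lt_one {a : ℝ} (ha : 0 < a) (ha1 : a < 1) (xy : Bool × Bool) (w : Bool) :
    tc a xy w < 1 := by
  have h := den_pos a
  unfold tc; split_ifs
  · rw [div_lt_one h]; nlinarith
  · rw [div_lt_one h]; nlinarith
  · norm_num

lemma dsbs_tc (a : ℝ) (x y w : Bool) :
    dsbs (2 * a * (1 - a)) (x, y) * tc a (x, y) w = bsc a x w * bsc a y w / 2 := by
  have h := (den_pos a).ne'
  cases x <;> cases y <;> cases w <;> simp [dsbs, tc, bsc] <;> field_simp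

lemma tc_entropy {a : ℝ} (ha : 0 < a) (ha1 : a < 1) :
    ∑ t : (Bool × Bool) × Bool, dsbs (2 * a * (1 - a)) t.1 * tc a t.1 t.2 * Real.log (tc a t.1 t.2)
      = -(2 * Real.binEntropy a - Real.binEntropy (2 * a * (1 - a))) := by
  have h := den_pos a
  have h1 : 0 < 1 - a := by linarith
  have l1 : Real.log ((1 - a) ^ 2 / (1 - 2 * a * (1 - a))) =
      2 * Real.log (1 - a) - Real.log (1 - 2 * a * (1 - a)) := by
    rw [Real.log_div (by positivity) h.ne', Real.log_pow]; norm_num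
  have l2 : Real.log (a ^ 2 / (1 - 2 * a * (1 - a))) =
      2 * Real.log a - Real.log (1 - 2 * a * (1 - a)) := by
    rw [Real.log_div (by positivity) h.ne', Real.log_pow]; norm_num
  have l3 : Real.log (2 * a * (1 - a)) = Real.log 2 + Real.log a + Real.log (1 - a) := by
    rw [Real.log_mul (by positivity) h1.ne', Real.log_mul (by norm_num) ha.ne']
  have l4 : Real.log (1 / 2) = - Real.log 2 := by rw [one_div, Real.log_inv]
  simp only [Fintype.sum_prod_type, Fintype.sum_bool, dsbs_tc]
  simp only [tc, bsc, if_true, Bool.true_eq_false, Bool.false_eq_true, if_false, l1, l2, l4]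
  rw [binEntropy_eq, binEntropy_eq, l3]
  ring

lemma sum_triple {n : ℕ} (F : (Fin n → Bool) × (Fin n → Bool) → (Fin n → Bool) → ℝ) :
    ∑ xy, ∑ w, F xy w = ∑ s : Fin n → (Bool × Bool) × Bool,
      F (fun i => (s i).1.1, fun i => (s i).1.2) (fun i => (s i).2) := by
  rw [sum_pair_seq]
  rw [← sum_pair_seq n (fun xw : (Fin n → Bool × Bool) × (Fin n → Bool) =>
    F (fun i => (xw.1 i).1, fun i => (xw.1 i).2) xw.2)]
  rw [Fintype.sum_prod_type]

/-- The typical set. -/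
def typ (a δ H : ℝ) (n : ℕ) (xy : (Fin n → Bool) × (Fin n → Bool)) : Finset (Fin n → Bool) :=
  Finset.univ.filter fun w => ∑ i, dHam (xy.1 i) (w i) ≤ (a + δ) * n ∧
    ∑ i, dHam (xy.2 i) (w i) ≤ (a + δ) * n ∧
    ∑ i, Real.log (tc a (xy.1 i, xy.2 i) (w i)) ≤ -(n * (H - δ))

lemma typ_compl {a δ : ℝ} (ha : 0 < a) (ha1 : a < 1) (hδ : 0 < δ) :
    ∃ κ : ℝ, 0 ≤ κ ∧ κ < 1 ∧ ∀ n : ℕ,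
    ∑ xy, iid (dsbs (2 * a * (1 - a))) n xy *
      ∑ w, (if w ∈ typ a δ (2 * Real.binEntropy a - Real.binEntropy (2 * a * (1 - a))) n xy then 0
        else ∏ i, tc a (xy.1 i, xy.2 i) (w i)) ≤ 3 * κ ^ n := by
  set H := 2 * Real.binEntropy a - Real.binEntropy (2 * a * (1 - a)) with hH
  have h1a : 0 < 1 - a := by linarith
  have hρ0 : 0 ≤ 2 * a * (1 - a) := by positivity
  have hρ1 : 2 * a * (1 - a) ≤ 1 := by linarith [den_pos a]
  set p : (Bool × Bool) × Bool → ℝ := fun t => dsbs (2 * a * (1 - a)) t.1 * tc a t.1 t.2 with hp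
  have hp0 : ∀ t, 0 ≤ p t := fun t => mul_nonneg (dsbs_nonneg hρ0 hρ1 _) (tc_nonneg _ _)
  have hp1 : ∑ t, p t = 1 := by
    rw [Fintype.sum_prod_type]
    simp only [hp, ← Finset.mul_sum, tc_sum, mul_one, dsbs_sum]
  set ψ1 : (Bool × Bool) × Bool → ℝ := fun t => dHam t.1.1 t.2 - (a + δ) with hψ1
  set ψ2 : (Bool × Bool) × Bool → ℝ := fun t => dHam t.1.2 t.2 - (a + δ) with hψ2
  set ψ3 : (Bool × Bool) × Bool → ℝ := fun t => Real.log (tc a t.1 t.2) + (H - δ) with hψ3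
  have m1 : ∑ t, p t * ψ1 t < 0 := by
    have : ∑ t, p t * ψ1 t = -δ := by
      simp only [hψ1, mul_sub, Finset.sum_sub_distrib, ← Finset.sum_mul, hp1]
      simp only [hp, Fintype.sum_prod_type, Fintype.sum_bool, dsbs_tc]
      simp [dHam, bsc]; ring
    linarith
  have m2 : ∑ t, p t * ψ2 t < 0 := by
    have : ∑ t, p t * ψ2 t = -δ := by
      simp only [hψ2, mul_sub, Finset.sum_sub_distrib, ← Finset.sum_mul, hp1]
      simp only [hp, Fintype.sum_prod_type, Fintype.sum_bool, dsbs_tc]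
      simp [dHam, bsc]; ring
    linarith
  have m3 : ∑ t, p t * ψ3 t < 0 := by
    have : ∑ t, p t * ψ3 t = -δ := by
      simp only [hψ3, mul_add, Finset.sum_add_distrib, ← Finset.sum_mul, hp1]
      have := tc_entropy ha ha1
      rw [← hH] at this
      simp only [hp]
      rw [this]; ring
    linarith
  obtain ⟨κ1, a1, b1, c1⟩ := lln p ψ1 hp0 hp1 m1
  obtain ⟨κ2, a2, b2, c2⟩ := lln p ψ2 hp0 hp1 m2
  obtain ⟨κ3, a3, b3, c3⟩ := lln p ψ3 hp0 hp1 m3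
  refine ⟨max κ1 (max κ2 κ3), le_max_of_le_left a1, max_lt b1 (max_lt b2 b3), fun n => ?_⟩
  have k1 : κ1 ^ n ≤ (max κ1 (max κ2 κ3)) ^ n := pow_le_pow_left₀ a1 (le_max_left _ _) n
  have k2 : κ2 ^ n ≤ (max κ1 (max κ2 κ3)) ^ n :=
    pow_le_pow_left₀ a2 ((le_max_left _ _).trans (le_max_right _ _)) n
  have k3 : κ3 ^ n ≤ (max κ1 (max κ2 κ3)) ^ n :=
    pow_le_pow_left₀ a3 ((le_max_right _ _).trans (le_max_right _ _)) n
  have hmain : ∑ xy, iid (dsbs (2 * a * (1 - a))) n xy *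
      ∑ w, (if w ∈ typ a δ H n xy then 0 else ∏ i, tc a (xy.1 i, xy.2 i) (w i)) ≤
      ∑ s : Fin n → (Bool × Bool) × Bool, ((if 0 ≤ ∑ i, ψ1 (s i) then ∏ i, p (s i) else 0) +
        (if 0 ≤ ∑ i, ψ2 (s i) then ∏ i, p (s i) else 0) +
        (if 0 ≤ ∑ i, ψ3 (s i) then ∏ i, p (s i) else 0)) := by
    simp only [Finset.mul_sum]
    rw [sum_triple]
    refine Finset.sum_le_sum fun s _ => ?_
    have hps : 0 ≤ ∏ i, p (s i) := Finset.prod_nonneg fun i _ => hp0 _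
    have hn1 : (0 : ℝ) ≤ if 0 ≤ ∑ i, ψ1 (s i) then ∏ i, p (s i) else 0 := by split_ifs <;> simp [hps]
    have hn2 : (0 : ℝ) ≤ if 0 ≤ ∑ i, ψ2 (s i) then ∏ i, p (s i) else 0 := by split_ifs <;> simp [hps]
    have hn3 : (0 : ℝ) ≤ if 0 ≤ ∑ i, ψ3 (s i) then ∏ i, p (s i) else 0 := by split_ifs <;> simp [hps]
    have e1 : ∑ i, ψ1 (s i) = ∑ i, dHam (s i).1.1 (s i).2 - (a + δ) * n := by
      simp [hψ1, Finset.sum_sub_distrib]; ring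
    have e2 : ∑ i, ψ2 (s i) = ∑ i, dHam (s i).1.2 (s i).2 - (a + δ) * n := by
      simp [hψ2, Finset.sum_sub_distrib]; ring
    have e3 : ∑ i, ψ3 (s i) = ∑ i, Real.log (tc a (s i).1 (s i).2) + n * (H - δ) := by
      simp only [hψ3, Finset.sum_add_distrib]; simp; ring
    by_cases hmem : (fun i => (s i).2) ∈ typ a δ H n (fun i => (s i).1.1, fun i => (s i).1.2)
    · rw [if_pos hmem, mul_zero]; linarith
    · rw [if_neg hmem]
      have hprod : iid (dsbs (2 * a * (1 - a))) n (fun i => (s i).1.1, fun i => (s i).1.2) *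
          ∏ i, tc a ((s i).1.1, (s i).1.2) (s i).2 = ∏ i, p (s i) := by
        unfold iid; rw [← Finset.prod_mul_distrib]
      refine le_of_eq_of_le hprod ?_
      simp only [typ, Finset.mem_filter, Finset.mem_univ, true_and, not_and_or, not_le] at hmem
      rcases hmem with h | h | h
      · rw [if_pos (show 0 ≤ ∑ i, ψ1 (s i) by rw [e1]; linarith)]; linarith
      · rw [if_pos (show 0 ≤ ∑ i, ψ2 (s i) by rw [e2]; linarith)]; linarith
      · rw [if_pos (show 0 ≤ ∑ i, ψ3 (s i) by rw [e3]; linarith)]; linarith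
  rw [Finset.sum_add_distrib, Finset.sum_add_distrib] at hmain
  linarith [c1 n, c2 n, c3 n]

lemma cover {a δ H : ℝ} (ha : 0 < a) (ha1 : a < 1) (n N : ℕ) (hN : 0 < N) :
    ∑ xy, iid (dsbs (2 * a * (1 - a))) n xy * (1 - (N : ℝ)⁻¹) ^ (typ a δ H n xy).card ≤
    2 * ∑ xy, iid (dsbs (2 * a * (1 - a))) n xy *
      ∑ w, (if w ∈ typ a δ H n xy then 0 else ∏ i, tc a (xy.1 i, xy.2 i) (w i)) +
    Real.exp (-(Real.exp (n * (H - δ)) / 2 * (N : ℝ)⁻¹)) := by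
  have h1a : 0 < 1 - a := by linarith
  have hρ0 : 0 ≤ 2 * a * (1 - a) := by positivity
  have hρ1 : 2 * a * (1 - a) ≤ 1 := by linarith [den_pos a]
  set P := iid (dsbs (2 * a * (1 - a))) n with hPdef
  have hP : ∀ xy, 0 ≤ P xy := iid_nonneg hρ0 hρ1 n
  have hP1 : ∑ xy, P xy = 1 := iid_dsbs_sum _ n
  set X := Real.exp (-(Real.exp (n * (H - δ)) / 2 * (N : ℝ)⁻¹)) with hX
  have hX0 : 0 < X := Real.exp_pos _
  have hNR : (1 : ℝ) ≤ N := by exact_mod_cast hN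
  have hNi0 : 0 ≤ (N : ℝ)⁻¹ := by positivity
  have hNi1 : (N : ℝ)⁻¹ ≤ 1 := inv_le_one_of_one_le₀ hNR
  have key : ∀ xy, (1 - (N : ℝ)⁻¹) ^ (typ a δ H n xy).card ≤
      2 * ∑ w, (if w ∈ typ a δ H n xy then 0 else ∏ i, tc a (xy.1 i, xy.2 i) (w i)) + X := by
    intro xy
    set v : (Fin n → Bool) → ℝ := fun w => ∏ i, tc a (xy.1 i, xy.2 i) (w i) with hv
    have hv0 : ∀ w, 0 < v w := fun w => Finset.prod_pos fun i _ => tc_pos ha ha1 _ _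
    have hv1 : ∑ w, v w = 1 := by
      simp only [hv]
      rw [sum_prod_pi (fun i w => tc a (xy.1 i, xy.2 i) w)]
      simp only [tc_sum, Finset.prod_const_one]
    set Tn := typ a δ H n xy with hTn
    have hsplit : ∑ w ∈ Tn, v w + ∑ w, (if w ∈ Tn then 0 else v w) = 1 := by
      have hTv : ∑ w ∈ Tn, v w = ∑ w, if w ∈ Tn then v w else 0 := by
        rw [Finset.sum_ite_mem, Finset.univ_inter]
      rw [← hv1, hTv, ← Finset.sum_add_distrib]
      exact Finset.sum_congr rfl fun w _ => by split_ifs <;> simp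
    have hnn : 0 ≤ ∑ w, (if w ∈ Tn then 0 else v w) :=
      Finset.sum_nonneg fun w _ => by split_ifs <;> simp [(hv0 w).le]
    by_cases hhalf : 1 / 2 ≤ ∑ w ∈ Tn, v w
    · have hvle : ∀ w ∈ Tn, v w ≤ Real.exp (-(n * (H - δ))) := by
        intro w hw
        have := (Finset.mem_filter.1 hw).2.2.2
        rw [← Real.exp_log (hv0 w)]
        apply Real.exp_le_exp.2
        simp only [hv]
        rwa [Real.log_prod (fun i _ => (tc_pos ha ha1 _ _).ne')]
      have hcard : 1 / 2 ≤ Tn.card * Real.exp (-(n * (H - δ))) := by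
        refine hhalf.trans ((Finset.sum_le_sum hvle).trans (le_of_eq ?_))
        simp
      have hcard2 : Real.exp (n * (H - δ)) / 2 ≤ Tn.card := by
        rw [Real.exp_neg, ← div_eq_mul_inv, le_div_iff₀ (Real.exp_pos _)] at hcard
        linarith
      have : (1 - (N : ℝ)⁻¹) ^ Tn.card ≤ X := by
        calc (1 - (N : ℝ)⁻¹) ^ Tn.card ≤ (Real.exp (-(N : ℝ)⁻¹)) ^ Tn.card :=
              pow_le_pow_left₀ (by linarith) (by linarith [Real.add_one_le_exp (-(N : ℝ)⁻¹)]) _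
          _ = Real.exp (-(Tn.card * (N : ℝ)⁻¹)) := by rw [← Real.exp_nat_mul]; congr 1; ring
          _ ≤ X := by
              apply Real.exp_le_exp.2
              linarith [mul_le_mul_of_nonneg_right hcard2 hNi0]
      linarith
    · have : (1 - (N : ℝ)⁻¹) ^ Tn.card ≤ 1 := pow_le_one₀ (by linarith) (by linarith)
      linarith
  calc ∑ xy, P xy * (1 - (N : ℝ)⁻¹) ^ (typ a δ H n xy).card
      ≤ ∑ xy, P xy * (2 * ∑ w, (if w ∈ typ a δ H n xy then 0
        else ∏ i, tc a (xy.1 i, xy.2 i) (w i)) + X) :=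
        Finset.sum_le_sum fun xy _ => mul_le_mul_of_nonneg_left (key xy) (hP xy)
    _ = _ := by
        simp only [mul_add (P _), Finset.sum_add_distrib, ← Finset.sum_mul, hP1, one_mul]
        rw [Finset.mul_sum]
        congr 1
        exact Finset.sum_congr rfl fun xy _ => by ring

set_option maxHeartbeats 2000000 in
lemma achiev {a : ℝ} (ha : 0 < a) (ha1 : a ≤ 1 / 2) 
    (hr : 0 ≤ Real.binEntropy (2 * a * (1 - a)) - Real.binEntropy a) :
    CRAchievable (dsbs (2 * a * (1 - a))) (dHam (α := Bool)) (dHam (α := Bool)) a a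
      ((Real.binEntropy (2 * a * (1 - a)) - Real.binEntropy a) / Real.log 2) := by
  intro ε hε
  have h1a : 0 < 1 - a := by linarith
  have ha1' : a < 1 := by linarith
  have hl2 : 0 < Real.log 2 := Real.log_pos (by norm_num)
  have hρ0 : 0 < 2 * a * (1 - a) := by positivity
  have hρ1 : 2 * a * (1 - a) < 1 := by linarith [den_pos a]
  set ρ := 2 * a * (1 - a) with hρ
  set H := 2 * Real.binEntropy a - Real.binEntropy ρ with hH
  have hHpos : 0 < H := by
    have h := tc_entropy ha ha1'
    rw [← hρ, ← hH] at h
    have : 0 < ∑ t : (Bool × Bool) × Bool,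
        -(dsbs ρ t.1 * tc a t.1 t.2 * Real.log (tc a t.1 t.2)) := by
      refine Finset.sum_pos (fun t _ => ?_) Finset.univ_nonempty
      have l := Real.log_neg (tc_pos ha ha1' t.1 t.2) (tc_lt_one ha ha1' t.1 t.2)
      have d : 0 < dsbs ρ t.1 := by unfold dsbs; split_ifs <;> linarith
      have := mul_pos (mul_pos d (tc_pos ha ha1' t.1 t.2)) (neg_pos.2 l)
      linarith
    rw [Finset.sum_neg_distrib, h] at this
    linarith
  set c := Real.log (1 - a) - Real.log a with hc
  have hc0 : 0 ≤ c := sub_nonneg.2 (Real.log_le_log ha (by linarith))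
  set δ := min (H / 2) (min (ε / 2) (ε * Real.log 2 / (2 * (3 + c)))) with hδ
  have hδ0 : 0 < δ := by
    refine lt_min (by linarith) (lt_min (by linarith) ?_)
    positivity
  have hδ1 : δ ≤ H / 2 := min_le_left _ _
  have hδ2 : δ ≤ ε / 2 := (min_le_right _ _).trans (min_le_left _ _)
  have hδ3 : (3 + c) * δ ≤ ε * Real.log 2 / 2 := by
    have : δ ≤ ε * Real.log 2 / (2 * (3 + c)) := (min_le_right _ _).trans (min_le_right _ _)
    rw [le_div_iff₀ (by positivity)] at this
    linarith
  set R := Real.binEntropy ρ - Real.binEntropy a + (3 + c) * δ with hR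
  have hR0 : 0 ≤ R := by positivity
  obtain ⟨κ, hκ0, hκ1, hκ⟩ := typ_compl ha ha1' hδ0
  rw [← hρ, ← hH] at hκ
  -- choose n
  have t1 : Filter.Tendsto (fun n : ℕ => 6 * κ ^ n + 6 * (Real.exp (-δ)) ^ n) Filter.atTop
      (nhds (6 * 0 + 6 * 0)) :=
    ((tendsto_pow_atTop_nhds_zero_of_lt_one hκ0 hκ1).const_mul 6).add
      ((tendsto_pow_atTop_nhds_zero_of_lt_one (Real.exp_pos _).le
        (by rw [Real.exp_lt_one_iff]; linarith)).const_mul 6)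
  have t2 : ∀ᶠ n : ℕ in Filter.atTop, 6 * κ ^ n + 6 * (Real.exp (-δ)) ^ n < ε / 2 :=
    t1.eventually (gt_mem_nhds (by linarith))
  obtain ⟨n, hn1, hn2⟩ := (t2.and (Filter.eventually_ge_atTop (max 1 ⌈2 / ε⌉₊))).exists
  have hn : 0 < n := (le_max_left _ _).trans hn2
  have hnR : (0 : ℝ) < n := by exact_mod_cast hn
  have hnε : 2 / ε ≤ n := (Nat.le_ceil _).trans (by exact_mod_cast (le_max_right _ _).trans hn2)
  set N := ⌈Real.exp (n * (H - 2 * δ))⌉₊ with hN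
  set m := ⌈Real.exp (n * R)⌉₊ with hm
  have hNpos : 0 < N := Nat.ceil_pos.2 (Real.exp_pos _)
  have hmpos : 0 < m := Nat.ceil_pos.2 (Real.exp_pos _)
  have hNge : Real.exp (n * (H - 2 * δ)) ≤ N := Nat.le_ceil _
  have hmge : Real.exp (n * R) ≤ m := Nat.le_ceil _
  have hNle : (N : ℝ) ≤ 2 * Real.exp (n * (H - 2 * δ)) := by
    have h1 := (Nat.ceil_lt_add_one (Real.exp_pos (n * (H - 2 * δ))).le).le
    have h2 : 1 ≤ Real.exp (n * (H - 2 * δ)) := Real.one_le_exp (mul_nonneg hnR.le (by linarith))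
    linarith
  have hmle : (m : ℝ) ≤ 2 * Real.exp (n * R) := by
    have h1 := (Nat.ceil_lt_add_one (Real.exp_pos (n * R)).le).le
    have h2 : 1 ≤ Real.exp (n * R) := Real.one_le_exp (mul_nonneg hnR.le hR0)
    linarith
  have hNR : (0 : ℝ) < N := by exact_mod_cast hNpos
  have hmR : (0 : ℝ) < m := by exact_mod_cast hmpos
  have hexpn : (Real.exp (-δ)) ^ n = Real.exp (-(n * δ)) := by
    rw [← Real.exp_nat_mul]; congr 1; ring
  rw [hexpn] at hn1
  have b1 : Real.exp (-(Real.exp (n * (H - δ)) / 2 * (N : ℝ)⁻¹)) ≤ 4 * Real.exp (-(n * δ)) := by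
    have h1 : Real.exp (n * δ) / 4 ≤ Real.exp (n * (H - δ)) / 2 * (N : ℝ)⁻¹ := by
      rw [← div_eq_mul_inv, le_div_iff₀ hNR]
      have : Real.exp (n * (H - δ)) = Real.exp (n * δ) * Real.exp (n * (H - 2 * δ)) := by
        rw [← Real.exp_add]; congr 1; ring
      rw [this]
      have := mul_le_mul_of_nonneg_left hNle (Real.exp_pos (n * δ)).le
      linarith
    have h2 : Real.exp (n * δ) / 4 ≤ Real.exp (Real.exp (n * (H - δ)) / 2 * (N : ℝ)⁻¹) := by
      linarith [Real.add_one_le_exp (Real.exp (n * (H - δ)) / 2 * (N : ℝ)⁻¹)]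
    rw [Real.exp_neg, Real.exp_neg]
    calc _ ≤ (Real.exp (n * δ) / 4)⁻¹ := inv_anti₀ (by positivity) h2
      _ = _ := by rw [inv_div]; ring
  have b2 : 2 * Real.exp (n * (Real.binEntropy a + c * δ)) * ((N : ℝ)⁻¹ * (m : ℝ)⁻¹) ≤
      2 * Real.exp (-(n * δ)) := by
    rw [← mul_inv, ← div_eq_mul_inv, div_le_iff₀ (by positivity)]
    have h1 : Real.exp (n * (H - 2 * δ)) * Real.exp (n * R) ≤ N * m :=
      mul_le_mul hNge hmge (Real.exp_pos _).le hNR.le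
    have h2 : Real.exp (n * (Real.binEntropy a + c * δ)) =
        Real.exp (-(n * δ)) * (Real.exp (n * (H - 2 * δ)) * Real.exp (n * R)) := by
      rw [← Real.exp_add, ← Real.exp_add]; congr 1; rw [hR, hH]; ring
    rw [h2]
    have := mul_le_mul_of_nonneg_left h1 (Real.exp_pos (-(n * δ))).le
    linarith
  have hcov := cover (δ := δ) (H := H) ha ha1' n N hNpos
  rw [← hρ] at hcov
  have hκn := hκ n
  have : NeZero N := ⟨hNpos.ne'⟩
  obtain ⟨f, g1, g2, φ1, φ2, e1, e2, e3, e4⟩ :=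
    cr_code (N := N) hn hmpos hρ0.le hρ1.le (d := a + δ) (by positivity) (typ a δ H n)
      (fun xy w hw => (Finset.mem_filter.1 hw).2.1)
      (fun xy w hw => (Finset.mem_filter.1 hw).2.2.1)
      (Real.exp (n * (Real.binEntropy a + c * δ))) (fun y => ball_card ha ha1 y) (ε / 2)
      (by linarith)
  refine ⟨n, m, f, g1, g2, φ1, φ2, hn, ?_, by linarith, by linarith,
    le_trans (le_of_eq (Finset.sum_congr rfl fun xy _ => by congr)) (e3.trans (by linarith)),
    le_trans (le_of_eq (Finset.sum_congr rfl fun xy _ => by congr)) (e4.trans (by linarith))⟩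
  have hlogm : Real.log m ≤ Real.log 2 + n * R := by
    have := Real.log_le_log hmR hmle
    rwa [Real.log_mul two_ne_zero (Real.exp_pos _).ne', Real.log_exp] at this
  rw [Real.logb, div_div, div_le_iff₀ (by positivity)]
  refine hlogm.trans ?_
  have hh : Real.log 2 ≤ n * (ε * Real.log 2 / 2) := by
    rw [div_le_iff₀ hε] at hnε
    nlinarith
  have e : ((Real.binEntropy ρ - Real.binEntropy a) / Real.log 2 + ε) * (Real.log 2 * n) =
      n * (Real.binEntropy ρ - Real.binEntropy a) + n * (ε * Real.log 2) := by
    field_simp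
  rw [e, hR]
  have := mul_le_mul_of_nonneg_left hδ3 hnR.le
  nlinarith

end TWR

namespace TWR

lemma log_ratio_mono {s t : ℝ} (hs : 0 ≤ s) (hst : s ≤ t) (ht : t < 1) :
    t * (Real.log (1 + s) - Real.log (1 - s)) ≤ s * (Real.log (1 + t) - Real.log (1 - t)) := by
  have h1 := (Real.hasSum_log_sub_log_of_abs_lt_one (x := s)
    (by rw [abs_of_nonneg hs]; linarith)).mul_left t
  have h2 := (Real.hasSum_log_sub_log_of_abs_lt_one (x := t)
    (by rw [abs_of_nonneg (hs.trans hst)]; linarith)).mul_left s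
  refine hasSum_le (fun k => ?_) h1 h2
  have hp : s ^ (2 * k) ≤ t ^ (2 * k) := pow_le_pow_left₀ hs hst _
  have hc : (0 : ℝ) ≤ 2 * (1 / (2 * k + 1)) * (s * t) := by
    have := hs.trans hst
    positivity
  have := mul_le_mul_of_nonneg_left hp hc
  rw [pow_succ, pow_succ]
  linarith

lemma hasDeriv_g (l : ℝ) {s : ℝ} (h0 : -1 < s) (h1 : s < 1) :
    HasDerivAt (fun s => Real.binEntropy ((1 + s) / 2) + l * s ^ 2)
      (-(Real.log (1 + s) - Real.log (1 - s)) / 2 + 2 * l * s) s := by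
  have e1 : HasDerivAt (fun s : ℝ => (1 + s) / 2) (1 / 2) s :=
    ((hasDerivAt_id s).const_add 1).div_const 2
  have e2 := (Real.hasDerivAt_binEntropy (p := (1 + s) / 2) (by linarith) (by linarith)).comp s e1
  have e3 : HasDerivAt (fun s : ℝ => l * s ^ 2) (l * (2 * s)) s := by
    simpa using (hasDerivAt_pow 2 s).const_mul l
  have e4 := e2.add e3
  refine e4.congr_deriv ?_
  have : 1 - (1 + s) / 2 = (1 - s) / 2 := by ring
  rw [this, Real.log_div (by linarith) two_ne_zero, Real.log_div (by linarith) two_ne_zero]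
  ring

lemma tangent {s0 : ℝ} (h0 : 0 ≤ s0) (h1 : s0 < 1) :
    ∃ l : ℝ, 0 ≤ l ∧ ∀ s : ℝ, -1 ≤ s → s ≤ 1 →
      Real.binEntropy ((1 + s) / 2) + l * s ^ 2 ≤
        Real.binEntropy ((1 + s0) / 2) + l * s0 ^ 2 := by
  rcases h0.eq_or_lt with h | h
  · refine ⟨0, le_rfl, fun s _ _ => ?_⟩
    subst h
    have : Real.binEntropy ((1 + 0) / 2) = Real.log 2 := by
      rw [← Real.binEntropy_two_inv]; norm_num
    rw [this]
    have := Real.binEntropy_le_log_two (p := (1 + s) / 2)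
    linarith
  · set l := (Real.log (1 + s0) - Real.log (1 - s0)) / (4 * s0) with hl
    have hl0 : 0 ≤ l := by
      apply div_nonneg _ (by linarith)
      have := Real.log_le_log (show 0 < 1 - s0 by linarith) (show 1 - s0 ≤ 1 + s0 by linarith)
      linarith
    refine ⟨l, hl0, ?_⟩
    have hls : ∀ s, 2 * l * s = (s * (Real.log (1 + s0) - Real.log (1 - s0))) / s0 / 2 := by
      intro s; rw [hl]; field_simp; ring
    have hcont : Continuous (fun s : ℝ => Real.binEntropy ((1 + s) / 2) + l * s ^ 2) := by
      fun_prop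
    have hmono : MonotoneOn (fun s : ℝ => Real.binEntropy ((1 + s) / 2) + l * s ^ 2)
        (Set.Icc 0 s0) := by
      refine monotoneOn_of_hasDerivWithinAt_nonneg (convex_Icc _ _) hcont.continuousOn
        (f' := fun s => -(Real.log (1 + s) - Real.log (1 - s)) / 2 + 2 * l * s) ?_ ?_
      · intro s hs
        rw [interior_Icc] at hs
        exact (hasDeriv_g l (by linarith [hs.1]) (by linarith [hs.2])).hasDerivWithinAt
      · intro s hs
        rw [interior_Icc] at hs
        have := log_ratio_mono hs.1.le hs.2.le h1
        rw [hls]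
        rw [mul_comm, ← le_div_iff₀ h] at this
        linarith
    have hanti : AntitoneOn (fun s : ℝ => Real.binEntropy ((1 + s) / 2) + l * s ^ 2)
        (Set.Icc s0 1) := by
      refine antitoneOn_of_hasDerivWithinAt_nonpos (convex_Icc _ _) hcont.continuousOn
        (f' := fun s => -(Real.log (1 + s) - Real.log (1 - s)) / 2 + 2 * l * s) ?_ ?_
      · intro s hs
        rw [interior_Icc] at hs
        exact (hasDeriv_g l (by linarith [hs.1]) (by linarith [hs.2])).hasDerivWithinAt
      · intro s hs
        rw [interior_Icc] at hs
        have := log_ratio_mono h.le hs.1.le hs.2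
        rw [hls]
        rw [mul_comm s0, ← div_le_iff₀ h] at this
        linarith
    have hpos : ∀ s : ℝ, 0 ≤ s → s ≤ 1 →
        Real.binEntropy ((1 + s) / 2) + l * s ^ 2 ≤
        Real.binEntropy ((1 + s0) / 2) + l * s0 ^ 2 := by
      intro s hs0 hs1
      rcases le_total s s0 with hle | hle
      · exact hmono ⟨hs0, hle⟩ ⟨h.le, le_rfl⟩ hle
      · exact hanti ⟨le_rfl, h1.le⟩ ⟨hle, hs1⟩ hle
    intro s hs0 hs1
    rcases le_total 0 s with hle | hle
    · exact hpos s hle hs1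
    · have := hpos (-s) (by linarith) (by linarith)
      have e : Real.binEntropy ((1 + -s) / 2) = Real.binEntropy ((1 + s) / 2) := by
        rw [← Real.binEntropy_one_sub]; congr 1; ring
      rw [e, neg_sq] at this
      exact this

lemma mlog2 (x y : ℝ) : x * y * Real.log (x * y) = x * y * (Real.log x + Real.log y) := by
  rcases eq_or_ne x 0 with h | h
  · simp [h]
  rcases eq_or_ne y 0 with h' | h'
  · simp [h']
  rw [Real.log_mul h h']

lemma mlog3 (x y z : ℝ) : x * y * z * Real.log (x * y * z) =
    x * y * z * (Real.log x + Real.log y + Real.log z) := by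
  rcases eq_or_ne z 0 with h | h
  · simp [h]
  have := mlog2 (x * y) z
  have h2 := mlog2 x y
  linear_combination this + z * h2

/-- Analysis of one value of the auxiliary variable. -/
lemma perw (P : Bool → Bool → ℝ) (hP : ∀ x y, 0 ≤ P x y)
    (hM : ∀ x y, P x y * (∑ x', ∑ y', P x' y') = (∑ y', P x y') * (∑ x', P x' y)) :
    ∃ s t : ℝ, (-1 ≤ s ∧ s ≤ 1) ∧ (-1 ≤ t ∧ t ≤ 1) ∧
      -(∑ x, ∑ y, P x y * Real.log (P x y)) +
        (∑ x, ∑ y, P x y) * Real.log (∑ x, ∑ y, P x y) =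
      (∑ x, ∑ y, P x y) * (Real.binEntropy ((1 + s) / 2) + Real.binEntropy ((1 + t) / 2)) ∧
      (∑ x, ∑ y, P x y) * (s * t) =
        P true true + P false false - P true false - P false true := by
  set p := ∑ x, ∑ y, P x y with hp
  have hp4 : p = P true true + P true false + (P false true + P false false) := by
    simp [hp, Fintype.sum_bool]
  have h1 := hP true true
  have h2 := hP true false
  have h3 := hP false true
  have h4 := hP false false
  rcases eq_or_ne p 0 with h0 | h0
  · refine ⟨0, 0, by norm_num, by norm_num, ?_, ?_⟩
    · have z1 : P true true = 0 := by linarith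
      have z2 : P true false = 0 := by linarith
      have z3 : P false true = 0 := by linarith
      have z4 : P false false = 0 := by linarith
      simp [h0, Fintype.sum_bool, z1, z2, z3, z4]
    · rw [h0]; linarith
  · have hpp : 0 < p := lt_of_le_of_ne (by rw [hp4]; linarith) h0.symm
    obtain ⟨α, hα⟩ : ∃ α, α = (P true true + P true false) / p := ⟨_, rfl⟩
    obtain ⟨β, hβ⟩ : ∃ β, β = (P true true + P false true) / p := ⟨_, rfl⟩
    have hα' : P true true + P true false = p * α := by rw [hα]; field_simp
    have hβ' : P true true + P false true = p * β := by rw [hβ]; field_simp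
    have hα2 : P false true + P false false = p * (1 - α) := by linarith
    have hβ2 : P true false + P false false = p * (1 - β) := by linarith
    have hα0 : 0 ≤ α := by rw [hα]; positivity
    have hβ0 : 0 ≤ β := by rw [hβ]; positivity
    have hα1 : α ≤ 1 := by rw [hα, div_le_one hpp]; linarith
    have hβ1 : β ≤ 1 := by rw [hβ, div_le_one hpp]; linarith
    simp only [Fintype.sum_bool] at hM
    have m1 : P true true = p * α * β := by
      have := hM true true
      rw [hα', hβ'] at this
      exact mul_right_cancel₀ h0 (by linarith)
    have m2 : P true false = p * α * (1 - β) := by linarith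
    have m3 : P false true = p * (1 - α) * β := by linarith
    have m4 : P false false = p * (1 - α) * (1 - β) := by linarith
    refine ⟨2 * α - 1, 2 * β - 1, ⟨by linarith, by linarith⟩, ⟨by linarith, by linarith⟩, ?_, ?_⟩
    · have e1 : (1 + (2 * α - 1)) / 2 = α := by ring
      have e2 : (1 + (2 * β - 1)) / 2 = β := by ring
      rw [e1, e2]
      simp only [Fintype.sum_bool, m1, m2, m3, m4, mlog3]
      rw [binEntropy_eq, binEntropy_eq]
      ring
    · rw [m1, m2, m3, m4]; ring

end TWR

namespace TWR

lemma margX_dsbs (ρ : ℝ) : margX (dsbs ρ) = fun _ => 1 / 2 := by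
  funext x; cases x <;> simp [margX, dsbs] <;> ring

lemma margY_dsbs (ρ : ℝ) : margY (dsbs ρ) = fun _ => 1 / 2 := by
  funext x; cases x <;> simp [margY, dsbs] <;> ring

lemma bsc_nonneg {a : ℝ} (h0 : 0 ≤ a) (h1 : a ≤ 1) (x w : Bool) : 0 ≤ bsc a x w := by
  unfold bsc; split_ifs <;> linarith

lemma bsc_sum_right (a : ℝ) (x : Bool) : ∑ w, bsc a x w = 1 := by
  cases x <;> simp [bsc]

lemma log2_pos : 0 < Real.log 2 := Real.log_pos (by norm_num)

lemma margRD_val {a : ℝ} (ha0 : 0 ≤ a) (ha1 : a ≤ 1 / 2) :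
    margRD (fun _ : Bool => (1 / 2 : ℝ)) (dHam (α := Bool)) a =
      1 - Real.binEntropy a / Real.log 2 := by
  have hl2 := log2_pos
  unfold margRD
  refine IsLeast.csInf_eq ⟨⟨bsc a, ?_, ?_, ?_⟩, ?_⟩
  · exact fun x => ⟨fun w => bsc_nonneg ha0 (by linarith) x w, bsc_sum_right a x⟩
  · simp [bsc, dHam]; linarith
  · unfold MI
    simp only [H2_eq, Fintype.sum_prod_type, Fintype.sum_bool, bsc]
    simp only [if_true, Bool.true_eq_false, Bool.false_eq_true, if_false]
    have e : ∀ x : ℝ, 1 / 2 * x = x / 2 := fun x => by ring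
    simp only [e, mul_log_div_two]
    have e1 : (1 - a) / 2 + a / 2 = 1 / 2 := by ring
    have e2 : a / 2 + (1 - a) / 2 = 1 / 2 := by ring
    rw [e1, e2, mul_log_div_two, binEntropy_eq]
    simp only [Real.log_one]
    field_simp
    ring
  · rintro r ⟨W, hW, hd, rfl⟩
    set Q : Bool × Bool → ℝ := fun t => 1 / 2 * W t.1 t.2 with hQ
    have hQ0 : ∀ t, 0 ≤ Q t := fun t => mul_nonneg (by norm_num) ((hW t.1).1 t.2)
    set v : Bool → ℝ := fun w => ∑ x, Q (x, w) with hv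
    have hv0 : ∀ w, 0 ≤ v w := fun w => Finset.sum_nonneg fun x _ => hQ0 _
    have hQv : ∀ x w, v w = 0 → Q (x, w) = 0 := fun x w h =>
      (Finset.sum_eq_zero_iff_of_nonneg (fun x _ => hQ0 _)).1 h x (Finset.mem_univ _)
    have hX : ∀ x, ∑ w, Q (x, w) = 1 / 2 := by
      intro x
      simp only [hQ, ← Finset.mul_sum, (hW x).2, mul_one]
    have hd' : Q (true, false) + Q (false, true) ≤ a := by
      refine le_trans (le_of_eq ?_) hd
      simp [hQ, dHam]
    have hb0 : ∀ x w, bsc a x w = 0 → Q (x, w) = 0 := by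
      intro x w h
      have n1 := hQ0 (true, false)
      have n2 := hQ0 (false, true)
      cases x <;> cases w <;> simp only [bsc, if_true, Bool.true_eq_false, Bool.false_eq_true,
        if_false] at h <;> linarith
    have hg := gibbs Q (fun t => bsc a t.1 t.2 * v t.2) hQ0
      (fun t => mul_nonneg (bsc_nonneg ha0 (by linarith) _ _) (hv0 _)) (by
        rw [Fintype.sum_prod_type_right, Fintype.sum_prod_type_right]
        simp only [← Finset.sum_mul, bsc_sum, one_mul]
        exact le_rfl) (by
        rintro ⟨x, w⟩ h
        rcases mul_eq_zero.1 h with h | h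
        · exact hb0 x w h
        · exact hQv x w h)
    have hlog : ∀ t : Bool × Bool, Q t * Real.log (bsc a t.1 t.2 * v t.2) =
        Q t * Real.log (bsc a t.1 t.2) + Q t * Real.log (v t.2) := by
      rintro ⟨x, w⟩
      by_cases h1 : bsc a x w = 0
      · simp [hb0 x w h1]
      by_cases h2 : v w = 0
      · simp [hQv x w h2]
      rw [Real.log_mul h1 h2, mul_add]
    simp only [hlog, Finset.sum_add_distrib] at hg
    have hvv : ∑ t, Q t * Real.log (v t.2) = ∑ w, v w * Real.log (v w) := by
      rw [Fintype.sum_prod_type_right]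
      simp only [← Finset.sum_mul]
      rfl
    rw [hvv] at hg
    have hQb : -Real.binEntropy a ≤ ∑ t, Q t * Real.log (bsc a t.1 t.2) := by
      have hs : Q (true, true) + Q (false, false) = 1 - (Q (true, false) + Q (false, true)) := by
        have h1 := hX true
        have h2 := hX false
        simp only [Fintype.sum_bool] at h1 h2
        linarith
      have e : ∑ t, Q t * Real.log (bsc a t.1 t.2) = Real.log (1 - a) -
          (Real.log (1 - a) - Real.log a) * (Q (true, false) + Q (false, true)) := by
        simp only [Fintype.sum_prod_type, Fintype.sum_bool, bsc]
        simp only [if_true, Bool.true_eq_false, Bool.false_eq_true, if_false]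
        linear_combination hs * Real.log (1 - a)
      rw [e, binEntropy_eq]
      rcases ha0.eq_or_lt with h | h
      · subst h
        simp
      · have hc : 0 ≤ Real.log (1 - a) - Real.log a := by
          have := Real.log_le_log h (show a ≤ 1 - a by linarith)
          linarith
        have := mul_le_mul_of_nonneg_left hd' hc
        linarith
    unfold MI
    simp only [H2_eq]
    have hXs : ∑ x : Bool, (∑ w, Q (x, w)) * Real.log (∑ w, Q (x, w)) = -Real.log 2 := by
      simp only [hX]
      simp
    rw [hXs]
    change _ ≤ - -Real.log 2 / Real.log 2 + -(∑ w, v w * Real.log (v w)) / Real.log 2 -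
      -(∑ t, Q t * Real.log (Q t)) / Real.log 2
    rw [neg_neg, div_self hl2.ne', ← sub_nonneg]
    have : 1 + -(∑ w, v w * Real.log (v w)) / Real.log 2 -
      -(∑ t, Q t * Real.log (Q t)) / Real.log 2 - (1 - Real.binEntropy a / Real.log 2) =
      (∑ t, Q t * Real.log (Q t) - ∑ w, v w * Real.log (v w) + Real.binEntropy a) /
        Real.log 2 := by ring
    rw [this]
    exact div_nonneg (by linarith) hl2.le

/-- The optimal auxiliary variable. -/
def wchan (a : ℝ) (xy : Bool × Bool) (w : Fin 4) : ℝ :=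
  if w = 0 then tc a xy false else if w = 1 then tc a xy true else 0

lemma wynerK_val {a : ℝ} (ha0 : 0 ≤ a) (ha1 : a ≤ 1 / 2) :
    wynerK (dsbs (2 * a * (1 - a))) =
      1 + Real.binEntropy (2 * a * (1 - a)) / Real.log 2 - 2 * Real.binEntropy a / Real.log 2 := by
  have hl2 := log2_pos
  set ρ := 2 * a * (1 - a) with hρ
  unfold wynerK
  have hw0 : ∀ xy, wchan a xy 0 = tc a xy false := fun xy => by simp [wchan]
  have hw1 : ∀ xy, wchan a xy 1 = tc a xy true := fun xy => by simp [wchan]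
  have hw2 : ∀ xy, wchan a xy 2 = 0 := fun xy => by simp [wchan]
  have hw3 : ∀ xy, wchan a xy 3 = 0 := fun xy => by simp [wchan]
  refine IsLeast.csInf_eq ⟨⟨wchan a, ?_, ?_, ?_⟩, ?_⟩
  · intro xy
    constructor
    · intro w; unfold wchan; split_ifs <;> first | exact tc_nonneg _ _ | exact le_rfl
    · rw [Fin.sum_univ_four, hw0, hw1, hw2, hw3]
      have := tc_sum a xy
      rw [Fintype.sum_bool] at this
      linarith
  · intro x w y
    have h0 : ∀ x y w, dsbs ρ (x, y) * tc a (x, y) w = bsc a x w * bsc a y w / 2 := dsbs_tc a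
    have hw : w = 0 ∨ w = 1 ∨ w = 2 ∨ w = 3 := by fin_cases w <;> simp
    rcases hw with rfl | rfl | rfl | rfl
    · simp only [hw0, h0, Fintype.sum_bool]
      cases x <;> cases y <;> simp [bsc] <;> ring
    · simp only [hw1, h0, Fintype.sum_bool]
      cases x <;> cases y <;> simp [bsc] <;> ring
    · simp [hw2]
    · simp [hw3]
  · have hXY : ∀ xy, ∑ w, dsbs ρ xy * wchan a xy w = dsbs ρ xy := by
      intro xy
      rw [← Finset.mul_sum, Fin.sum_univ_four, hw0, hw1, hw2, hw3]
      have := tc_sum a xy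
      rw [Fintype.sum_bool] at this
      rw [show tc a xy false + tc a xy true + 0 + 0 = 1 by linarith, mul_one]
    have h0 : ∀ x y w, dsbs ρ (x, y) * tc a (x, y) w = bsc a x w * bsc a y w / 2 := dsbs_tc a
    unfold MI
    simp only [H2_eq, hXY, dsbs_log]
    have hW : ∑ w : Fin 4, (∑ xy, dsbs ρ xy * wchan a xy w) *
        Real.log (∑ xy, dsbs ρ xy * wchan a xy w) = - Real.log 2 := by
      have k : ∀ w, ∑ xy, dsbs ρ xy * tc a xy w = 1 / 2 := by
        intro w
        rw [Fintype.sum_prod_type]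
        simp only [h0, Fintype.sum_bool]
        cases w <;> simp [bsc] <;> ring
      rw [Fin.sum_univ_four]
      simp only [hw0, hw1, hw2, hw3, k, mul_zero, Finset.sum_const_zero, zero_mul]
      rw [mul_log_div_two, Real.log_one]; ring
    have hJ : ∑ t : (Bool × Bool) × Fin 4, dsbs ρ t.1 * wchan a t.1 t.2 *
        Real.log (dsbs ρ t.1 * wchan a t.1 t.2) = - Real.log 2 - 2 * Real.binEntropy a := by
      rw [Fintype.sum_prod_type_right, Fin.sum_univ_four]
      simp only [hw0, hw1, hw2, hw3, Fintype.sum_prod_type, h0, mul_zero, zero_mul,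
        Finset.sum_const_zero]
      have m : ∀ x y : ℝ, x * y / 2 * Real.log (x * y / 2) =
          x * y / 2 * (Real.log x + Real.log y - Real.log 2) := by
        intro x y
        have h1 := mul_log_div_two (x * y)
        have h2 := mlog2 x y
        linear_combination h1 + h2 / 2
      simp only [m, Fintype.sum_bool, bsc]
      simp only [if_true, Bool.true_eq_false, Bool.false_eq_true, if_false]
      rw [binEntropy_eq]
      ring
    rw [hW, hJ]
    field_simp
    ring
  · rintro r ⟨W, hW, hM, rfl⟩
    have hρ0 : 0 ≤ ρ := mul_nonneg (by linarith) (by linarith)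
    have hρ1 : ρ ≤ 1 := by have := den_pos a; linarith
    have hXY : ∀ xy, ∑ w, dsbs ρ xy * W xy w = dsbs ρ xy := by
      intro xy
      rw [← Finset.mul_sum, (hW xy).2, mul_one]
    have hper := fun w => perw (fun x y => dsbs ρ (x, y) * W (x, y) w)
      (fun x y => mul_nonneg (dsbs_nonneg hρ0 hρ1 _) ((hW _).1 _)) (fun x y => hM x w y)
    choose s t hs ht hE hst using hper
    set p : Fin 4 → ℝ := fun w => ∑ x, ∑ y, dsbs ρ (x, y) * W (x, y) w with hp
    have hE' : ∀ w, -(∑ x, ∑ y, dsbs ρ (x, y) * W (x, y) w *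
        Real.log (dsbs ρ (x, y) * W (x, y) w)) + p w * Real.log (p w) =
        p w * (Real.binEntropy ((1 + s w) / 2) + Real.binEntropy ((1 + t w) / 2)) := hE
    have hst' : ∀ w, p w * (s w * t w) = dsbs ρ (true, true) * W (true, true) w +
        dsbs ρ (false, false) * W (false, false) w - dsbs ρ (true, false) * W (true, false) w -
        dsbs ρ (false, true) * W (false, true) w := hst
    have hp0 : ∀ w, 0 ≤ p w := fun w => Finset.sum_nonneg fun x _ => Finset.sum_nonneg fun y _ =>
      mul_nonneg (dsbs_nonneg hρ0 hρ1 _) ((hW _).1 _)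
    have hp1 : ∑ w, p w = 1 := by
      have k1 : ∀ w, p w = ∑ xy : Bool × Bool, dsbs ρ xy * W xy w := fun w =>
        (Fintype.sum_prod_type (fun xy : Bool × Bool => dsbs ρ xy * W xy w)).symm
      simp only [k1]
      rw [Finset.sum_comm]
      simp only [hXY, dsbs_sum]
    have hcorr : ∑ w, p w * (s w * t w) = (1 - 2 * a) ^ 2 := by
      simp only [hst', Finset.sum_sub_distrib, Finset.sum_add_distrib, hXY]
      simp [dsbs, hρ]; ring
    have hmain : ∑ w, p w * (Real.binEntropy ((1 + s w) / 2) + Real.binEntropy ((1 + t w) / 2)) ≤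
        2 * Real.binEntropy a := by
      rcases ha0.eq_or_lt with h | h
      · have hz : ∀ w, p w * (1 - s w * t w) = 0 := by
          have hnn : ∀ w ∈ Finset.univ, 0 ≤ p w * (1 - s w * t w) := by
            intro w _
            refine mul_nonneg (hp0 w) ?_
            have u1 := mul_nonneg (sub_nonneg.2 (hs w).2) (show 0 ≤ s w + 1 by linarith [(hs w).1])
            have u2 := mul_nonneg (sub_nonneg.2 (ht w).2) (show 0 ≤ t w + 1 by linarith [(ht w).1])
            have u3 := sq_nonneg (s w - t w)
            linarith
          have hsum : ∑ w, p w * (1 - s w * t w) = 0 := by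
            simp only [mul_sub, mul_one, Finset.sum_sub_distrib, hp1, hcorr, ← h]; norm_num
          exact fun w => (Finset.sum_eq_zero_iff_of_nonneg hnn).1 hsum w (Finset.mem_univ _)
        refine le_of_eq_of_le (Finset.sum_eq_zero fun w _ => ?_) (by rw [← h]; simp)
        rcases mul_eq_zero.1 (hz w) with h1 | h1
        · rw [h1, zero_mul]
        · have u1 := mul_nonneg (sub_nonneg.2 (hs w).2) (by linarith [(hs w).1] : 0 ≤ s w + 1)
          have u2 := mul_nonneg (sub_nonneg.2 (ht w).2) (by linarith [(ht w).1] : 0 ≤ t w + 1)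
          have u3 := sq_nonneg (s w - t w)
          have v1 : (1 - s w) * (s w + 1) = 0 := by nlinarith
          have v2 : (1 - t w) * (t w + 1) = 0 := by nlinarith
          have ent : ∀ x : ℝ, (1 - x) * (x + 1) = 0 → Real.binEntropy ((1 + x) / 2) = 0 := by
            intro x hx
            rw [Real.binEntropy_eq_zero]
            rcases mul_eq_zero.1 hx with h | h
            · right; linarith
            · left; linarith
          rw [ent _ v1, ent _ v2]; ring
      · obtain ⟨l, hl0, hl⟩ := tangent (s0 := 1 - 2 * a) (by linarith) (by linarith)
        have hba : Real.binEntropy ((1 + (1 - 2 * a)) / 2) = Real.binEntropy a := by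
          rw [← Real.binEntropy_one_sub]; congr 1; ring
        rw [hba] at hl
        have hterm : ∀ w, p w * (Real.binEntropy ((1 + s w) / 2) +
            Real.binEntropy ((1 + t w) / 2)) ≤ p w * (2 * Real.binEntropy a +
              2 * l * (1 - 2 * a) ^ 2) - 2 * l * (p w * (s w * t w)) := by
          intro w
          have h1 := hl (s w) (hs w).1 (hs w).2
          have h2 := hl (t w) (ht w).1 (ht w).2
          have h3 : 0 ≤ l * (s w - t w) ^ 2 := mul_nonneg hl0 (sq_nonneg _)
          have h4 : Real.binEntropy ((1 + s w) / 2) + Real.binEntropy ((1 + t w) / 2) ≤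
              2 * Real.binEntropy a + 2 * l * (1 - 2 * a) ^ 2 - 2 * l * (s w * t w) := by
            nlinarith
          have := mul_le_mul_of_nonneg_left h4 (hp0 w)
          linarith
        refine (Finset.sum_le_sum fun w _ => hterm w).trans (le_of_eq ?_)
        rw [Finset.sum_sub_distrib, ← Finset.sum_mul, ← Finset.mul_sum, hp1, hcorr]
        ring
    have hEsum : ∑ w, (-(∑ x, ∑ y, dsbs ρ (x, y) * W (x, y) w *
        Real.log (dsbs ρ (x, y) * W (x, y) w)) + p w * Real.log (p w)) ≤
        2 * Real.binEntropy a := by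
      simp only [hE']; exact hmain
    rw [Finset.sum_add_distrib, Finset.sum_neg_distrib] at hEsum
    unfold MI
    simp only [H2_eq, hXY, dsbs_log]
    have k1 : ∀ w, ∑ xy : Bool × Bool, dsbs ρ xy * W xy w = p w := fun w =>
      Fintype.sum_prod_type _
    have k2 : ∑ t : (Bool × Bool) × Fin 4, dsbs ρ t.1 * W t.1 t.2 *
        Real.log (dsbs ρ t.1 * W t.1 t.2) = ∑ w, ∑ x, ∑ y, dsbs ρ (x, y) * W (x, y) w *
        Real.log (dsbs ρ (x, y) * W (x, y) w) := by
      rw [Fintype.sum_prod_type_right]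
      exact Finset.sum_congr rfl fun w _ => Fintype.sum_prod_type _
    simp only [k1]
    rw [k2, ← sub_nonneg]
    set S := ∑ w, ∑ x, ∑ y, dsbs ρ (x, y) * W (x, y) w *
        Real.log (dsbs ρ (x, y) * W (x, y) w)
    set T := ∑ w, p w * Real.log (p w)
    have : -(-Real.binEntropy ρ - Real.log 2) / Real.log 2 + -T / Real.log 2 - -S / Real.log 2 -
        (1 + Real.binEntropy ρ / Real.log 2 - 2 * Real.binEntropy a / Real.log 2) =
        (2 * Real.binEntropy a - (-S + T)) / Real.log 2 := by
      field_simp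
      ring
    rw [this]
    exact div_nonneg (by linarith) hl2.le

lemma cr_zero : CRAchievable (dsbs 0) (dHam (α := Bool)) (dHam (α := Bool)) 0 0 0 := by
  intro ε hε
  have hz : ∀ xy : (Fin 1 → Bool) × (Fin 1 → Bool), xy.1 ≠ xy.2 → iid (dsbs 0) 1 xy = 0 := by
    rintro ⟨x, y⟩ h
    have : x 0 ≠ y 0 := fun h' => h (by funext i; rw [Subsingleton.elim i 0]; exact h')
    simp [iid, dsbs, this]
  refine ⟨1, 1, fun _ => 0, fun t => t.2, fun t => t.2, fun t => t.2, fun t => t.2, one_pos,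
    ?_, ?_, ?_, ?_, ?_⟩
  · simp [hε.le]
  · refine le_of_eq_of_le (Finset.sum_eq_zero fun xy _ => ?_) (by linarith)
    by_cases h : xy.1 = xy.2
    · simp [h, dHam]
    · rw [hz xy h, zero_mul]
  · refine le_of_eq_of_le (Finset.sum_eq_zero fun xy _ => ?_) (by linarith)
    by_cases h : xy.1 = xy.2
    · simp [h, dHam]
    · rw [hz xy h, zero_mul]
  · refine le_of_eq_of_le (Finset.sum_eq_zero fun xy _ => ?_) hε.le
    split_ifs with h
    · rfl
    · exact hz xy h
  · refine le_of_eq_of_le (Finset.sum_eq_zero fun xy _ => ?_) hε.le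
    split_ifs with h
    · rfl
    · exact hz xy (fun h' => h h'.symm)

lemma CRRD_val {a : ℝ} (ha0 : 0 ≤ a) (ha1 : a ≤ 1 / 2) :
    CRRD (dsbs (2 * a * (1 - a))) (dHam (α := Bool)) (dHam (α := Bool)) a a =
      (Real.binEntropy (2 * a * (1 - a)) - Real.binEntropy a) / Real.log 2 := by
  have hl2 := log2_pos
  unfold CRRD
  rcases ha0.eq_or_lt with h | h
  · subst h
    refine IsLeast.csInf_eq ⟨?_, ?_⟩
    · simpa using cr_zero
    · rintro r ⟨hr, _⟩
      simpa using hr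
  · have hr : 0 ≤ Real.binEntropy (2 * a * (1 - a)) - Real.binEntropy a := by
      rw [sub_nonneg]
      refine Real.binEntropy_strictMonoOn.monotoneOn ⟨ha0, by linarith⟩ ⟨by nlinarith, ?_⟩
        (by nlinarith)
      rw [inv_eq_one_div]
      nlinarith [sq_nonneg (2 * a - 1)]
    have hρ0 : 0 < 2 * a * (1 - a) := mul_pos (by linarith) (by linarith)
    have hρ1 : 2 * a * (1 - a) < 1 := by have := den_pos a; linarith
    exact IsLeast.csInf_eq ⟨⟨div_nonneg hr hl2.le, achiev h ha1 hr⟩,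
      fun r hr => converse hρ0 hρ1 h ha1 hr.2⟩

end TWR

open TWR in
/-- Theorem 3, part (ii): for the DSBS with Hamming
distortions, at `d* = 1/2 − (1/2)√(1−2ρ)`,
`R_CR(d*,d*) = K(X;Y) − R_X(d*) = K(X;Y) − R_Y(d*)`. -/
theorem dsbs_cr_at_threshold
    (ρ : ℝ) (hρ : ρ ∈ Set.Icc (0 : ℝ) (1 / 2)) :
    CRRD (dsbs ρ) (dHam (α := Bool)) (dHam (α := Bool))
        (1 / 2 - Real.sqrt (1 - 2 * ρ) / 2) (1 / 2 - Real.sqrt (1 - 2 * ρ) / 2) =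
      wynerK (dsbs ρ) -
        margRD (margX (dsbs ρ)) (dHam (α := Bool)) (1 / 2 - Real.sqrt (1 - 2 * ρ) / 2) ∧
    CRRD (dsbs ρ) (dHam (α := Bool)) (dHam (α := Bool))
        (1 / 2 - Real.sqrt (1 - 2 * ρ) / 2) (1 / 2 - Real.sqrt (1 - 2 * ρ) / 2) =
      wynerK (dsbs ρ) -
        margRD (margY (dsbs ρ)) (dHam (α := Bool)) (1 / 2 - Real.sqrt (1 - 2 * ρ) / 2) := by
  obtain ⟨h0, h1⟩ := hρ
  have hs0 : 0 ≤ Real.sqrt (1 - 2 * ρ) := Real.sqrt_nonneg _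
  have hs1 : Real.sqrt (1 - 2 * ρ) ≤ 1 := by
    rw [Real.sqrt_le_left (by norm_num)]; linarith
  have hsq : Real.sqrt (1 - 2 * ρ) ^ 2 = 1 - 2 * ρ := Real.sq_sqrt (by linarith)
  generalize hs : Real.sqrt (1 - 2 * ρ) = s at *
  obtain ⟨a, ha⟩ : ∃ a, a = 1 / 2 - s / 2 := ⟨_, rfl⟩
  have ha0 : 0 ≤ a := by linarith
  have ha1 : a ≤ 1 / 2 := by linarith
  have hρa : ρ = 2 * a * (1 - a) := by rw [ha]; linarith
  rw [← ha, margX_dsbs, margY_dsbs, margRD_val ha0 ha1, hρa, wynerK_val ha0 ha1,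
    CRRD_val ha0 ha1]
  constructor <;> ring
end
end
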